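/- arXiv:1906.04019 — 5 statements merged into one kernel-verified Lean document; each statement's English description precedes it below -/
import Mathlib

section
/- Suppose the connection components B_μ are real-analytic on ℝ^d. Then for every y ∈ ℝ^d there exists ε > 0 such that for all x with |x−y| < ε and all μ ∈ {1,…,d}, the series f_μ(x−y, y) = Σ_{k≥1} ((x−y)^{μ_1}⋯(x−y)^{μ_k}/(k+1)!) ∇_{μ_1}⋯∇_{μ_{k−1}} F_{μ_k μ}(y) converges absolutely and ∂_{y^μ} Φ(x,y) − Φ(x,y) B_μ(y) = Φ(x,y) · f_μ(x−y, y). -/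
/-!
Write `θ = B_μ dx^μ` for the connection one-form, `F` for its curvature, `u = x - y`, and `P(s)` for
the parallel transport from `y` to `y + s u`. Differentiating the transport equation in `y` and
solving the linearized equation by variation of parameters gives (`deriv_formula`)
`∂_v Φ(x, y) = Φ(x, y) (θ_y(v) + ∫₀¹ (1 - s) P(s)⁻¹ F(u, v) P(s) ds)`,
with `F` evaluated at `y + s u`.

Conjugation by `P` turns the covariant derivative along the segment into `d/ds`
(`hasDerivWithinAt_conj`), so integrating by parts `n` times produces the first `n` terms
`(u · ∇)^k F(u, v)(y) / (k + 2)!`, `k < n`, and a remainder containing the `n`-th covariant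
derivative of `F` (`taylor_bound`). Analyticity provides Cauchy estimates uniform near `y`
(`analytic_bound`), and the method of majorants turns these into
`‖(u · ∇)^n F(u, v)‖ ≤ C n! K^n` along the segment, with `K = O(‖u‖)` (`lineCov_bound`). For small
`u` this gives both the absolute convergence of the series and the vanishing of the remainder
(`series_formula`).

The analysis is carried out in a Banach algebra. The matrices are identified with the operators on
Euclidean space, and expanding `u · ∇` in coordinates recovers the stated series (`map_fterm`).
-/

/- STATEMENT 8: for real-analytic connection components, near any point `y`
the series `f_μ(x−y,y) = Σ_{k≥1} ((x−y)^{μ_1}⋯(x−y)^{μ_k}/(k+1)!)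
∇_{μ_1}⋯∇_{μ_{k−1}} F_{μ_k μ}(y)` converges absolutely (the `k`-th term is indexed
below by `j = k−1`) and `∂_{y^μ} Φ(x,y) − Φ(x,y) B_μ(y) = Φ(x,y)·f_μ(x−y,y)`. -/

attribute [local instance] Matrix.normedAddCommGroup Matrix.normedSpace

/-- Partial derivative in the `μ`-th coordinate direction. -/
noncomputable def pd {d m : ℕ} (μ : Fin d)
    (g : EuclideanSpace ℝ (Fin d) → Matrix (Fin m) (Fin m) ℂ) :
    EuclideanSpace ℝ (Fin d) → Matrix (Fin m) (Fin m) ℂ :=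
  fun x => fderiv ℝ g x (EuclideanSpace.single μ 1)

/-- The field strength `F_{μν} = ∂_μ B_ν − ∂_ν B_μ + [B_μ, B_ν]`. -/
noncomputable def Fstr {d m : ℕ}
    (B : Fin d → EuclideanSpace ℝ (Fin d) → Matrix (Fin m) (Fin m) ℂ)
    (μ ν : Fin d) : EuclideanSpace ℝ (Fin d) → Matrix (Fin m) (Fin m) ℂ :=
  fun x => pd μ (B ν) x - pd ν (B μ) x + (B μ x * B ν x - B ν x * B μ x)

/-- The adjoint covariant derivative `∇_μ g = ∂_μ g + [B_μ, g]`. -/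
noncomputable def nab {d m : ℕ}
    (B : Fin d → EuclideanSpace ℝ (Fin d) → Matrix (Fin m) (Fin m) ℂ)
    (μ : Fin d) (g : EuclideanSpace ℝ (Fin d) → Matrix (Fin m) (Fin m) ℂ) :
    EuclideanSpace ℝ (Fin d) → Matrix (Fin m) (Fin m) ℂ :=
  fun x => pd μ g x + (B μ x * g x - g x * B μ x)

/-- Iterated adjoint covariant derivative; the head of the list acts outermost. -/
noncomputable def nabL {d m : ℕ}
    (B : Fin d → EuclideanSpace ℝ (Fin d) → Matrix (Fin m) (Fin m) ℂ) :
    List (Fin d) → (EuclideanSpace ℝ (Fin d) → Matrix (Fin m) (Fin m) ℂ) →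
      EuclideanSpace ℝ (Fin d) → Matrix (Fin m) (Fin m) ℂ
  | [], g => g
  | μ :: l, g => nab B μ (nabL B l g)

/-- The `k`-th term (`k = j+1 ≥ 1`) of the series defining `f_μ(u, y)`,
namely `1/(k+1)! · u^{μ_1}⋯u^{μ_k} ∇_{μ_1}⋯∇_{μ_{k−1}} F_{μ_k μ}(y)`. -/
noncomputable def fterm {d m : ℕ}
    (B : Fin d → EuclideanSpace ℝ (Fin d) → Matrix (Fin m) (Fin m) ℂ)
    (y u : EuclideanSpace ℝ (Fin d)) (μ : Fin d) (j : ℕ) :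
    Matrix (Fin m) (Fin m) ℂ :=
  ((1 : ℝ) / (Nat.factorial (j + 2) : ℝ)) •
    ∑ ν : Fin (j + 1) → Fin d,
      (∏ i, u (ν i)) •
        nabL B (List.ofFn fun i : Fin j => ν i.castSucc)
          (Fstr B (ν (Fin.last j)) μ) y

section

open scoped Nat ContDiff NNReal ENNReal
open Finset

/-! ### Majorants for iterated covariant derivatives along a line -/

section
variable {𝔸 : Type*} [NormedRing 𝔸] [NormedAlgebra ℝ 𝔸]

/-- The adjoint covariant derivative `g' + [b, g]` of an algebra-valued function `g` of one real
variable, for the connection coefficient `b`. -/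
noncomputable def lineCov (b g : ℝ → 𝔸) : ℝ → 𝔸 := fun s => deriv g s + (b s * g s - g s * b s)

lemma contDiff_lineCov {b g : ℝ → 𝔸} (hb : ContDiff ℝ ∞ b) (hg : ContDiff ℝ ∞ g) :
    ContDiff ℝ ∞ (lineCov b g) := by
  have h1 : ContDiff ℝ ∞ (deriv g) := (contDiff_infty_iff_deriv.1 hg).2
  unfold lineCov
  fun_prop

lemma contDiff_iterate_lineCov {b g : ℝ → 𝔸} (hb : ContDiff ℝ ∞ b) (hg : ContDiff ℝ ∞ g) (k : ℕ) :
    ContDiff ℝ ∞ ((lineCov b)^[k] g) := by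
  induction k with
  | zero => simpa
  | succ k ih => rw [Function.iterate_succ_apply']; exact contDiff_lineCov hb ih

lemma sum_choose_diag (n k : ℕ) :
    ∑ i ∈ range (n + 1), ((n - i + k).choose k : ℝ) = ((n + k + 1).choose (k + 1) : ℝ) := by
  have h : ∀ n : ℕ, ∑ i ∈ range (n + 1), (i + k).choose k = (n + k + 1).choose (k + 1) := by
    intro n
    induction n with
    | zero => simp
    | succ n ih =>
      rw [sum_range_succ, ih, show n + 1 + k + 1 = (n + k + 1) + 1 by ring,
        Nat.choose_succ_succ' (n + k + 1) k, show n + 1 + k = n + k + 1 by ring]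
      ring
  rw [← h n, Nat.cast_sum, ← Finset.sum_range_reflect]
  refine sum_congr rfl fun i hi => ?_
  have : i ≤ n := by simpa [Nat.lt_succ_iff] using hi
  congr 3
  omega

/-- Majorant for the commutator with `b`. The bound on the derivatives of `g` says that `g` is
majorized by `C / (1 - M t) ^ (k + 1)` and the bound on `b` that `b` is majorized by
`β / (1 - M t)`, so the commutator is majorized by `2 β C / (1 - M t) ^ (k + 2)`. -/
lemma mul_bound {b g : ℝ → 𝔸} (hb : ContDiff ℝ ∞ b) (hg : ContDiff ℝ ∞ g) {s β M C : ℝ} {k : ℕ}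
    (hβ : 0 ≤ β) (hM : 0 ≤ M)
    (hbs : ∀ n, ‖iteratedDeriv n b s‖ ≤ n ! * β * M ^ n)
    (hgs : ∀ n, ‖iteratedDeriv n g s‖ ≤ C * (n ! * M ^ n * (n + k).choose k)) (n : ℕ) :
    ‖iteratedDeriv n (b * g - g * b) s‖ ≤
      2 * β * C * (n ! * M ^ n * (n + k + 1).choose (k + 1)) := by
  have hb' : ContDiff ℝ n b := hb.of_le (by exact_mod_cast le_top)
  have hg' : ContDiff ℝ n g := hg.of_le (by exact_mod_cast le_top)
  have key : ∀ i ∈ range (n + 1), (n.choose i : ℝ) *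
      (‖iteratedDeriv i b s‖ * ‖iteratedDeriv (n - i) g s‖) ≤
      β * C * (n ! * M ^ n) * ((n - i + k).choose k : ℝ) := by
    intro i hi
    have hin : i ≤ n := by simpa [Nat.lt_succ_iff] using hi
    calc _ ≤ (n.choose i : ℝ) * ((i ! * β * M ^ i) *
          (C * ((n - i)! * M ^ (n - i) * (n - i + k).choose k))) := by
          gcongr
          · exact hbs i
          · exact hgs _
      _ = β * C * ((n.choose i * i ! * (n - i)! : ℕ) * (M ^ i * M ^ (n - i))) *
          ((n - i + k).choose k : ℝ) := by push_cast; ring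
      _ = _ := by rw [Nat.choose_mul_factorial_mul_factorial hin, ← pow_add, Nat.add_sub_cancel' hin]
  have h1 : ‖iteratedDeriv n (b * g) s‖ ≤ β * C * (n ! * M ^ n * (n + k + 1).choose (k + 1)) := by
    rw [iteratedDeriv_mul hb'.contDiffAt hg'.contDiffAt]
    refine (norm_sum_le _ _).trans ?_
    calc _ ≤ ∑ i ∈ range (n + 1), β * C * (n ! * M ^ n) * ((n - i + k).choose k : ℝ) := by
          refine sum_le_sum fun i hi => le_trans ?_ (key i hi)
          rw [mul_assoc, ← nsmul_eq_mul]
          refine (norm_nsmul_le).trans ?_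
          gcongr
          exact norm_mul_le _ _
      _ = _ := by rw [← mul_sum, sum_choose_diag]; ring
  have h2 : ‖iteratedDeriv n (g * b) s‖ ≤ β * C * (n ! * M ^ n * (n + k + 1).choose (k + 1)) := by
    rw [iteratedDeriv_mul hg'.contDiffAt hb'.contDiffAt, ← Finset.sum_range_reflect]
    refine (norm_sum_le _ _).trans ?_
    calc _ ≤ ∑ i ∈ range (n + 1), β * C * (n ! * M ^ n) * ((n - i + k).choose k : ℝ) := by
          refine sum_le_sum fun i hi => le_trans ?_ (key i hi)
          have hin : i ≤ n := by simpa [Nat.lt_succ_iff] using hi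
          rw [show n + 1 - 1 - i = n - i by omega, Nat.sub_sub_self hin, Nat.choose_symm hin,
            mul_assoc, ← nsmul_eq_mul]
          refine (norm_nsmul_le).trans ?_
          rw [mul_comm ‖iteratedDeriv i b s‖]
          gcongr
          exact norm_mul_le _ _
      _ = _ := by rw [← mul_sum, sum_choose_diag]; ring
  rw [iteratedDeriv_sub (f := b * g) (g := g * b) (hb'.mul hg').contDiffAt
    (hg'.mul hb').contDiffAt]
  refine (norm_sub_le _ _).trans ?_
  linarith

/-- If `f` and `b` are majorized by `C / (1 - M t)` and `β / (1 - M t)`, the `k`-fold covariant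
derivative of `f` is majorized by `C * k! * (M + 2 * β) ^ k / (1 - M t) ^ (k + 1)`: both the
derivative and the commutator raise the order of the pole by one. The factor `k!` is what the
`1 / (k + 2)!` of the series compensates. -/
lemma lineCov_bound {b f : ℝ → 𝔸} (hb : ContDiff ℝ ∞ b) (hf : ContDiff ℝ ∞ f) {s β M C : ℝ}
    (hβ : 0 ≤ β) (hM : 0 ≤ M) (hC : 0 ≤ C)
    (hbs : ∀ n, ‖iteratedDeriv n b s‖ ≤ n ! * β * M ^ n)
    (hfs : ∀ n, ‖iteratedDeriv n f s‖ ≤ n ! * C * M ^ n) (k : ℕ) : ∀ n,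
    ‖iteratedDeriv n ((lineCov b)^[k] f) s‖ ≤
      (C * k ! * (M + 2 * β) ^ k) * (n ! * M ^ n * (n + k).choose k) := by
  induction k with
  | zero => intro n; refine (hfs n).trans (le_of_eq ?_); simp; ring
  | succ k ih =>
    intro n
    set g := (lineCov b)^[k] f with hg
    have hgs : ContDiff ℝ ∞ g := contDiff_iterate_lineCov hb hf k
    have hg1 : ContDiff ℝ n (deriv g) :=
      ((contDiff_infty_iff_deriv.1 hgs).2).of_le (by exact_mod_cast le_top)
    have hc : ContDiff ℝ n (b * g - g * b) :=
      ((hb.mul hgs).sub (hgs.mul hb)).of_le (by exact_mod_cast le_top)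
    rw [Function.iterate_succ_apply', ← hg,
      show lineCov b g = deriv g + (b * g - g * b) from rfl,
      iteratedDeriv_add hg1.contDiffAt hc.contDiffAt, ← iteratedDeriv_succ']
    refine (norm_add_le _ _).trans ?_
    refine (add_le_add (ih (n + 1)) (mul_bound hb hgs hβ hM hbs ih n)).trans ?_
    have e : ((n + 1 : ℕ) : ℝ) * ((n + 1 + k).choose k : ℝ) =
        ((k + 1 : ℕ) : ℝ) * ((n + k + 1).choose (k + 1) : ℝ) := by
      have := Nat.choose_succ_right_eq (n + k + 1) k
      rw [show n + k + 1 - k = n + 1 by omega] at this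
      rw [show n + 1 + k = n + k + 1 by ring]
      exact_mod_cast (by linarith)
    set X : ℝ := ((n + k + 1).choose (k + 1) : ℝ)
    have hX : 0 ≤ X := Nat.cast_nonneg _
    calc _ = C * k ! * (M + 2 * β) ^ k * (n ! * M ^ n) *
          (M * (((n + 1 : ℕ) : ℝ) * ((n + 1 + k).choose k : ℝ)) + 2 * β * X) := by
          rw [Nat.factorial_succ]; push_cast; ring
      _ ≤ C * k ! * (M + 2 * β) ^ k * (n ! * M ^ n) *
          (M * (((k + 1 : ℕ) : ℝ) * X) + 2 * β * (((k + 1 : ℕ) : ℝ) * X)) := by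
          rw [e]
          gcongr
          have : (1 : ℝ) ≤ ((k + 1 : ℕ) : ℝ) := by exact_mod_cast Nat.le_add_left 1 k
          nlinarith
      _ = _ := by
          rw [Nat.factorial_succ k, show n + (k + 1) = n + k + 1 by ring]; push_cast; ring
end

section
variable {E G H : Type*} [NormedAddCommGroup E] [NormedSpace ℝ E] [NormedAddCommGroup G]
  [NormedSpace ℝ G] [NormedAddCommGroup H] [NormedSpace ℝ H]

/-! ### Cauchy estimates for analytic functions, and restriction to lines -/

/-- Cauchy estimates for an analytic function, with constants uniform in the base point near `y`
and for all orders and directions simultaneously. -/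
lemma analytic_bound [CompleteSpace G] {g : E → G} {y : E} (hg : AnalyticAt ℝ g y) :
    ∃ r > (0 : ℝ), ∃ C ≥ (0 : ℝ), ∃ M > (0 : ℝ), ∀ z, ‖z - y‖ ≤ r → ∀ n (u : E),
      ‖iteratedFDeriv ℝ n g z (fun _ => u)‖ ≤ n ! * C * (M * ‖u‖) ^ n := by
  obtain ⟨p, R, hp⟩ := hg
  obtain ⟨R', hR'0, hR'⟩ := ENNReal.lt_iff_exists_nnreal_btwn.1 hp.r_pos
  -- `2 * r` lies inside the disc of convergence, so one may recentre the series at distance `r`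
  -- from `y` and still evaluate it at distance `r`.
  set r : ℝ≥0 := R' / 3 with hr
  have hR0 : 0 < R' := by exact_mod_cast hR'0
  have hr0 : 0 < r := by positivity
  have hrR : ((r : ℝ≥0∞) + r) < R := by
    refine lt_of_le_of_lt ?_ hR'
    rw [← ENNReal.coe_add]
    norm_cast
    rw [← NNReal.coe_le_coe]
    have : (0 : ℝ) < R' := hR0
    push_cast [hr]
    linarith
  have hrp : ((r : ℝ≥0∞) + r) < p.radius := hrR.trans_le hp.r_le
  have hsum := p.changeOriginSeries_summable_aux₁ hrp
  set T := ∑' s : Σ k l : ℕ, { s : Finset (Fin (k + l)) // s.card = l },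
      ‖p (s.1 + s.2.1)‖₊ * r ^ s.2.1 * r ^ s.1 with hT
  refine ⟨r, hr0, T, T.2, (r : ℝ)⁻¹, by positivity, fun z hz n u => ?_⟩
  have hz' : ‖z - y‖₊ ≤ r := hz
  have hzr : (‖z - y‖₊ : ℝ≥0∞) < R :=
    lt_of_le_of_lt (by exact_mod_cast hz') (lt_of_le_of_lt le_self_add hrR)
  have hco := hp.changeOrigin hzr
  rw [add_sub_cancel] at hco
  rw [← hco.factorial_smul]
  -- The recentred coefficient of order `n` is one row of the absolutely convergent double sum `T`.
  have hcn : ‖p.changeOrigin (z - y) n‖₊ * r ^ n ≤ T := by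
    have h1 := p.nnnorm_changeOrigin_le n (hzr.trans_le hp.r_le)
    have hs2 := p.changeOriginSeries_summable_aux₂ (r := r) (lt_of_le_of_lt le_self_add hrp) n
    calc _ ≤ (∑' s : Σ l : ℕ, { s : Finset (Fin (n + l)) // s.card = l },
          ‖p (n + s.1)‖₊ * r ^ s.1) * r ^ n := by
          gcongr
          refine h1.trans ?_
          refine (NNReal.summable_of_le (fun s => ?_) hs2).tsum_le_tsum (fun s => ?_) hs2 <;> gcongr
      _ = ∑' s : Σ l : ℕ, { s : Finset (Fin (n + l)) // s.card = l },
          ‖p (n + s.1)‖₊ * r ^ s.1 * r ^ n := by rw [NNReal.tsum_mul_right]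
      _ ≤ ∑' k, ∑' s : Σ l : ℕ, { s : Finset (Fin (k + l)) // s.card = l },
          ‖p (k + s.1)‖₊ * r ^ s.1 * r ^ k :=
          (NNReal.summable_sigma.1 hsum).2.le_tsum n (fun _ _ => zero_le)
      _ = T := by rw [hT, hsum.tsum_sigma' (NNReal.summable_sigma.1 hsum).1]
  rw [← Nat.cast_smul_eq_nsmul ℝ, norm_smul, mul_assoc]
  simp only [Real.norm_natCast]
  gcongr
  refine (ContinuousMultilinearMap.le_opNorm _ _).trans ?_
  have hcn' : ‖p.changeOrigin (z - y) n‖ * (r : ℝ) ^ n ≤ T := by exact_mod_cast hcn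
  simp only [prod_const, card_univ, Fintype.card_fin]
  rw [mul_pow, ← mul_assoc]
  gcongr
  rw [inv_pow, ← div_eq_mul_inv, le_div_iff₀ (by positivity)]
  exact hcn'

lemma iteratedDeriv_line {g : E → G} (hg : ContDiff ℝ ∞ g) (y u : E) (n : ℕ) (s : ℝ) :
    iteratedDeriv n (fun s : ℝ => g (y + s • u)) s = iteratedFDeriv ℝ n g (y + s • u) fun _ => u := by
  have hg' : ContDiff ℝ ∞ (fun z => g (y + z)) := hg.comp (contDiff_const.add contDiff_id)
  have := (ContinuousLinearMap.toSpanSingleton ℝ u).iteratedFDeriv_comp_right hg' s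
    (i := n) (by exact_mod_cast le_top)
  rw [iteratedDeriv_eq_iteratedFDeriv]
  have e : (fun s : ℝ => g (y + s • u)) =
    (fun z => g (y + z)) ∘ ContinuousLinearMap.toSpanSingleton ℝ u := by
      ext s; simp [ContinuousLinearMap.toSpanSingleton_apply]
  rw [e, this, iteratedFDeriv_comp_add_left]
  simp [ContinuousLinearMap.toSpanSingleton_apply]

lemma line_bound {g : E → G} (hg : ContDiff ℝ ∞ g) {y u : E} {C M : ℝ} {n : ℕ} {s : ℝ}
    (h : ‖iteratedFDeriv ℝ n g (y + s • u) fun _ => u‖ ≤ n ! * C * (M * ‖u‖) ^ n) (L : G →L[ℝ] H) :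
    ‖iteratedDeriv n (fun s : ℝ => L (g (y + s • u))) s‖ ≤ n ! * (‖L‖ * C) * (M * ‖u‖) ^ n := by
  have hg' : ContDiff ℝ n (fun s : ℝ => g (y + s • u)) :=
    (hg.comp (contDiff_const.add (contDiff_id.smul contDiff_const))).of_le (by exact_mod_cast le_top)
  have e : iteratedDeriv n (fun s : ℝ => L (g (y + s • u))) s
      = L (iteratedDeriv n (fun s : ℝ => g (y + s • u)) s) := by
    rw [iteratedDeriv_eq_iteratedFDeriv, iteratedDeriv_eq_iteratedFDeriv]
    have := L.iteratedFDeriv_comp_left (x := s) hg'.contDiffAt (i := n) le_rfl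
    rw [show (fun s : ℝ => L (g (y + s • u))) = L ∘ fun s : ℝ => g (y + s • u) from rfl, this]
    rfl
  rw [e, iteratedDeriv_line hg]
  refine (L.le_opNorm _).trans ?_
  calc _ ≤ ‖L‖ * (n ! * C * (M * ‖u‖) ^ n) := by gcongr
    _ = _ := by ring
end

/-! ### Linear differential equations and repeated integration by parts -/

section
variable {E 𝔸 : Type*} [NormedAddCommGroup E] [NormedSpace ℝ E]

/-- Grönwall's inequality on `[0, 1]` with zero initial value. -/
lemma gronwall01 [NormedAddCommGroup 𝔸] [NormedSpace ℝ 𝔸] {R R' : ℝ → 𝔸} {K η : ℝ} (hK : 0 < K)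
    (hη : 0 ≤ η) (h0 : R 0 = 0)
    (hR : ∀ s ∈ Set.Icc (0 : ℝ) 1, HasDerivWithinAt R (R' s) (Set.Icc 0 1) s)
    (hb : ∀ s ∈ Set.Icc (0 : ℝ) 1, ‖R' s‖ ≤ K * ‖R s‖ + η) :
    ∀ s ∈ Set.Icc (0 : ℝ) 1, ‖R s‖ ≤ η / K * (Real.exp K - 1) := by
  intro s hs
  have h := norm_le_gronwallBound_of_norm_deriv_right_le (f := R) (f' := R') (δ := 0) (K := K)
    (ε := η) (a := 0) (b := 1) (fun s hs => (hR s hs).continuousWithinAt)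
    (fun s hs => (hR s (Set.Ico_subset_Icc_self hs)).mono_of_mem_nhdsWithin
      (Icc_mem_nhdsGE_of_mem hs)) (by simp [h0])
    (fun s hs => hb s (Set.Ico_subset_Icc_self hs)) s hs
  refine h.trans ?_
  rw [gronwallBound_of_K_ne_0 hK.ne']
  simp only [zero_mul, zero_add, sub_zero]
  gcongr
  nlinarith [hs.2]

variable [NormedRing 𝔸] [NormedAlgebra ℝ 𝔸]

/-- Differentiability of a linear ODE in a parameter: if `p y'` solves `p' = -A y' * p` with an
initial value independent of `y'`, and `W` solves the linearized equation at `y`, then `W 1` is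
the derivative of `y' ↦ p y' 1`. Grönwall's inequality applied to `p y' - p y - W (y' - y)`
shows that this remainder is `o(‖y' - y‖)`. -/
lemma hasFDerivAt_ode_param {A : E → ℝ → 𝔸} {DA : E → ℝ → E →L[ℝ] 𝔸}
    (hA : ∀ y s, HasFDerivAt (fun y' => A y' s) (DA y s) y)
    (hDA : Continuous fun q : E × ℝ => DA q.1 q.2) {y : E} (hAy : Continuous (A y))
    {p : E → ℝ → 𝔸} {c : 𝔸} (hp0 : ∀ y', p y' 0 = c)
    (hp : ∀ y', ∀ s ∈ Set.Icc (0 : ℝ) 1,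
      HasDerivWithinAt (p y') (-(A y' s) * p y' s) (Set.Icc 0 1) s)
    {W : ℝ → E →L[ℝ] 𝔸} (hW0 : W 0 = 0) (hWc : ContinuousOn W (Set.Icc 0 1))
    (hW : ∀ v, ∀ s ∈ Set.Icc (0 : ℝ) 1,
      HasDerivWithinAt (fun s => W s v) (-(A y s) * W s v - DA y s v * p y s) (Set.Icc 0 1) s) :
    HasFDerivAt (fun y' => p y' 1) (W 1) y := by
  have hcpt : IsCompact (Set.Icc (0 : ℝ) 1) := isCompact_Icc
  obtain ⟨N, hN⟩ := hcpt.exists_bound_of_continuousOn hAy.continuousOn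
  obtain ⟨D, hD⟩ := hcpt.exists_bound_of_continuousOn
    (f := fun s => DA y s) (hDA.comp (by fun_prop : Continuous fun s : ℝ => (y, s))).continuousOn
  obtain ⟨W₀, hW₀⟩ := hcpt.exists_bound_of_continuousOn hWc
  obtain ⟨P₀, hP₀⟩ := hcpt.exists_bound_of_continuousOn
    (f := p y) (fun s hs => (hp y s hs).continuousWithinAt)
  have m0 : (0 : ℝ) ∈ Set.Icc (0 : ℝ) 1 := by simp
  have hN0 : 0 ≤ N := (norm_nonneg _).trans (hN 0 m0)
  have hD0 : 0 ≤ D := (norm_nonneg _).trans (hD 0 m0)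
  have hW00 : 0 ≤ W₀ := (norm_nonneg _).trans (hW₀ 0 m0)
  have hP00 : 0 ≤ P₀ := (norm_nonneg _).trans (hP₀ 0 m0)
  set K := N + D + 1 with hK
  have hK0 : 0 < K := by positivity
  -- `η * C * ‖y' - y‖` will bound the inhomogeneity of the equation for the remainder, and
  -- `η * C * X * ‖y' - y‖` the remainder at time `1`.
  set C := P₀ + (D + 1) * W₀ + 1
  have hC0 : 0 < C := by positivity
  set X := (Real.exp K - 1) / K
  have hX0 : 0 ≤ X := div_nonneg (by simp [hK0.le]) hK0.le
  rw [hasFDerivAt_iff_isLittleO, Asymptotics.isLittleO_iff]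
  intro κ hκ
  set η := min 1 (κ / (C * (X + 1)))
  have hη0 : 0 < η := by positivity
  have hη1 : η ≤ 1 := min_le_left _ _
  have hηκ : η * C * X ≤ κ := by
    have : η ≤ κ / (C * (X + 1)) := min_le_right _ _
    rw [le_div_iff₀ (by positivity)] at this
    nlinarith [mul_pos hη0 hC0]
  have hev : ∀ᶠ y' in nhds y, ∀ s ∈ Set.Icc (0 : ℝ) 1, ‖DA y' s - DA y s‖ < η := by
    refine hcpt.eventually_forall_of_forall_eventually fun s _ => ?_
    have hc : Continuous fun q : E × ℝ => ‖DA q.1 q.2 - DA y q.2‖ :=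
      (hDA.sub (hDA.comp (by fun_prop : Continuous fun q : E × ℝ => (y, q.2)))).norm
    exact hc.continuousAt.eventually (gt_mem_nhds (by simpa using hη0))
  obtain ⟨δ, hδ0, hδ⟩ := Metric.eventually_nhds_iff_ball.1 hev
  filter_upwards [Metric.ball_mem_nhds y (lt_min hδ0 hη0)] with y' hy'
  have hyδ : y' ∈ Metric.ball y δ := Metric.ball_subset_ball (min_le_left _ _) hy'
  set v := y' - y with hv
  have hvη : ‖v‖ ≤ η := by
    have := lt_of_lt_of_le hy' (min_le_right δ η)
    rw [dist_eq_norm] at this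
    exact this.le
  have hA1 : ∀ s ∈ Set.Icc (0 : ℝ) 1, ‖A y' s - A y s - DA y s v‖ ≤ η * ‖v‖ := by
    intro s hs
    exact (convex_ball y δ).norm_image_sub_le_of_norm_hasFDerivWithin_le'
      (f := fun y' => A y' s) (fun z _ => (hA z s).hasFDerivWithinAt)
      (fun z hz => (hδ z hz s hs).le) (Metric.mem_ball_self hδ0) hyδ
  have hA2 : ∀ s ∈ Set.Icc (0 : ℝ) 1, ‖A y' s - A y s‖ ≤ (D + 1) * ‖v‖ := by
    intro s hs
    calc _ = ‖(A y' s - A y s - DA y s v) + DA y s v‖ := by rw [sub_add_cancel]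
      _ ≤ η * ‖v‖ + D * ‖v‖ := (norm_add_le _ _).trans (add_le_add (hA1 s hs)
          ((DA y s).le_of_opNorm_le (hD s hs) v))
      _ ≤ _ := by nlinarith [norm_nonneg v]
  have hA3 : ∀ s ∈ Set.Icc (0 : ℝ) 1, ‖A y' s‖ ≤ K := by
    intro s hs
    calc _ = ‖(A y' s - A y s) + A y s‖ := by rw [sub_add_cancel]
      _ ≤ (D + 1) * ‖v‖ + N := (norm_add_le _ _).trans (add_le_add (hA2 s hs) (hN s hs))
      _ ≤ _ := by nlinarith [norm_nonneg v]
  have main := gronwall01 (R := fun s => p y' s - p y s - W s v)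
    (R' := fun s => -(A y' s) * p y' s - -(A y s) * p y s -
      (-(A y s) * W s v - DA y s v * p y s)) (K := K) (η := η * C * ‖v‖) hK0 (by positivity)
    (by simp [hp0, hW0]) (fun s hs => ((hp y' s hs).sub (hp y s hs)).sub (hW v s hs))
    (fun s hs => by
      have e : -(A y' s) * p y' s - -(A y s) * p y s -
          (-(A y s) * W s v - DA y s v * p y s) =
          -(A y' s * (p y' s - p y s - W s v)) - (A y' s - A y s - DA y s v) * p y s
            - (A y' s - A y s) * W s v := by noncomm_ring
      rw [e]
      have hWs : ‖W s v‖ ≤ W₀ * ‖v‖ := (W s).le_of_opNorm_le (hW₀ s hs) v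
      have b1 : ‖A y' s * (p y' s - p y s - W s v)‖ ≤ K * ‖p y' s - p y s - W s v‖ :=
        norm_mul_le_of_le (hA3 s hs) le_rfl
      have b2 : ‖(A y' s - A y s - DA y s v) * p y s‖ ≤ η * ‖v‖ * P₀ :=
        norm_mul_le_of_le (hA1 s hs) (hP₀ s hs)
      have b3 : ‖(A y' s - A y s) * W s v‖ ≤ (D + 1) * ‖v‖ * (W₀ * ‖v‖) :=
        norm_mul_le_of_le (hA2 s hs) hWs
      have b4 : (D + 1) * ‖v‖ * (W₀ * ‖v‖) ≤ (D + 1) * ‖v‖ * (W₀ * η) := by gcongr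
      have b5 : ‖-(A y' s * (p y' s - p y s - W s v)) - (A y' s - A y s - DA y s v) * p y s
            - (A y' s - A y s) * W s v‖ ≤ ‖A y' s * (p y' s - p y s - W s v)‖ +
            ‖(A y' s - A y s - DA y s v) * p y s‖ + ‖(A y' s - A y s) * W s v‖ := by
        refine (norm_sub_le _ _).trans (add_le_add ((norm_sub_le _ _).trans ?_) le_rfl)
        rw [norm_neg]
      have b6 : 0 ≤ η * ‖v‖ := by positivity
      have b7 : η * C * ‖v‖ = η * ‖v‖ * P₀ + (D + 1) * ‖v‖ * (W₀ * η) + η * ‖v‖ := by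
        simp only [C]; ring
      linarith) 1 (by simp)
  refine main.trans ?_
  have : η * C * ‖v‖ / K * (Real.exp K - 1) = η * C * X * ‖v‖ := by simp only [X]; ring
  rw [this]
  gcongr

lemma exists_antideriv {V : Type*} [NormedAddCommGroup V] [NormedSpace ℝ V] [CompleteSpace V]
    {g : ℝ → V} (hg : ContinuousOn g (Set.Icc 0 1)) :
    ∃ J : ℝ → V, J 0 = 0 ∧
      ∀ s ∈ Set.Icc (0 : ℝ) 1, HasDerivWithinAt J (g s) (Set.Icc 0 1) s := by
  have hc : Continuous (Set.IccExtend zero_le_one ((Set.Icc (0 : ℝ) 1).domRestrict g)) :=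
    (continuousOn_iff_continuous_domRestrict.1 hg).Icc_extend'
  refine ⟨fun s => ∫ t in (0 : ℝ)..s, Set.IccExtend zero_le_one ((Set.Icc (0 : ℝ) 1).domRestrict g) t,
    by simp, fun s hs => ?_⟩
  have := (hc.integral_hasStrictDerivAt 0 s).hasDerivAt.hasDerivWithinAt (s := Set.Icc 0 1)
  rwa [Set.IccExtend_of_mem _ _ hs] at this

/-- Repeated integration by parts of `∫ (1 - s) G₀(s) ds = J 1`, where each `G (k + 1)` is the
derivative of `G k`: the boundary terms at `0` are `G k 0 / (k + 2)!`, those at `1` vanish, and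
the remainder after `n` steps is `∫ (1 - s) ^ (n + 1) / (n + 1)! * Gₙ(s) ds`. -/
lemma taylor_bound {V : Type*} [NormedAddCommGroup V] [NormedSpace ℝ V] {G : ℕ → ℝ → V} {J : ℝ → V}
    (hG : ∀ k, ∀ s ∈ Set.Icc (0 : ℝ) 1, HasDerivWithinAt (G k) (G (k + 1) s) (Set.Icc 0 1) s)
    (hJ : ∀ s ∈ Set.Icc (0 : ℝ) 1, HasDerivWithinAt J ((1 - s) • G 0 s) (Set.Icc 0 1) s)
    (hJ0 : J 0 = 0) {n : ℕ} {c : ℝ} (hc : ∀ s ∈ Set.Icc (0 : ℝ) 1, ‖G n s‖ ≤ n ! * c) :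
    ‖J 1 - ∑ k ∈ range n, (1 / ((k + 2)! : ℝ)) • G k 0‖ ≤ c := by
  have hd : ∀ n : ℕ, ∀ s ∈ Set.Icc (0 : ℝ) 1, HasDerivWithinAt
      (fun s => J s + ∑ k ∈ range n, ((1 - s) ^ (k + 2) / ((k + 2)! : ℝ)) • G k s)
      (((1 - s) ^ (n + 1) / ((n + 1)! : ℝ)) • G n s) (Set.Icc 0 1) s := by
    intro n s hs
    induction n with
    | zero => simpa using hJ s hs
    | succ n ih =>
      have h1 : HasDerivWithinAt (fun s : ℝ => (1 - s) ^ (n + 2) / ((n + 2)! : ℝ))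
          (-((1 - s) ^ (n + 1) / ((n + 1)! : ℝ))) (Set.Icc 0 1) s := by
        have := ((((hasDerivAt_id s).const_sub 1).pow (n + 2)).div_const
          ((n + 2)! : ℝ)).hasDerivWithinAt (s := Set.Icc 0 1)
        refine this.congr_deriv ?_
        rw [Nat.factorial_succ (n + 1)]
        push_cast
        field_simp
        simp only [id_eq]
        ring
      have := ih.add (h1.smul (hG n s hs))
      simp only [sum_range_succ, ← add_assoc]
      refine this.congr_deriv ?_
      rw [neg_smul]
      abel
  have h := norm_image_sub_le_of_norm_deriv_le_segment_01' (C := c) (hd n) (fun s hs => ?_)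
  · simpa [hJ0] using h
  · have hs' := Set.Ico_subset_Icc_self hs
    have h1 : 0 ≤ 1 - s := by linarith [hs.2]
    rw [norm_smul, Real.norm_of_nonneg (by positivity)]
    have hc0 : 0 ≤ n ! * c := (norm_nonneg _).trans (hc s hs')
    have hc1 : 0 ≤ c := by
      have : (0 : ℝ) < n ! := by positivity
      exact nonneg_of_mul_nonneg_right hc0 this
    calc _ ≤ (1 ^ (n + 1) / ((n ! : ℕ) : ℝ)) * (n ! * c) := by
          gcongr
          · linarith [hs.1]
          · omega
          · exact hc s hs'
      _ = c := by field_simp; simp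
end

/-! ### Curvature, and the derivative of the parallel transport in its starting point -/

section
variable {E 𝔸 : Type*} [NormedAddCommGroup E] [NormedSpace ℝ E] [NormedRing 𝔸] [NormedAlgebra ℝ 𝔸]

/-- The bilinear form `(u, v) ↦ (Dθ · u) v + θ(u) θ(v)`; its antisymmetrization is the
curvature of `θ`. -/
noncomputable def curvAux (θ : E → E →L[ℝ] 𝔸) (z : E) : E →L[ℝ] E →L[ℝ] 𝔸 :=
  fderiv ℝ θ z + (((ContinuousLinearMap.mul ℝ 𝔸).precompR E).precompL E) (θ z) (θ z)

/-- The curvature `dθ + θ ∧ θ` of the connection one-form `θ`, as a continuous bilinear form in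
the two tangent vectors. -/
noncomputable def curv (θ : E → E →L[ℝ] 𝔸) (z : E) : E →L[ℝ] E →L[ℝ] 𝔸 :=
  curvAux θ z - (curvAux θ z).flip

lemma curv_apply (θ : E → E →L[ℝ] 𝔸) (z u v : E) :
    curv θ z u v = fderiv ℝ θ z u v - fderiv ℝ θ z v u + (θ z u * θ z v - θ z v * θ z u) := by
  simp [curv, curvAux]
  abel

lemma analyticAt_bilin_self {F V : Type*} [NormedAddCommGroup F] [NormedSpace ℝ F]
    [NormedAddCommGroup V] [NormedSpace ℝ V] (β : F →L[ℝ] F →L[ℝ] V) {f : E → F} {z : E}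
    (h : AnalyticAt ℝ f z) : AnalyticAt ℝ (fun z => β (f z) (f z)) z :=
  AnalyticAt.comp₂ (h := fun q : F × F => β q.1 q.2) (β.analyticAt_bilinear (f z, f z)) h h

lemma analyticAt_curv [CompleteSpace 𝔸] {θ : E → E →L[ℝ] 𝔸} {z : E} (h : AnalyticAt ℝ θ z) :
    AnalyticAt ℝ (curv θ) z := by
  have h1 : AnalyticAt ℝ (curvAux θ) z := h.fderiv.add (analyticAt_bilin_self _ h)
  have h3 : ContDiff ℝ ω (fun w : E →L[ℝ] E →L[ℝ] 𝔸 => w.flip) :=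
    IsBoundedLinearMap.contDiff ⟨⟨fun _ _ => rfl, fun _ _ => rfl⟩, 1, one_pos, fun w => by
      rw [one_mul, ContinuousLinearMap.opNorm_flip]⟩
  have h2 := (h3.contDiffAt (x := curvAux θ z)).analyticAt
  exact h1.sub (h2.comp (f := curvAux θ) h1)

/-- The adjoint covariant derivative of `g` in the constant direction `u`, for the connection
one-form `θ`. -/
noncomputable def cov (θ : E → E →L[ℝ] 𝔸) (u : E) (g : E → 𝔸) : E → 𝔸 :=
  fun z => fderiv ℝ g z u + (θ z u * g z - g z * θ z u)

lemma contDiff_cov {θ : E → E →L[ℝ] 𝔸} (hθ : ContDiff ℝ ∞ θ) (u : E) {g : E → 𝔸}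
    (hg : ContDiff ℝ ∞ g) : ContDiff ℝ ∞ (cov θ u g) := by
  have h1 : ContDiff ℝ ∞ (fderiv ℝ g) := hg.fderiv_right (by simp)
  unfold cov
  fun_prop

lemma contDiff_iterate_cov {θ : E → E →L[ℝ] 𝔸} (hθ : ContDiff ℝ ∞ θ) (u : E) {g : E → 𝔸}
    (hg : ContDiff ℝ ∞ g) (k : ℕ) : ContDiff ℝ ∞ ((cov θ u)^[k] g) := by
  induction k with
  | zero => simpa
  | succ k ih => rw [Function.iterate_succ_apply']; exact contDiff_cov hθ u ih

lemma hasDerivAt_line (y u : E) (s : ℝ) : HasDerivAt (fun s : ℝ => y + s • u) u s := by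
  simpa using ((hasDerivAt_id s).smul_const u).const_add y

/-- On the line `s ↦ y + s • u`, the iterated covariant derivative in the direction `u` is the
iterated one-variable covariant derivative of the restriction. -/
lemma cov_line {θ : E → E →L[ℝ] 𝔸} (hθ : ContDiff ℝ ∞ θ) (y u : E) {g : E → 𝔸}
    (hg : ContDiff ℝ ∞ g) (k : ℕ) :
    (fun s : ℝ => (cov θ u)^[k] g (y + s • u)) =
      (lineCov fun s : ℝ => θ (y + s • u) u)^[k] fun s : ℝ => g (y + s • u) := by
  induction k with
  | zero => rfl
  | succ k ih =>
    rw [Function.iterate_succ_apply', Function.iterate_succ_apply', ← ih]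
    ext s
    have h := ((contDiff_iterate_cov hθ u hg k).differentiable (by simp)
      (y + s • u)).hasFDerivAt.comp_hasDerivAt s (hasDerivAt_line y u s)
    simp only [lineCov]
    rw [show deriv (fun s : ℝ => (cov θ u)^[k] g (y + s • u)) s = _ from h.deriv]
    rfl

/-- Conjugation by the parallel transport turns the covariant derivative into the ordinary one;
here `p' = -b p` and `q`, the inverse of `p`, satisfies `q' = q b`. -/
lemma hasDerivWithinAt_conj {q p b g : ℝ → 𝔸} {g' : 𝔸} {S : Set ℝ} {s : ℝ}
    (hq : HasDerivWithinAt q (q s * b s) S s) (hp : HasDerivWithinAt p (-(b s) * p s) S s)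
    (hg : HasDerivWithinAt g g' S s) :
    HasDerivWithinAt (fun s => q s * g s * p s) (q s * (g' + (b s * g s - g s * b s)) * p s) S s := by
  refine ((hq.mul hg).mul hp).congr_deriv ?_
  simp only [Pi.mul_apply]
  noncomm_ring

/-- For a small connection the transport stays within distance `1` of the identity, hence is
invertible. -/
lemma isUnit_transport [CompleteSpace 𝔸] {b p : ℝ → 𝔸} (hp0 : p 0 = 1)
    (hp : ∀ s ∈ Set.Icc (0 : ℝ) 1, HasDerivWithinAt p (-(b s) * p s) (Set.Icc 0 1) s)
    (hb : ∀ s ∈ Set.Icc (0 : ℝ) 1, ‖b s‖ ≤ 1 / 2) : ∀ s ∈ Set.Icc (0 : ℝ) 1, IsUnit (p s) := by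
  intro s hs
  have h := gronwall01 (R := fun s => p s - 1) (R' := fun s => -(b s) * p s) (K := 1 / 2)
    (η := 1 / 2) (by norm_num) (by norm_num) (by simp [hp0])
    (fun s hs => (hp s hs).sub_const 1) (fun s hs => by
      have e : -(b s) * p s = -(b s * (p s - 1)) - b s := by noncomm_ring
      rw [e]
      refine (norm_sub_le _ _).trans (add_le_add ?_ (hb s hs))
      rw [norm_neg]
      exact norm_mul_le_of_le (hb s hs) le_rfl) s hs
  have h2 : Real.exp (1 / 2) < 2 := by
    have h3 : Real.exp (1 / 2) * Real.exp (1 / 2) = Real.exp 1 := by rw [← Real.exp_add]; norm_num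
    have := Real.exp_one_lt_d9
    nlinarith [Real.exp_pos (1 / 2)]
  have h4 : ‖1 - p s‖ < 1 := by
    rw [norm_sub_rev]; refine lt_of_le_of_lt h ?_; linarith
  have := isUnit_one_sub_of_norm_lt_one h4
  rwa [sub_sub_cancel] at this

lemma hasDerivWithinAt_inverse [CompleteSpace 𝔸] {b p : ℝ → 𝔸} {S : Set ℝ} {s : ℝ}
    (hp : HasDerivWithinAt p (-(b s) * p s) S s) (hu : IsUnit (p s)) :
    HasDerivWithinAt (fun s => Ring.inverse (p s)) (Ring.inverse (p s) * b s) S s := by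
  obtain ⟨a, ha⟩ := hu
  have h := hasFDerivAt_ringInverse (𝕜 := ℝ) a
  rw [ha] at h
  refine (h.comp_hasDerivWithinAt s hp).congr_deriv ?_
  simp [← ha, mul_assoc]

/-- The derivative of the parallel transport `p y 1` along the segment from `y` to `x`, with respect
to `y`, is `v ↦ p(1) (θ_y(v) + J₁(v))` with `J₁(v) = ∫₀¹ (1 - s) p(s)⁻¹ F(x - y, v) p(s) ds` and
`F` the curvature at `y + s (x - y)`. -/
theorem deriv_formula [CompleteSpace 𝔸] {θ : E → E →L[ℝ] 𝔸} (hθ : ContDiff ℝ ∞ θ)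
    {p : E → ℝ → 𝔸} {x y : E} (hp0 : ∀ y', p y' 0 = 1)
    (hp : ∀ y', ∀ s ∈ Set.Icc (0 : ℝ) 1,
      HasDerivWithinAt (p y') (-(θ (y' + s • (x - y')) (x - y')) * p y' s) (Set.Icc 0 1) s)
    (hF : Continuous (curv θ))
    (hu : ∀ s ∈ Set.Icc (0 : ℝ) 1, IsUnit (p y s)) :
    ∃ J : ℝ → E →L[ℝ] 𝔸, J 0 = 0 ∧
      (∀ v, ∀ s ∈ Set.Icc (0 : ℝ) 1, HasDerivWithinAt (fun s => J s v) ((1 - s) •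
        (Ring.inverse (p y s) * curv θ (y + s • (x - y)) (x - y) v * p y s)) (Set.Icc 0 1) s) ∧
      HasFDerivAt (fun y' => p y' 1) (ContinuousLinearMap.mul ℝ 𝔸 (p y 1) ∘L (θ y + J 1)) y := by
  set u := x - y with hudef
  have hpy : ∀ s ∈ Set.Icc (0 : ℝ) 1,
      HasDerivWithinAt (p y) (-(θ (y + s • u) u) * p y s) (Set.Icc 0 1) s := hp y
  have hpc : ContinuousOn (p y) (Set.Icc 0 1) := fun s hs => (hpy s hs).continuousWithinAt
  have hqc : ContinuousOn (fun s => Ring.inverse (p y s)) (Set.Icc 0 1) := fun s hs =>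
    (hasDerivWithinAt_inverse (b := fun s => θ (y + s • u) u) (hpy s hs)
      (hu s hs)).continuousWithinAt
  have hline : Continuous fun s : ℝ => y + s • u := by fun_prop
  have hFl : Continuous fun s : ℝ => curv θ (y + s • u) u :=
    (hF.comp hline).clm_apply continuous_const
  have hgc : ContinuousOn (fun s : ℝ => (1 - s) •
      ((ContinuousLinearMap.mulLeftRight ℝ 𝔸 (Ring.inverse (p y s)) (p y s)) ∘L
        (curv θ (y + s • u) u))) (Set.Icc 0 1) := by
    refine (by fun_prop : Continuous fun s : ℝ => 1 - s).continuousOn.smul ?_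
    refine ContinuousOn.clm_comp ?_ hFl.continuousOn
    exact ((ContinuousLinearMap.mulLeftRight ℝ 𝔸).continuous.comp_continuousOn hqc).clm_apply hpc
  obtain ⟨J, hJ0, hJ⟩ := exists_antideriv hgc
  have hJv : ∀ v, ∀ s ∈ Set.Icc (0 : ℝ) 1, HasDerivWithinAt (fun s => J s v) ((1 - s) •
        (Ring.inverse (p y s) * curv θ (y + s • u) u v * p y s)) (Set.Icc 0 1) s := by
    intro v s hs
    have := (hJ s hs).clm_apply (hasDerivWithinAt_const s _ v)
    refine this.congr_deriv ?_
    simp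
  refine ⟨J, hJ0, hJv, ?_⟩
  -- The solution of the linearized equation: the point of the moving segment at time `s` is
  -- displaced by `(1 - s) • v`, which accounts for the second summand (it vanishes at `s = 1`).
  set W : ℝ → E →L[ℝ] 𝔸 := fun s =>
    ContinuousLinearMap.mul ℝ 𝔸 (p y s) ∘L (θ y + J s) -
      (1 - s) • ((ContinuousLinearMap.mul ℝ 𝔸).flip (p y s) ∘L θ (y + s • u)) with hWdef
  have hW1 : W 1 = ContinuousLinearMap.mul ℝ 𝔸 (p y 1) ∘L (θ y + J 1) := by simp [hWdef]
  rw [← hW1]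
  have hd : Differentiable ℝ θ := hθ.differentiable (by simp)
  have hfc : Continuous (fderiv ℝ θ) := hθ.continuous_fderiv (by simp)
  refine hasFDerivAt_ode_param (A := fun y' s => θ (y' + s • (x - y')) (x - y'))
    (DA := fun y' s => (1 - s) • (fderiv ℝ θ (y' + s • (x - y'))).flip (x - y') -
      θ (y' + s • (x - y'))) (y := y) (c := 1) ?_ ?_ ?_ hp0 hp ?_ ?_ ?_
  · intro z s
    have h1 : HasFDerivAt (fun y' : E => y' + s • (x - y'))
        (ContinuousLinearMap.id ℝ E + s • -ContinuousLinearMap.id ℝ E) z :=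
      (hasFDerivAt_id z).add (((hasFDerivAt_id z).const_sub x).const_smul s)
    have h2 := (((hd _).hasFDerivAt.comp z h1).clm_apply ((hasFDerivAt_id z).const_sub x))
    refine h2.congr_fderiv ?_
    ext v
    simp [sub_smul, smul_sub]
    abel
  · have h1 : Continuous fun q : E × ℝ => q.1 + q.2 • (x - q.1) := by fun_prop
    have h2 : Continuous fun q : E × ℝ => (fderiv ℝ θ (q.1 + q.2 • (x - q.1))).flip :=
      (ContinuousLinearMap.flipₗᵢ ℝ E E 𝔸).continuous.comp (hfc.comp h1)
    have h3 : Continuous fun q : E × ℝ => θ (q.1 + q.2 • (x - q.1)) := hd.continuous.comp h1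
    exact ((by fun_prop : Continuous fun q : E × ℝ => 1 - q.2).smul
      (h2.clm_apply (by fun_prop))).sub h3
  · exact (hd.continuous.comp hline).clm_apply continuous_const
  · ext v; simp [hWdef, hp0, hJ0]
  · have hJc : ContinuousOn J (Set.Icc 0 1) := fun s hs => (hJ s hs).continuousWithinAt
    refine ContinuousOn.sub (ContinuousOn.clm_comp ?_ (continuousOn_const.add hJc))
      ((by fun_prop : Continuous fun s : ℝ => 1 - s).continuousOn.smul
        (ContinuousOn.clm_comp ?_ (hd.continuous.comp hline).continuousOn))
    · exact (ContinuousLinearMap.mul ℝ 𝔸).continuous.comp_continuousOn hpc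
    · exact (ContinuousLinearMap.mul ℝ 𝔸).flip.continuous.comp_continuousOn hpc
  · intro v s hs
    have e1 : (fun s => W s v) = fun s : ℝ =>
        p y s * (θ y v + J s v) - (1 - s) • (θ (y + s • u) v * p y s) := by
      ext s; simp [hWdef, mul_add]
    have hθs : HasDerivWithinAt (fun s : ℝ => θ (y + s • u) v) (fderiv ℝ θ (y + s • u) u v)
        (Set.Icc 0 1) s := by
      have := (((hd _).hasFDerivAt.comp_hasDerivAt s (hasDerivAt_line y u s)).clm_apply
        (hasDerivAt_const s v)).hasDerivWithinAt (s := Set.Icc 0 1)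
      refine this.congr_deriv ?_
      simp
    have h1s : HasDerivWithinAt (fun s : ℝ => 1 - s) (-1) (Set.Icc 0 1) s :=
      ((hasDerivAt_id s).const_sub 1).hasDerivWithinAt
    have h2 := ((hpy s hs).mul ((hJv v s hs).const_add (θ y v))).sub
      (h1s.smul (hθs.mul (hpy s hs)))
    rw [e1]
    refine h2.congr_deriv ?_
    have hcancel : p y s * (Ring.inverse (p y s) * curv θ (y + s • u) u v * p y s) =
        curv θ (y + s • u) u v * p y s := by
      rw [← mul_assoc, ← mul_assoc, Ring.mul_inverse_cancel _ (hu s hs), one_mul]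
    have e2 : W s v = p y s * (θ y v + J s v) - (1 - s) • (θ (y + s • u) v * p y s) :=
      congrFun e1 s
    rw [e2, mul_smul_comm, hcancel, curv_apply]
    simp only [sub_apply, smul_apply,
      ContinuousLinearMap.flip_apply, ← hudef, Pi.mul_apply]
    simp only [mul_add, add_mul, mul_sub, sub_mul, neg_mul, mul_neg, smul_add, smul_sub, smul_neg,
      sub_smul, one_smul, smul_mul_assoc, mul_smul_comm, neg_smul, mul_assoc]
    abel

end

/-! ### The covariant Taylor series for an algebra-valued one-form -/

section
variable {E 𝔸 : Type*} [NormedAddCommGroup E] [NormedSpace ℝ E] [NormedRing 𝔸]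
  [NormedAlgebra ℝ 𝔸] [CompleteSpace 𝔸]

/-- The one-variable form of the series: `J 1 = ∫ (1 - s) p⁻¹ f p ds` is the sum of the covariant
Taylor coefficients of `f` at `0`, because the `n`-th remainder in `taylor_bound` is
`O((M + 2 * β) ^ n)`. -/
lemma series_aux {b f p : ℝ → 𝔸} {J : ℝ → 𝔸} {β M C : ℝ} (hb : ContDiff ℝ ∞ b)
    (hf : ContDiff ℝ ∞ f) (hβ : 0 ≤ β) (hM : 0 ≤ M) (hC : 0 ≤ C) (hK : M + 2 * β ≤ 1 / 2)
    (hbs : ∀ s ∈ Set.Icc (0 : ℝ) 1, ∀ n, ‖iteratedDeriv n b s‖ ≤ n ! * β * M ^ n)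
    (hfs : ∀ s ∈ Set.Icc (0 : ℝ) 1, ∀ n, ‖iteratedDeriv n f s‖ ≤ n ! * C * M ^ n)
    (hp0 : p 0 = 1)
    (hp : ∀ s ∈ Set.Icc (0 : ℝ) 1, HasDerivWithinAt p (-(b s) * p s) (Set.Icc 0 1) s)
    (hu : ∀ s ∈ Set.Icc (0 : ℝ) 1, IsUnit (p s)) (hJ0 : J 0 = 0)
    (hJ : ∀ s ∈ Set.Icc (0 : ℝ) 1, HasDerivWithinAt J
      ((1 - s) • (Ring.inverse (p s) * f s * p s)) (Set.Icc 0 1) s) :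
    (Summable fun j : ℕ => ‖(1 / ((j + 2)! : ℝ)) • (lineCov b)^[j] f 0‖) ∧
      J 1 = ∑' j : ℕ, (1 / ((j + 2)! : ℝ)) • (lineCov b)^[j] f 0 := by
  set K := M + 2 * β with hKdef
  have hK0 : 0 ≤ K := by positivity
  have hbd : ∀ s ∈ Set.Icc (0 : ℝ) 1, ∀ k, ‖(lineCov b)^[k] f s‖ ≤ C * k ! * K ^ k := by
    intro s hs k
    simpa using lineCov_bound hb hf hβ hM hC (hbs s hs) (hfs s hs) k 0
  have hsum : Summable fun j : ℕ => ‖(1 / ((j + 2)! : ℝ)) • (lineCov b)^[j] f 0‖ := by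
    refine Summable.of_nonneg_of_le (fun _ => norm_nonneg _) (fun j => ?_)
      ((summable_geometric_of_lt_one hK0 (by linarith)).mul_left C)
    rw [norm_smul, Real.norm_of_nonneg (by positivity)]
    have h1 : (j ! : ℝ) ≤ (j + 2)! := by exact_mod_cast Nat.factorial_le (by lia)
    calc _ ≤ 1 / ((j + 2)! : ℝ) * (C * j ! * K ^ j) := by
          gcongr; exact hbd 0 (by simp) j
      _ = (C * K ^ j) * (j ! / (j + 2)!) := by ring
      _ ≤ (C * K ^ j) * 1 := by
          gcongr
          exact div_le_one_of_le₀ h1 (by positivity)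
      _ = _ := mul_one _
  refine ⟨hsum, ?_⟩
  have hq : ∀ s ∈ Set.Icc (0 : ℝ) 1, HasDerivWithinAt (fun s => Ring.inverse (p s))
      (Ring.inverse (p s) * b s) (Set.Icc 0 1) s := fun s hs =>
    hasDerivWithinAt_inverse (hp s hs) (hu s hs)
  obtain ⟨c₁, hc₁⟩ := (isCompact_Icc (a := (0 : ℝ)) (b := 1)).exists_bound_of_continuousOn
    (fun s hs => (hq s hs).continuousWithinAt)
  obtain ⟨c₂, hc₂⟩ := (isCompact_Icc (a := (0 : ℝ)) (b := 1)).exists_bound_of_continuousOn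
    (fun s hs => (hp s hs).continuousWithinAt)
  have hc₁0 : 0 ≤ c₁ := (norm_nonneg _).trans (hc₁ 0 (by simp))
  have hG : ∀ k, ∀ s ∈ Set.Icc (0 : ℝ) 1, HasDerivWithinAt
      (fun s => Ring.inverse (p s) * (lineCov b)^[k] f s * p s)
      (Ring.inverse (p s) * (lineCov b)^[k + 1] f s * p s) (Set.Icc 0 1) s := by
    intro k s hs
    rw [Function.iterate_succ_apply']
    exact hasDerivWithinAt_conj (hq s hs) (hp s hs)
      (((contDiff_iterate_lineCov hb hf k).differentiable (by simp)) s).hasDerivAt.hasDerivWithinAt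
  have hT : ∀ n, ‖J 1 - ∑ k ∈ range n, (1 / ((k + 2)! : ℝ)) • (lineCov b)^[k] f 0‖ ≤
      c₁ * C * c₂ * K ^ n := by
    intro n
    have := taylor_bound (G := fun k s => Ring.inverse (p s) * (lineCov b)^[k] f s * p s) hG hJ hJ0
      (n := n) (c := c₁ * C * c₂ * K ^ n) (fun s hs => ?_)
    · simpa [hp0] using this
    · calc _ ≤ c₁ * (C * n ! * K ^ n) * c₂ :=
          norm_mul_le_of_le (norm_mul_le_of_le (hc₁ s hs) (hbd s hs n)) (hc₂ s hs)
        _ = _ := by ring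
  have hlim : Filter.Tendsto (fun n => c₁ * C * c₂ * K ^ n) Filter.atTop (nhds 0) := by
    simpa using (tendsto_pow_atTop_nhds_zero_of_lt_one hK0 (by linarith)).const_mul (c₁ * C * c₂)
  have h1 : Filter.Tendsto (fun n => ∑ k ∈ range n, (1 / ((k + 2)! : ℝ)) • (lineCov b)^[k] f 0)
      Filter.atTop (nhds (J 1)) := by
    rw [tendsto_iff_norm_sub_tendsto_zero]
    refine squeeze_zero (fun _ => norm_nonneg _) (fun n => ?_) hlim
    rw [norm_sub_rev]
    exact hT n
  exact tendsto_nhds_unique h1 hsum.of_norm.hasSum.tendsto_sum_nat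

/-- The coordinate-free form of the result, for an analytic one-form `θ` with values in a Banach
algebra. -/
theorem series_formula {θ : E → E →L[ℝ] 𝔸} (hθ : ∀ z, AnalyticAt ℝ θ z) (y : E) :
    ∃ ε > (0 : ℝ), ∀ x, ‖x - y‖ < ε → ∀ p : E → ℝ → 𝔸, (∀ y', p y' 0 = 1) →
      (∀ y', ∀ s ∈ Set.Icc (0 : ℝ) 1, HasDerivWithinAt (p y')
        (-(θ (y' + s • (x - y')) (x - y')) * p y' s) (Set.Icc 0 1) s) →
      ∃ L : E →L[ℝ] 𝔸, HasFDerivAt (fun y' => p y' 1) L y ∧ ∀ v,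
        (Summable fun j : ℕ =>
          ‖(1 / ((j + 2)! : ℝ)) • (cov θ (x - y))^[j] (fun z => curv θ z (x - y) v) y‖) ∧
        L v - p y 1 * θ y v = p y 1 * ∑' j : ℕ,
          (1 / ((j + 2)! : ℝ)) • (cov θ (x - y))^[j] (fun z => curv θ z (x - y) v) y := by
  have hθs : ContDiff ℝ ∞ θ := contDiff_iff_contDiffAt.2 fun z => (hθ z).contDiffAt
  have hFs : ContDiff ℝ ∞ (curv θ) :=
    contDiff_iff_contDiffAt.2 fun z => (analyticAt_curv (hθ z)).contDiffAt
  obtain ⟨r₁, hr₁, C₁, hC₁, M₁, hM₁, h₁⟩ := analytic_bound (hθ y)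
  obtain ⟨r₂, hr₂, C₂, hC₂, M₂, hM₂, h₂⟩ := analytic_bound (analyticAt_curv (hθ y))
  set M := max M₁ M₂ with hMdef
  have hM : 0 < M := lt_max_of_lt_left hM₁
  -- On the segment `θ(x - y)` is majorized with constants `‖u‖ * C₁` and `M * ‖u‖`; the last entry
  -- of the minimum makes the ratio `M * ‖u‖ + 2 * (‖u‖ * C₁)` of the geometric bound at most `1 / 2`.
  refine ⟨min (min r₁ r₂) (1 / (2 * (M + 2 * C₁))), by positivity, ?_⟩
  intro x hx p hp0 hp
  set u := x - y with hu
  have hur₁ : ‖u‖ ≤ r₁ := (hx.trans_le ((min_le_left _ _).trans (min_le_left _ _))).le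
  have hur₂ : ‖u‖ ≤ r₂ := (hx.trans_le ((min_le_left _ _).trans (min_le_right _ _))).le
  have huK : M * ‖u‖ + 2 * (‖u‖ * C₁) ≤ 1 / 2 := by
    have := (hx.trans_le (min_le_right _ _)).le
    rw [le_div_iff₀ (by positivity)] at this
    linarith
  have hline : ∀ s ∈ Set.Icc (0 : ℝ) 1, ‖y + s • u - y‖ ≤ ‖u‖ := by
    intro s hs
    rw [add_sub_cancel_left, norm_smul, Real.norm_of_nonneg hs.1]
    exact mul_le_of_le_one_left (norm_nonneg _) hs.2
  have hL : ‖ContinuousLinearMap.apply ℝ 𝔸 u‖ ≤ ‖u‖ :=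
    ContinuousLinearMap.opNorm_le_bound _ (norm_nonneg _) fun T => by
      simpa [mul_comm] using T.le_opNorm u
  have hbs : ∀ s ∈ Set.Icc (0 : ℝ) 1, ∀ n,
      ‖iteratedDeriv n (fun s : ℝ => θ (y + s • u) u) s‖ ≤
        n ! * (‖u‖ * C₁) * (M * ‖u‖) ^ n := by
    intro s hs n
    refine (line_bound hθs (h₁ _ ((hline s hs).trans hur₁) n u)
      (ContinuousLinearMap.apply ℝ 𝔸 u)).trans ?_
    gcongr
    exact le_max_left _ _
  have hfs : ∀ v, ∀ s ∈ Set.Icc (0 : ℝ) 1, ∀ n,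
      ‖iteratedDeriv n (fun s : ℝ => curv θ (y + s • u) u v) s‖ ≤
        n ! * (‖ContinuousLinearMap.apply ℝ 𝔸 v ∘L ContinuousLinearMap.apply ℝ (E →L[ℝ] 𝔸) u‖ *
          C₂) * (M * ‖u‖) ^ n := by
    intro v s hs n
    refine (line_bound hFs (h₂ _ ((hline s hs).trans hur₂) n u)
      (ContinuousLinearMap.apply ℝ 𝔸 v ∘L ContinuousLinearMap.apply ℝ (E →L[ℝ] 𝔸) u)).trans ?_
    gcongr
    exact le_max_right _ _
  have hl : ContDiff ℝ ∞ fun s : ℝ => y + s • u := by fun_prop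
  have hb : ContDiff ℝ ∞ fun s : ℝ => θ (y + s • u) u := (hθs.comp hl).clm_apply contDiff_const
  have hFv : ∀ v, ContDiff ℝ ∞ fun z => curv θ z u v := fun v =>
    (hFs.clm_apply contDiff_const).clm_apply contDiff_const
  have hunit : ∀ s ∈ Set.Icc (0 : ℝ) 1, IsUnit (p y s) :=
    isUnit_transport (b := fun s => θ (y + s • u) u) (hp0 y) (hp y) fun s hs => by
      have := hbs s hs 0
      simp only [iteratedDeriv_zero, Nat.factorial_zero, Nat.cast_one, one_mul, pow_zero,
        mul_one] at this
      have : 0 ≤ M * ‖u‖ := by positivity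
      have : 0 ≤ ‖u‖ * C₁ := by positivity
      linarith
  obtain ⟨J, hJ0, hJ, hD⟩ := deriv_formula hθs hp0 hp hFs.continuous hunit
  refine ⟨_, hD, fun v => ?_⟩
  obtain ⟨hS, hE⟩ := series_aux (J := fun s => J s v) hb ((hFv v).comp hl)
    (by positivity) (by positivity) (by positivity) huK hbs (hfs v) (hp0 y) (hp y) hunit
    (by simp [hJ0]) (hJ v)
  have key : ∀ j : ℕ, (cov θ u)^[j] (fun z => curv θ z u v) y =
      (lineCov fun s : ℝ => θ (y + s • u) u)^[j] ((fun z => curv θ z u v) ∘ fun s : ℝ => y + s • u)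
        0 := by
    intro j
    have := congrFun (cov_line hθs y u (hFv v) j) 0
    simp only [zero_smul, add_zero] at this
    exact this
  simp only [key]
  refine ⟨hS, ?_⟩
  rw [← hE]
  simp

end

/-! ### Passage to components -/

section
variable {d m : ℕ} {𝔸 : Type*} [NormedRing 𝔸] [NormedAlgebra ℝ 𝔸]
  {B : Fin d → EuclideanSpace ℝ (Fin d) → Matrix (Fin m) (Fin m) ℂ}

/-- The connection one-form `v ↦ ∑ μ, v μ • B μ` with components `B`, carried to the normed algebra
`𝔸` by a linear homeomorphism `e`. The entrywise norm on matrices is not submultiplicative, so the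
matrices themselves cannot serve as `𝔸`. -/
noncomputable def oneForm (e : Matrix (Fin m) (Fin m) ℂ ≃L[ℝ] 𝔸)
    (B : Fin d → EuclideanSpace ℝ (Fin d) → Matrix (Fin m) (Fin m) ℂ)
    (z : EuclideanSpace ℝ (Fin d)) : EuclideanSpace ℝ (Fin d) →L[ℝ] 𝔸 :=
  ∑ μ, (EuclideanSpace.proj μ : EuclideanSpace ℝ (Fin d) →L[ℝ] ℝ).smulRight (e (B μ z))

variable (e : Matrix (Fin m) (Fin m) ℂ ≃L[ℝ] 𝔸)

lemma oneForm_apply (z v : EuclideanSpace ℝ (Fin d)) :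
    oneForm e B z v = e (∑ μ, v μ • B μ z) := by
  simp [oneForm]

lemma oneForm_single (z : EuclideanSpace ℝ (Fin d)) (μ : Fin d) :
    oneForm e B z (EuclideanSpace.single μ 1) = e (B μ z) := by
  simp [oneForm_apply]

lemma analyticAt_oneForm {z : EuclideanSpace ℝ (Fin d)} (hB : ∀ μ, AnalyticAt ℝ (B μ) z) :
    AnalyticAt ℝ (oneForm e B) z := by
  refine Finset.analyticAt_fun_sum _ fun μ _ => ?_
  let T := ContinuousLinearMap.smulRightL ℝ (EuclideanSpace ℝ (Fin d)) 𝔸 (EuclideanSpace.proj μ)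
  have h1 : AnalyticAt ℝ (fun a => T (e a)) (B μ z) :=
    (T ∘L (e : Matrix (Fin m) (Fin m) ℂ →L[ℝ] 𝔸)).analyticAt _
  exact AnalyticAt.comp (f := B μ) h1 (hB μ)

lemma fderiv_eq_sum_pd {g : EuclideanSpace ℝ (Fin d) → Matrix (Fin m) (Fin m) ℂ}
    (z u : EuclideanSpace ℝ (Fin d)) : fderiv ℝ g z u = ∑ ν, u ν • pd ν g z := by
  conv_lhs => rw [← (EuclideanSpace.basisFun (Fin d) ℝ).sum_repr u]
  simp [pd]

lemma fderiv_oneForm (hB : ∀ μ, ContDiff ℝ ∞ (B μ)) (hθ : ContDiff ℝ ∞ (oneForm e B))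
    (z u v : EuclideanSpace ℝ (Fin d)) :
    fderiv ℝ (oneForm e B) z u v = e (∑ μ, v μ • fderiv ℝ (B μ) z u) := by
  have h1 := ((hθ.differentiable (by simp) z).hasFDerivAt.clm_apply (hasFDerivAt_const v z))
  have h2 : HasFDerivAt (fun z => oneForm e B z v)
      ((e : Matrix (Fin m) (Fin m) ℂ →L[ℝ] 𝔸) ∘L ∑ μ, v μ • fderiv ℝ (B μ) z) z := by
    simp only [oneForm_apply]
    exact e.hasFDerivAt.comp z (HasFDerivAt.fun_sum fun μ _ =>
      ((hB μ).differentiable (by simp) z).hasFDerivAt.const_smul (v μ))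
  have := congrArg (fun T => T u) (h1.unique h2)
  simpa using this

lemma curv_oneForm (hmul : ∀ a b, e (a * b) = e a * e b) (hB : ∀ μ, ContDiff ℝ ∞ (B μ))
    (hθ : ContDiff ℝ ∞ (oneForm e B)) (z u : EuclideanSpace ℝ (Fin d)) (μ : Fin d) :
    curv (oneForm e B) z u (EuclideanSpace.single μ 1) = e (∑ ν, u ν • Fstr B ν μ z) := by
  rw [curv_apply, fderiv_oneForm e hB hθ, fderiv_oneForm e hB hθ, oneForm_single, oneForm_apply,
    ← hmul, ← hmul, ← map_sub, ← map_sub, ← map_add]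
  congr 1
  simp only [Fstr, smul_add, smul_sub, sum_add_distrib, sum_sub_distrib, Finset.sum_mul,
    Finset.mul_sum, smul_mul_assoc, mul_smul_comm]
  have hs : ∀ G : Fin d → Matrix (Fin m) (Fin m) ℂ,
      ∑ ν, (EuclideanSpace.single μ (1 : ℝ) : EuclideanSpace ℝ (Fin d)) ν • G ν = G μ := by simp
  rw [hs, fderiv_eq_sum_pd z u]
  rfl

lemma cov_oneForm (hmul : ∀ a b, e (a * b) = e a * e b)
    {g : EuclideanSpace ℝ (Fin d) → Matrix (Fin m) (Fin m) ℂ}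
    (u : EuclideanSpace ℝ (Fin d)) :
    cov (oneForm e B) u (fun z => e (g z)) = fun z => e (∑ ν, u ν • nab B ν g z) := by
  ext z
  have h : fderiv ℝ (fun z => e (g z)) z = (e : Matrix (Fin m) (Fin m) ℂ →L[ℝ] 𝔸) ∘L fderiv ℝ g z :=
    e.comp_fderiv
  simp only [cov, h, oneForm_apply]
  rw [← hmul, ← hmul, ← map_sub, ContinuousLinearMap.comp_apply, ContinuousLinearEquiv.coe_coe,
    ← map_add, fderiv_eq_sum_pd]
  simp only [nab, smul_add, smul_sub, sum_add_distrib, sum_sub_distrib, Finset.sum_mul,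
    Finset.mul_sum, smul_mul_assoc, mul_smul_comm]

lemma contDiff_pd {g : EuclideanSpace ℝ (Fin d) → Matrix (Fin m) (Fin m) ℂ}
    (hg : ContDiff ℝ ∞ g) (μ : Fin d) : ContDiff ℝ ∞ (pd μ g) :=
  (hg.fderiv_right (by simp)).clm_apply contDiff_const

/-- Proved entrywise, since the entrywise norm does not make the matrices a normed ring. -/
lemma contDiff_matrix_mul {f g : EuclideanSpace ℝ (Fin d) → Matrix (Fin m) (Fin m) ℂ}
    (hf : ContDiff ℝ ∞ f) (hg : ContDiff ℝ ∞ g) : ContDiff ℝ ∞ (fun z => f z * g z) := by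
  have hc : ∀ {h : EuclideanSpace ℝ (Fin d) → Matrix (Fin m) (Fin m) ℂ}, ContDiff ℝ ∞ h →
      ∀ i j, ContDiff ℝ ∞ fun z => h z i j := fun hh i j =>
    contDiff_pi.1 (contDiff_pi.1 hh i) j
  refine contDiff_pi.2 fun i => contDiff_pi.2 fun j => ?_
  simp only [Matrix.mul_apply]
  exact ContDiff.sum fun k _ => (hc hf i k).mul (hc hg k j)

lemma contDiff_Fstr (hB : ∀ μ, ContDiff ℝ ∞ (B μ)) (μ ν : Fin d) : ContDiff ℝ ∞ (Fstr B μ ν) :=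
  ((contDiff_pd (hB ν) μ).sub (contDiff_pd (hB μ) ν)).add
    ((contDiff_matrix_mul (hB μ) (hB ν)).sub (contDiff_matrix_mul (hB ν) (hB μ)))

lemma contDiff_nabL (hB : ∀ μ, ContDiff ℝ ∞ (B μ))
    {g : EuclideanSpace ℝ (Fin d) → Matrix (Fin m) (Fin m) ℂ} (hg : ContDiff ℝ ∞ g) :
    ∀ l : List (Fin d), ContDiff ℝ ∞ (nabL B l g)
  | [] => hg
  | μ :: l => (contDiff_pd (contDiff_nabL hB hg l) μ).add
      ((contDiff_matrix_mul (hB μ) (contDiff_nabL hB hg l)).sub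
        (contDiff_matrix_mul (contDiff_nabL hB hg l) (hB μ)))

lemma nab_sum {ι : Type*} [Fintype ι] (c : ι → ℝ)
    {g : ι → EuclideanSpace ℝ (Fin d) → Matrix (Fin m) (Fin m) ℂ} (hg : ∀ i, ContDiff ℝ ∞ (g i))
    (ρ : Fin d) (z : EuclideanSpace ℝ (Fin d)) :
    nab B ρ (fun z => ∑ i, c i • g i z) z = ∑ i, c i • nab B ρ (g i) z := by
  have h : HasFDerivAt (fun z => ∑ i, c i • g i z) (∑ i, c i • fderiv ℝ (g i) z) z :=
    HasFDerivAt.fun_sum fun i _ => ((hg i).differentiable (by simp) z).hasFDerivAt.const_smul (c i)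
  simp only [nab, pd, h.fderiv, smul_add, smul_sub, sum_add_distrib, sum_sub_distrib,
    Finset.sum_mul, Finset.mul_sum, smul_mul_assoc, mul_smul_comm]
  simp

/-- Expanding `(u^ρ ∇_ρ)^j (u^ν F_{νμ})` in components: the outermost derivative corresponds to the
first entry of the multi-index and the field strength to the last one. -/
lemma iterate_cov_oneForm (hmul : ∀ a b, e (a * b) = e a * e b) (hB : ∀ μ, ContDiff ℝ ∞ (B μ))
    (u : EuclideanSpace ℝ (Fin d)) (μ : Fin d) (j : ℕ) :
    (cov (oneForm e B) u)^[j] (fun z => e (∑ ν, u ν • Fstr B ν μ z)) = fun z =>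
      e (∑ ν : Fin (j + 1) → Fin d, (∏ i, u (ν i)) •
        nabL B (List.ofFn fun i : Fin j => ν i.castSucc) (Fstr B (ν (Fin.last j)) μ) z) := by
  induction j with
  | zero =>
    ext z
    rw [Function.iterate_zero, id]
    congr 1
    refine (Fintype.sum_equiv (Equiv.funUnique (Fin 1) (Fin d)) _ _ fun ν => ?_).symm
    simp [nabL]
  | succ j ih =>
    rw [Function.iterate_succ_apply', ih, cov_oneForm e hmul]
    ext z
    congr 1
    have hs : ∀ ν : Fin (j + 1) → Fin d, ContDiff ℝ ∞ (nabL B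
        (List.ofFn fun i : Fin j => ν i.castSucc) (Fstr B (ν (Fin.last j)) μ)) := fun ν =>
      contDiff_nabL hB (contDiff_Fstr hB _ _) _
    rw [← Fintype.sum_equiv (Fin.consEquiv fun _ => Fin d) _ _ fun _ => rfl,
      Fintype.sum_prod_type]
    refine Finset.sum_congr rfl fun ρ _ => ?_
    rw [nab_sum _ hs, Finset.smul_sum]
    refine Finset.sum_congr rfl fun ν _ => ?_
    simp only [smul_smul, Fin.prod_univ_succ (n := j + 1), List.ofFn_succ, Fin.consEquiv_apply, Fin.cons_zero, Fin.cons_succ, Fin.castSucc_zero,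
      ← Fin.succ_castSucc, ← Fin.succ_last, nabL]

/-- The image under `e` of a term of the component series is the corresponding term of
`series_formula`. -/
lemma map_fterm (hmul : ∀ a b, e (a * b) = e a * e b) (hB : ∀ μ, ContDiff ℝ ∞ (B μ))
    (hθ : ContDiff ℝ ∞ (oneForm e B)) (y u : EuclideanSpace ℝ (Fin d)) (μ : Fin d) (j : ℕ) :
    e (fterm B y u μ j) = (1 / ((j + 2)! : ℝ)) • (cov (oneForm e B) u)^[j]
      (fun z => curv (oneForm e B) z u (EuclideanSpace.single μ 1)) y := by
  simp only [curv_oneForm e hmul hB hθ, iterate_cov_oneForm e hmul hB, fterm, map_smul]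

/-- The component form of `series_formula`, given a multiplicative identification of the matrices
with a Banach algebra. -/
lemma transfer [CompleteSpace 𝔸] (hmul : ∀ a b, e (a * b) = e a * e b) (h1 : e 1 = 1)
    (hB : ∀ μ, ∀ x, AnalyticAt ℝ (B μ) x)
    (P : EuclideanSpace ℝ (Fin d) → EuclideanSpace ℝ (Fin d) → ℝ →
      Matrix (Fin m) (Fin m) ℂ)
    (hP0 : ∀ x y, P x y 0 = 1)
    (hP : ∀ x y, ∀ s ∈ Set.Icc (0:ℝ) 1, HasDerivWithinAt (P x y)
      (-(∑ μ, (x μ - y μ) • B μ (y + s • (x - y))) * P x y s) (Set.Icc (0:ℝ) 1) s)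
    (y : EuclideanSpace ℝ (Fin d)) :
    ∃ ε > (0:ℝ), ∀ x : EuclideanSpace ℝ (Fin d), ‖x - y‖ < ε → ∀ μ : Fin d,
      (Summable fun j : ℕ => ‖fterm B y (x - y) μ j‖) ∧
      fderiv ℝ (fun y' => P x y' 1) y (EuclideanSpace.single μ 1) - P x y 1 * B μ y
        = P x y 1 * ∑' j : ℕ, fterm B y (x - y) μ j := by
  have hBs : ∀ μ, ContDiff ℝ ∞ (B μ) := fun μ =>
    contDiff_iff_contDiffAt.2 fun z => (hB μ z).contDiffAt
  have hθ : ∀ z, AnalyticAt ℝ (oneForm e B) z := fun z => analyticAt_oneForm e fun μ => hB μ z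
  have hθs : ContDiff ℝ ∞ (oneForm e B) :=
    contDiff_iff_contDiffAt.2 fun z => (hθ z).contDiffAt
  obtain ⟨ε, hε, H⟩ := series_formula hθ y
  refine ⟨ε, hε, fun x hx μ => ?_⟩
  obtain ⟨L, hL, hv⟩ := H x hx (fun y' s => e (P x y' s)) (fun y' => by rw [hP0, h1])
    fun y' s hs => by
      refine (e.hasFDerivAt.comp_hasDerivWithinAt s (hP x y' s hs)).congr_deriv ?_
      change e _ = _
      rw [hmul, map_neg, oneForm_apply]
      rfl
  obtain ⟨hS, hE⟩ := hv (EuclideanSpace.single μ 1)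
  simp only [← map_fterm e hmul hBs hθs] at hS hE
  refine ⟨?_, ?_⟩
  · exact summable_norm_iff.2 (e.summable.1 hS.of_norm)
  · have hD : HasFDerivAt (fun y' => P x y' 1)
        ((e.symm : 𝔸 →L[ℝ] Matrix (Fin m) (Fin m) ℂ) ∘L L) y := by
      have h : (fun y' => P x y' 1) = fun y' => e.symm (e (P x y' 1)) :=
        funext fun _ => (e.symm_apply_apply _).symm
      rw [h]
      exact e.symm.hasFDerivAt.comp y hL
    apply e.injective
    rw [hD.fderiv, map_sub, hmul, hmul, e.map_tsum, ← hE, oneForm_single]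
    simp

end

/-- The matrices act as bounded operators on Euclidean space; the operator norm is
submultiplicative. -/
lemma exists_matrix_equiv (m : ℕ) :
    ∃ e : Matrix (Fin m) (Fin m) ℂ ≃L[ℝ]
      (EuclideanSpace ℂ (Fin m) →L[ℂ] EuclideanSpace ℂ (Fin m)),
      (∀ a b, e (a * b) = e a * e b) ∧ e 1 = 1 := by
  let f := (Matrix.toEuclideanCLM (n := Fin m) (𝕜 := ℂ)).toAlgEquiv.restrictScalars ℝ
  exact ⟨f.toLinearEquiv.toContinuousLinearEquiv, map_mul f, map_one f⟩

end

theorem wilson_line_deriv_snd_series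
    (d m : ℕ) (hd : 0 < d) (hm : 0 < m)
    (B : Fin d → EuclideanSpace ℝ (Fin d) → Matrix (Fin m) (Fin m) ℂ)
    (hB : ∀ μ, ∀ x, AnalyticAt ℝ (B μ) x)
    (P : EuclideanSpace ℝ (Fin d) → EuclideanSpace ℝ (Fin d) → ℝ →
      Matrix (Fin m) (Fin m) ℂ)
    (hP0 : ∀ x y, P x y 0 = 1)
    (hP : ∀ x y, ∀ s ∈ Set.Icc (0:ℝ) 1, HasDerivWithinAt (P x y)
      (-(∑ μ, (x μ - y μ) • B μ (y + s • (x - y))) * P x y s) (Set.Icc (0:ℝ) 1) s)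
    (Φ : EuclideanSpace ℝ (Fin d) → EuclideanSpace ℝ (Fin d) →
      Matrix (Fin m) (Fin m) ℂ)
    (hΦ : ∀ x y, Φ x y = P x y 1)
    (y : EuclideanSpace ℝ (Fin d)) :
    ∃ ε > (0:ℝ), ∀ x : EuclideanSpace ℝ (Fin d), ‖x - y‖ < ε → ∀ μ : Fin d,
      (Summable fun j : ℕ => ‖fterm B y (x - y) μ j‖) ∧
      fderiv ℝ (fun y' => Φ x y') y (EuclideanSpace.single μ 1) - Φ x y * B μ y
        = Φ x y * ∑' j : ℕ, fterm B y (x - y) μ j := by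
  obtain ⟨e, hmul, h1⟩ := exists_matrix_equiv m
  simp only [hΦ]
  exact transfer e hmul h1 hB P hP0 hP y
end

section
/- Let N ≥ 0 and suppose smooth functions â_0, …, â_N : ℝ^d × ℝ^d → M_m(ℂ) satisfy the transport recurrence system: (x−y)^μ(∂_{x^μ} + B_μ(x)) â_0(x,y) = 0 with â_0(x,x) = 1 for all x, and (n + (x−y)^μ(∂_{x^μ} + B_μ(x))) â_n(x,y) = −(A â_{n−1}(·,y))(x) for 1 ≤ n ≤ N. Define the truncated heat-kernel ansatz K_N(x,y;τ) = (4πτ)^{−d/2} e^{−|x−y|²/(4τ)} Σ_{n=0}^N τ^n â_n(x,y) for τ > 0. Then (∂_τ + A_x) K_N(x,y;τ) = (4πτ)^{−d/2} e^{−|x−y|²/(4τ)} τ^N (A â_N(·,y))(x), where A_x acts in the x variable. -/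
/-!
The Gaussian prefactor `f(x) = c · exp(-|x-y|²/(4τ))` satisfies `∂_μ f = -g_μ f` with
`g_μ = (x-y)^μ/(2τ)`, so conjugating `D_μ` by `f` replaces it by `D_μ - g_μ`. Summing the squares gives
`A (f S) = f (A S + (d/(2τ) - |x-y|²/(4τ²)) S + τ⁻¹ (x-y)^μ D_μ S)` (`lapA_gaussian_smul`).
The time derivative of the prefactor (`hasDerivAt_heat_prefactor`) is exactly the opposite of the
zeroth-order term here. For `S = ∑ τ^n a_n` the remaining terms are
`f (∑ τ^n A a_n + ∑ τ^(n-1) (n + (x-y)^μ D_μ) a_n)`, and the transport recurrence makes this sum telescope,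
leaving `f τ^N A a_N` (`transport_telescope`).
-/

attribute [local instance] Matrix.normedAddCommGroup Matrix.normedSpace

/-- The covariant derivative `D_μ h = ∂_μ h + B_μ h`. -/
noncomputable def covD {d m : ℕ}
    (B : Fin d → EuclideanSpace ℝ (Fin d) → Matrix (Fin m) (Fin m) ℂ)
    (μ : Fin d) (h : EuclideanSpace ℝ (Fin d) → Matrix (Fin m) (Fin m) ℂ) :
    EuclideanSpace ℝ (Fin d) → Matrix (Fin m) (Fin m) ℂ :=
  fun x => fderiv ℝ h x (EuclideanSpace.single μ 1) + B μ x * h x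

/-- The Laplace-type operator `A = −Σ_μ D_μ D_μ − v`. -/
noncomputable def lapA {d m : ℕ}
    (B : Fin d → EuclideanSpace ℝ (Fin d) → Matrix (Fin m) (Fin m) ℂ)
    (v : EuclideanSpace ℝ (Fin d) → Matrix (Fin m) (Fin m) ℂ)
    (h : EuclideanSpace ℝ (Fin d) → Matrix (Fin m) (Fin m) ℂ) :
    EuclideanSpace ℝ (Fin d) → Matrix (Fin m) (Fin m) ℂ :=
  fun x => -∑ μ, covD B μ (covD B μ h) x - v x * h x

/-- `Matrix` with its entrywise sup norm is not a normed ring, hence the entrywise proof. -/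
lemma contDiff_matrix_mul_s9 {E : Type*} [NormedAddCommGroup E] [NormedSpace ℝ E] {m : ℕ}
    {F G : E → Matrix (Fin m) (Fin m) ℂ} {k : WithTop ℕ∞}
    (hF : ContDiff ℝ k F) (hG : ContDiff ℝ k G) : ContDiff ℝ k (fun x => F x * G x) := by
  have hF' : ∀ i j, ContDiff ℝ k (fun x => F x i j) := fun i j =>
    contDiff_pi.1 (contDiff_pi.1 hF i) j
  have hG' : ∀ i j, ContDiff ℝ k (fun x => G x i j) := fun i j =>
    contDiff_pi.1 (contDiff_pi.1 hG i) j
  refine contDiff_pi.2 fun i => contDiff_pi.2 fun j => ?_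
  simp only [Matrix.mul_apply]
  exact ContDiff.sum fun l _ => (hF' i l).mul (hG' l j)

section

variable {d m : ℕ} {B : Fin d → EuclideanSpace ℝ (Fin d) → Matrix (Fin m) (Fin m) ℂ}
  {v : EuclideanSpace ℝ (Fin d) → Matrix (Fin m) (Fin m) ℂ}

lemma contDiff_covD (hB : ∀ μ, ContDiff ℝ (⊤ : ℕ∞) (B μ)) (μ : Fin d)
    {h : EuclideanSpace ℝ (Fin d) → Matrix (Fin m) (Fin m) ℂ}
    (hh : ContDiff ℝ (⊤ : ℕ∞) h) : ContDiff ℝ (⊤ : ℕ∞) (covD B μ h) := by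
  unfold covD
  refine ContDiff.add ?_ (contDiff_matrix_mul_s9 (hB μ) hh)
  exact (hh.fderiv_right (m := (⊤ : ℕ∞)) (by norm_cast)).clm_apply contDiff_const

/-- Leibniz rule for the covariant derivative of a real scalar times a matrix function. -/
lemma covD_smul (μ : Fin d) {f : EuclideanSpace ℝ (Fin d) → ℝ}
    {h : EuclideanSpace ℝ (Fin d) → Matrix (Fin m) (Fin m) ℂ} {x : EuclideanSpace ℝ (Fin d)}
    (hf : DifferentiableAt ℝ f x) (hh : DifferentiableAt ℝ h x) :
    covD B μ (fun z => f z • h z) x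
      = fderiv ℝ f x (EuclideanSpace.single μ 1) • h x + f x • covD B μ h x := by
  -- The additive structure coming from the norm on `Matrix` agrees with the algebraic one only up to
  -- unfolding, so `fderiv_fun_smul` does not rewrite syntactically and is used as a term.
  have e : fderiv ℝ (fun z => f z • h z) x (EuclideanSpace.single μ 1)
      = f x • fderiv ℝ h x (EuclideanSpace.single μ 1)
        + fderiv ℝ f x (EuclideanSpace.single μ 1) • h x :=
    DFunLike.congr_fun (fderiv_fun_smul hf hh) _
  unfold covD
  rw [e]
  simp only [smul_add, Matrix.mul_smul]
  abel

lemma covD_sub (μ : Fin d) {h k : EuclideanSpace ℝ (Fin d) → Matrix (Fin m) (Fin m) ℂ}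
    {x : EuclideanSpace ℝ (Fin d)}
    (hh : DifferentiableAt ℝ h x) (hk : DifferentiableAt ℝ k x) :
    covD B μ (fun z => h z - k z) x = covD B μ h x - covD B μ k x := by
  have e : fderiv ℝ (fun z => h z - k z) x (EuclideanSpace.single μ 1)
      = fderiv ℝ h x (EuclideanSpace.single μ 1) - fderiv ℝ k x (EuclideanSpace.single μ 1) :=
    DFunLike.congr_fun (fderiv_fun_sub hh hk) _
  unfold covD
  rw [e]
  simp only [mul_sub]
  abel

lemma covD_sum (μ : Fin d) (s : Finset ℕ) (c : ℕ → ℝ)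
    {h : ℕ → EuclideanSpace ℝ (Fin d) → Matrix (Fin m) (Fin m) ℂ}
    (hh : ∀ n ∈ s, Differentiable ℝ (h n)) :
    covD B μ (fun z => ∑ n ∈ s, c n • h n z) = fun x => ∑ n ∈ s, c n • covD B μ (h n) x := by
  funext x
  have e : fderiv ℝ (fun z => ∑ n ∈ s, c n • h n z) x (EuclideanSpace.single μ 1)
      = ∑ n ∈ s, c n • fderiv ℝ (h n) x (EuclideanSpace.single μ 1) := by
    have hs : HasFDerivAt (fun z => ∑ n ∈ s, c n • h n z) (∑ n ∈ s, c n • fderiv ℝ (h n) x) x :=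
      HasFDerivAt.fun_sum fun n hn => ((hh n hn) x).hasFDerivAt.const_smul (c n)
    rw [hs.fderiv, sum_apply]
    rfl
  unfold covD
  rw [e]
  simp only [Finset.mul_sum, smul_add, Finset.sum_add_distrib, Matrix.mul_smul]

lemma lapA_sum (hB : ∀ μ, ContDiff ℝ (⊤ : ℕ∞) (B μ)) (s : Finset ℕ) (c : ℕ → ℝ)
    {h : ℕ → EuclideanSpace ℝ (Fin d) → Matrix (Fin m) (Fin m) ℂ}
    (hh : ∀ n ∈ s, ContDiff ℝ (⊤ : ℕ∞) (h n)) (x : EuclideanSpace ℝ (Fin d)) :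
    lapA B v (fun z => ∑ n ∈ s, c n • h n z) x = ∑ n ∈ s, c n • lapA B v (h n) x := by
  have key : ∀ μ, covD B μ (covD B μ (fun z => ∑ n ∈ s, c n • h n z)) x
      = ∑ n ∈ s, c n • covD B μ (covD B μ (h n)) x := fun μ => by
    rw [covD_sum μ s c fun n hn => (hh n hn).differentiable (by simp),
      covD_sum μ s c fun n hn => (contDiff_covD hB μ (hh n hn)).differentiable (by simp)]
  unfold lapA
  simp only [key, Finset.mul_sum, smul_sub, smul_neg, Finset.sum_sub_distrib,
    Finset.sum_neg_distrib, Finset.smul_sum, Matrix.mul_smul]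
  rw [Finset.sum_comm]

lemma hasFDerivAt_gaussian (c τ : ℝ) (y x : EuclideanSpace ℝ (Fin d)) :
    HasFDerivAt (fun z => c * Real.exp (-‖z - y‖ ^ 2 / (4 * τ)))
      (c • (Real.exp (-‖x - y‖ ^ 2 / (4 * τ)) •
        ((4 * τ)⁻¹ • -(2 • innerSL ℝ (x - y) : EuclideanSpace ℝ (Fin d) →L[ℝ] ℝ)))) x := by
  have h1 : HasFDerivAt (fun z : EuclideanSpace ℝ (Fin d) => z - y)
      (ContinuousLinearMap.id ℝ _) x := (hasFDerivAt_id x).sub_const y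
  have h2 := (h1.norm_sq.neg.const_mul (4 * τ)⁻¹).exp.const_mul c
  simp only [ContinuousLinearMap.comp_id] at h2
  have e : ∀ r : ℝ, (4 * τ)⁻¹ * -r = -r / (4 * τ) := fun r => by ring
  simpa only [e, Pi.neg_apply] using h2

lemma fderiv_gaussian_single (c τ : ℝ) (y x : EuclideanSpace ℝ (Fin d)) (μ : Fin d) :
    fderiv ℝ (fun z => c * Real.exp (-‖z - y‖ ^ 2 / (4 * τ))) x (EuclideanSpace.single μ 1)
      = -(c * Real.exp (-‖x - y‖ ^ 2 / (4 * τ)) * ((x μ - y μ) / (2 * τ))) := by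
  rw [(hasFDerivAt_gaussian c τ y x).fderiv]
  simp [EuclideanSpace.inner_single_right]
  ring

/-- Conjugation by the Gaussian turns `D_μ` into `D_μ - (x-y)^μ/(2τ)`. -/
lemma covD_gaussian_smul (c τ : ℝ) (y : EuclideanSpace ℝ (Fin d)) (μ : Fin d)
    {h : EuclideanSpace ℝ (Fin d) → Matrix (Fin m) (Fin m) ℂ} (hh : Differentiable ℝ h) :
    covD B μ (fun z => (c * Real.exp (-‖z - y‖ ^ 2 / (4 * τ))) • h z)
      = fun z => (c * Real.exp (-‖z - y‖ ^ 2 / (4 * τ))) •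
          (covD B μ h z - ((z μ - y μ) / (2 * τ)) • h z) := by
  funext x
  rw [covD_smul μ (hasFDerivAt_gaussian c τ y x).differentiableAt (hh x),
    fderiv_gaussian_single]
  module

lemma hasFDerivAt_coord (τ : ℝ) (y x : EuclideanSpace ℝ (Fin d)) (μ : Fin d) :
    HasFDerivAt (fun z : EuclideanSpace ℝ (Fin d) => (z μ - y μ) / (2 * τ))
      ((2 * τ)⁻¹ • (EuclideanSpace.proj μ : EuclideanSpace ℝ (Fin d) →L[ℝ] ℝ)) x := by
  have h := (((EuclideanSpace.proj μ : EuclideanSpace ℝ (Fin d) →L[ℝ] ℝ).hasFDerivAt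
    (x := x)).sub_const (y μ)).const_mul (2 * τ)⁻¹
  have e : ∀ r : ℝ, (2 * τ)⁻¹ * r = r / (2 * τ) := fun r => by ring
  simpa only [e, PiLp.proj_apply] using h

lemma covD_covD_gaussian_smul (hB : ∀ μ, ContDiff ℝ (⊤ : ℕ∞) (B μ))
    (c τ : ℝ) (y : EuclideanSpace ℝ (Fin d)) (μ : Fin d)
    {h : EuclideanSpace ℝ (Fin d) → Matrix (Fin m) (Fin m) ℂ}
    (hh : ContDiff ℝ (⊤ : ℕ∞) h) (x : EuclideanSpace ℝ (Fin d)) :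
    covD B μ (covD B μ (fun z => (c * Real.exp (-‖z - y‖ ^ 2 / (4 * τ))) • h z)) x
      = (c * Real.exp (-‖x - y‖ ^ 2 / (4 * τ))) •
        (covD B μ (covD B μ h) x - τ⁻¹ • ((x μ - y μ) • covD B μ h x)
          + ((4 * τ ^ 2)⁻¹ * (x μ - y μ) ^ 2 - (2 * τ)⁻¹) • h x) := by
  have hd : Differentiable ℝ h := hh.differentiable (by simp)
  have hd' : Differentiable ℝ (covD B μ h) := (contDiff_covD hB μ hh).differentiable (by simp)
  have hg : Differentiable ℝ (fun z : EuclideanSpace ℝ (Fin d) => (z μ - y μ) / (2 * τ)) :=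
    fun x => (hasFDerivAt_coord τ y x μ).differentiableAt
  have hgh : Differentiable ℝ (fun z => ((z μ - y μ) / (2 * τ)) • h z) := hg.smul hd
  have hsub : Differentiable ℝ (fun z => covD B μ h z - ((z μ - y μ) / (2 * τ)) • h z) :=
    hd'.sub hgh
  rw [covD_gaussian_smul c τ y μ hd, covD_gaussian_smul c τ y μ hsub]
  simp only
  rw [covD_sub μ (hd' x) (hgh x), covD_smul μ (hg x) (hd x), (hasFDerivAt_coord τ y x μ).fderiv]
  simp only [smul_apply, PiLp.proj_apply, PiLp.single_apply,
    if_true, smul_eq_mul, mul_one]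
  module

lemma lapA_gaussian_smul (hB : ∀ μ, ContDiff ℝ (⊤ : ℕ∞) (B μ))
    (c τ : ℝ) (y : EuclideanSpace ℝ (Fin d))
    {h : EuclideanSpace ℝ (Fin d) → Matrix (Fin m) (Fin m) ℂ}
    (hh : ContDiff ℝ (⊤ : ℕ∞) h) (x : EuclideanSpace ℝ (Fin d)) :
    lapA B v (fun z => (c * Real.exp (-‖z - y‖ ^ 2 / (4 * τ))) • h z) x
      = (c * Real.exp (-‖x - y‖ ^ 2 / (4 * τ))) •
        (lapA B v h x + τ⁻¹ • ∑ μ, (x μ - y μ) • covD B μ h x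
          + (d * (2 * τ)⁻¹ - (4 * τ ^ 2)⁻¹ * ‖x - y‖ ^ 2) • h x) := by
  have hn : ‖x - y‖ ^ 2 = ∑ μ, (x μ - y μ) ^ 2 := by
    simp [EuclideanSpace.norm_sq_eq]
  unfold lapA
  simp only [covD_covD_gaussian_smul hB c τ y _ hh]
  rw [← Finset.smul_sum, Finset.sum_add_distrib, Finset.sum_sub_distrib, ← Finset.smul_sum,
    ← Finset.sum_smul, Finset.sum_sub_distrib, ← Finset.mul_sum, ← hn, Matrix.mul_smul]
  simp only [Finset.sum_const, Finset.card_univ, Fintype.card_fin, nsmul_eq_mul]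
  module

/-- The logarithmic derivative in time of the heat prefactor is `-d/(2τ) + r²/(4τ²)`. -/
lemma hasDerivAt_heat_prefactor (p r : ℝ) {τ : ℝ} (hτ : 0 < τ) :
    HasDerivAt (fun t : ℝ => (4 * Real.pi * t) ^ (-p / 2) * Real.exp (-r / (4 * t)))
      ((4 * Real.pi * τ) ^ (-p / 2) * Real.exp (-r / (4 * τ)) *
        ((4 * τ ^ 2)⁻¹ * r - p * (2 * τ)⁻¹)) τ := by
  have hpos : 0 < 4 * Real.pi * τ := by positivity
  have h1 : HasDerivAt (fun t : ℝ => 4 * Real.pi * t) (4 * Real.pi) τ := by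
    simpa using (hasDerivAt_id τ).const_mul (4 * Real.pi)
  have h2 := h1.rpow_const (p := -p / 2) (Or.inl hpos.ne')
  have h3 : HasDerivAt (fun t : ℝ => -r / (4 * t)) (r / (4 * τ ^ 2)) τ := by
    have h := (hasDerivAt_const τ (-r)).fun_div ((hasDerivAt_id τ).const_mul 4)
      (by simpa using hτ.ne')
    refine h.congr_deriv ?_
    simp only [id]
    field_simp
    ring
  refine (h2.mul h3.exp).congr_deriv ?_
  rw [Real.rpow_sub_one hpos.ne']
  have := Real.pi_pos
  field_simp
  ring

end

/-- The transport recurrence makes the sum over orders telescope. Here `T n` stands for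
`(x-y)^μ D_μ a_n` and `L n` for `A a_n`; the truncated exponent `n - 1` at `n = 0` is harmless because
of the factor `n`. -/
lemma transport_telescope {V : Type*} [AddCommGroup V] [Module ℝ V] (N : ℕ) (a T L : ℕ → V)
    (h0 : T 0 = 0) (hrec : ∀ n, 1 ≤ n → n ≤ N → (n : ℝ) • a n + T n = -L (n - 1))
    {τ : ℝ} (hτ : τ ≠ 0) :
    ∑ n ∈ Finset.range (N + 1), ((n : ℝ) * τ ^ (n - 1)) • a n
      + (∑ n ∈ Finset.range (N + 1), τ ^ n • L n
        + τ⁻¹ • ∑ n ∈ Finset.range (N + 1), τ ^ n • T n) = τ ^ N • L N := by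
  induction N with
  | zero => simp [h0]
  | succ N ih =>
    have ih' := ih fun n h1 h2 => hrec n h1 (by omega)
    have hN := hrec (N + 1) (by omega) le_rfl
    simp only [Nat.add_sub_cancel] at hN
    have hT : T (N + 1) = -L N - ((N + 1 : ℕ) : ℝ) • a (N + 1) := by
      rw [← hN]; abel
    rw [Finset.sum_range_succ _ (N + 1), Finset.sum_range_succ _ (N + 1),
      Finset.sum_range_succ _ (N + 1), hT, smul_add, smul_smul τ⁻¹, pow_succ τ N,
      show τ⁻¹ * (τ ^ N * τ) = τ ^ N by field_simp, Nat.add_sub_cancel]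
    rw [← sub_eq_zero] at ih' ⊢
    rw [← ih']
    module

theorem heat_operator_on_truncated_ansatz
    (d m N : ℕ) (hd : 0 < d) (hm : 0 < m)
    (B : Fin d → EuclideanSpace ℝ (Fin d) → Matrix (Fin m) (Fin m) ℂ)
    (hB : ∀ μ, ContDiff ℝ (⊤ : ℕ∞) (B μ))
    (v : EuclideanSpace ℝ (Fin d) → Matrix (Fin m) (Fin m) ℂ)
    (hv : ContDiff ℝ (⊤ : ℕ∞) v)
    (a : ℕ → EuclideanSpace ℝ (Fin d) → EuclideanSpace ℝ (Fin d) →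
      Matrix (Fin m) (Fin m) ℂ)
    (ha : ∀ n ≤ N, ContDiff ℝ (⊤ : ℕ∞)
      (fun p : EuclideanSpace ℝ (Fin d) × EuclideanSpace ℝ (Fin d) => a n p.1 p.2))
    (h0 : ∀ x y, ∑ μ, (x μ - y μ) • covD B μ (fun x' => a 0 x' y) x = 0)
    (h0diag : ∀ x, a 0 x x = 1)
    (hrec : ∀ n, 1 ≤ n → n ≤ N → ∀ x y,
      (n : ℝ) • a n x y + ∑ μ, (x μ - y μ) • covD B μ (fun x' => a n x' y) x
        = -lapA B v (fun x' => a (n - 1) x' y) x)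
    (KN : EuclideanSpace ℝ (Fin d) → EuclideanSpace ℝ (Fin d) → ℝ →
      Matrix (Fin m) (Fin m) ℂ)
    (hKN : ∀ x y τ, KN x y τ =
      ((4 * Real.pi * τ) ^ (-(d : ℝ) / 2) * Real.exp (-‖x - y‖ ^ 2 / (4 * τ))) •
        ∑ n ∈ Finset.range (N + 1), τ ^ n • a n x y) :
    ∀ τ : ℝ, 0 < τ → ∀ x y,
      deriv (fun t => KN x y t) τ + lapA B v (fun x' => KN x' y τ) x
        = ((4 * Real.pi * τ) ^ (-(d : ℝ) / 2) * Real.exp (-‖x - y‖ ^ 2 / (4 * τ))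
            * τ ^ N) • lapA B v (fun x' => a N x' y) x := by
  intro τ hτ x y
  have hsm : ∀ n ∈ Finset.range (N + 1), ContDiff ℝ (⊤ : ℕ∞) (fun z => a n z y) := fun n hn =>
    (ha n (Nat.lt_succ_iff.1 (Finset.mem_range.1 hn))).comp (contDiff_id.prodMk contDiff_const)
  have hS : ContDiff ℝ (⊤ : ℕ∞) (fun z => ∑ n ∈ Finset.range (N + 1), τ ^ n • a n z y) :=
    ContDiff.sum fun n hn => (hsm n hn).const_smul _
  have hT : ∑ μ, (x μ - y μ) • covD B μ (fun z => ∑ n ∈ Finset.range (N + 1), τ ^ n • a n z y) x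
      = ∑ n ∈ Finset.range (N + 1),
        τ ^ n • ∑ μ, (x μ - y μ) • covD B μ (fun z => a n z y) x := by
    simp only [covD_sum (B := B) _ (Finset.range (N + 1)) (fun n => τ ^ n)
      fun n hn => (hsm n hn).differentiable (by simp), Finset.smul_sum]
    rw [Finset.sum_comm]
    simp only [smul_comm (τ ^ _)]
  have hpoly : HasDerivAt (fun t : ℝ => ∑ n ∈ Finset.range (N + 1), t ^ n • a n x y)
      (∑ n ∈ Finset.range (N + 1), ((n : ℝ) * τ ^ (n - 1)) • a n x y) τ :=
    HasDerivAt.fun_sum fun n _ => (hasDerivAt_pow n τ).smul_const _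
  have htel := transport_telescope N (fun n => a n x y)
    (fun n => ∑ μ, (x μ - y μ) • covD B μ (fun z => a n z y) x)
    (fun n => lapA B v (fun z => a n z y) x) (h0 x y) (fun n h1 h2 => hrec n h1 h2 x y) hτ.ne'
  have hder := ((hasDerivAt_heat_prefactor d (‖x - y‖ ^ 2) hτ).fun_smul hpoly).deriv
  simp only [hKN]
  -- As in `covD_smul`, the two additive structures on `Matrix` prevent a direct rewrite by `hder`.
  refine (congrArg (· + _) hder).trans ?_
  rw [lapA_gaussian_smul hB _ τ y hS x, hT,
    lapA_sum hB (Finset.range (N + 1)) (fun n => τ ^ n) hsm x, mul_smul _ (τ ^ N), ← htel]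
  module
end

section
/- Define â_n : ℝ^d × ℝ^d → M_m(ℂ) recursively by â_0(x,y) = Φ(x,y) and â_n(x,y) = −∫_0^1 s^{n−1} Φ(x, z(s)) · (A â_{n−1}(·,y))(z(s)) ds for n ≥ 1, where z(s) = y + s(x−y) and A acts in the first variable. Then all â_n are smooth and satisfy the recurrence system: (x−y)^μ(∂_{x^μ} + B_μ(x)) â_0(x,y) = 0, â_0(x,x) = 1, and (n + (x−y)^μ(∂_{x^μ} + B_μ(x))) â_n(x,y) = −(A â_{n−1}(·,y))(x) for all n ≥ 1 and all x, y ∈ ℝ^d. -/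
/-! The coefficients are smooth because the path-ordered exponential `Φ` is smooth, and the
recurrence is the derivative of the integral recursion along rays from `y`.

*Parallel transport.* By uniqueness for linear equations, transport between two times of a line is
`Φ(y + t w, y + s w) = R(t) R(s)⁻¹`, where `R` solves the transport equation along the line with
`R(0) = 1` (`IsTransport.exists_frame`). The frame is taken on the time interval `[0, 2]`, so that
the endpoint `t = 1` of a segment is an interior point.

*Smoothness of `Φ`.* Only a pointwise description of `Φ` is given, and smooth dependence on the
endpoints is derived by hand. Duhamel's formula (`IsTransport.duhamel`) writes the difference of two
transports as an integral of `Φ · (difference of generators) · Φ`. It gives continuity of `Φ`, then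
differentiability with a derivative that is an integral of `Φ · (derivative of the generator) · Φ`.
Thus `Φ ∈ C^n` implies `Φ ∈ C^(n+1)` (`IsTransport.contDiff`), and the smoothness of all coefficients
follows by differentiating under the integral sign (`contDiff_param`, `contDiff_gcoef`).

*The recurrence.* With `G` the Laplace-type operator applied to `a_n(·, y)`, the substitution
`u = t s` along the ray `z(t) = y + t (x - y)` gives
`t^(n+1) a_{n+1}(z(t), y) = -R(t) ∫₀ᵗ uⁿ R(u)⁻¹ G(z(u)) du`. The derivative at `t = 1` is the
recurrence, since `R'` produces the connection term in the radial covariant derivative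
(`sum_gcovD`, `gcoef_succ`).

*Norms.* The elementwise sup norm on matrices is not submultiplicative, so all of the above is
proved with values in an arbitrary finite-dimensional normed algebra, and then transferred from
matrices with the operator norm by the bicontinuous identity map (`toOp`). -/

/- STATEMENT 10: the functions `â_0(x,y) = Φ(x,y)`,
`â_n(x,y) = −∫_0^1 s^{n−1} Φ(x,z(s)) (A â_{n−1}(·,y))(z(s)) ds`, `z(s)=y+s(x−y)`,
are smooth and solve the recurrence system
`(x−y)^μ D_μ â_0 = 0`, `â_0(x,x) = 1`,
`(n + (x−y)^μ D_μ) â_n(x,y) = −(A â_{n−1}(·,y))(x)`. -/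

attribute [local instance] Matrix.normedAddCommGroup Matrix.normedSpace

/-- The heat-kernel coefficients, defined by the integral recursion of
Lemma 1 of the paper (`â_0 = Φ`,
`â_{n+1}(x,y) = −∫_0^1 s^n Φ(x,z(s)) (A â_n(·,y))(z(s)) ds`). -/
noncomputable def acoef {d m : ℕ}
    (B : Fin d → EuclideanSpace ℝ (Fin d) → Matrix (Fin m) (Fin m) ℂ)
    (v : EuclideanSpace ℝ (Fin d) → Matrix (Fin m) (Fin m) ℂ)
    (Φ : EuclideanSpace ℝ (Fin d) → EuclideanSpace ℝ (Fin d) →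
      Matrix (Fin m) (Fin m) ℂ) :
    ℕ → EuclideanSpace ℝ (Fin d) → EuclideanSpace ℝ (Fin d) →
      Matrix (Fin m) (Fin m) ℂ
  | 0 => fun x y => Φ x y
  | n + 1 => fun x y =>
      -∫ s in (0:ℝ)..1, s ^ n •
        (Φ x (y + s • (x - y)) *
          lapA B v (fun x' => acoef B v Φ n x' y) (y + s • (x - y)))

open MeasureTheory Set Filter Topology
open scoped ContDiff

/-! ### Calculus lemmas -/

/-- A product is differentiable at a zero of its differentiable first factor as soon as the second
factor is continuous there. -/
lemma hasFDerivAt_mul_of_zero {E 𝔸 : Type*} [NormedAddCommGroup E] [NormedSpace ℝ E]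
    [NormedRing 𝔸] [NormedAlgebra ℝ 𝔸] {f g : E → 𝔸} {f' : E →L[ℝ] 𝔸} {q : E}
    (hf : HasFDerivAt f f' q) (h0 : f q = 0) (hg : ContinuousAt g q) :
    HasFDerivAt (fun x => f x * g x) (((ContinuousLinearMap.mul ℝ 𝔸).flip (g q)).comp f') q := by
  have h1 : HasFDerivAt (fun x => f x * g q)
      (((ContinuousLinearMap.mul ℝ 𝔸).flip (g q)).comp f') q :=
    ((ContinuousLinearMap.mul ℝ 𝔸).flip (g q)).hasFDerivAt.comp q hf
  have h2 : HasFDerivAt (fun x => f x * (g x - g q)) (0 : E →L[ℝ] 𝔸) q := by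
    rw [hasFDerivAt_iff_isLittleO]
    have hO : (fun x => f x) =O[𝓝 q] fun x => x - q := by
      simpa [h0] using hf.isBigO_sub
    have ho : (fun x => g x - g q) =o[𝓝 q] fun _ => (1 : ℝ) := by
      rw [Asymptotics.isLittleO_one_iff]
      have h := hg.tendsto.sub_const (g q)
      rwa [sub_self] at h
    have := hO.norm_right.mul_isLittleO ho
    simp only [mul_one] at this
    simpa [h0] using this.norm_right
  refine ((h1.add h2).congr_fderiv (by simp)).congr_of_eventuallyEq
    (Eventually.of_forall fun x => ?_)
  simp [mul_sub]

/-- An integral over `[0, 1]` inherits the smoothness of its integrand in the parameter. The target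
space varies in the induction because the derivative takes values in `E →L[ℝ] F`. -/
lemma contDiff_param_nat {E : Type} [NormedAddCommGroup E] [NormedSpace ℝ E]
    [FiniteDimensional ℝ E] (n : ℕ) : ∀ {F : Type} [NormedAddCommGroup F] [NormedSpace ℝ F]
    [CompleteSpace F] {f : E × ℝ → F}, ContDiff ℝ n f →
    ContDiff ℝ n (fun p => ∫ t in (0:ℝ)..1, f (p, t)) := by
  induction n with
  | zero =>
    intro F _ _ _ f hf
    simp only [Nat.cast_zero, contDiff_zero] at hf ⊢
    exact intervalIntegral.continuous_parametric_intervalIntegral_of_continuous' (by exact hf) 0 1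
  | succ n ih =>
    intro F _ _ _ f hf
    have hf' : ContDiff ℝ n (fun p : E × ℝ =>
        (fderiv ℝ f p).comp (ContinuousLinearMap.inl ℝ E ℝ)) :=
      (hf.fderiv_right (m := n) (by norm_cast)).clm_comp contDiff_const
    have hd : ∀ p t, HasFDerivAt (fun p => f (p, t))
        ((fderiv ℝ f (p, t)).comp (ContinuousLinearMap.inl ℝ E ℝ)) p := fun p t =>
      ((hf.differentiable (by norm_cast) (p, t)).hasFDerivAt).comp p (hasFDerivAt_prodMk_left p t)
    rw [Nat.cast_add, Nat.cast_one, contDiff_succ_iff_hasFDerivAt]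
    refine ⟨_, ih hf', fun q => ?_⟩
    have := FiniteDimensional.proper ℝ E
    obtain ⟨C, hC⟩ := ((isCompact_closedBall q 1).prod
      (isCompact_Icc (a := (0:ℝ)) (b := 1))).exists_bound_of_continuousOn
      hf'.continuous.continuousOn
    refine intervalIntegral.hasFDerivAt_integral_of_dominated_of_fderiv_le (bound := fun _ => C)
      (F' := fun p t => (fderiv ℝ f (p, t)).comp (ContinuousLinearMap.inl ℝ E ℝ))
      (Metric.closedBall_mem_nhds q one_pos) ?_ ?_ ?_ ?_ ?_ ?_
    · exact Eventually.of_forall fun p =>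
        (hf.continuous.comp (Continuous.prodMk_right p)).aestronglyMeasurable
    · exact (hf.continuous.comp (Continuous.prodMk_right q)).intervalIntegrable _ _
    · exact (hf'.continuous.comp (Continuous.prodMk_right q)).aestronglyMeasurable
    · refine Eventually.of_forall fun t ht p hp => hC (p, t) ⟨hp, ?_⟩
      rw [uIoc_of_le zero_le_one] at ht
      exact ⟨ht.1.le, ht.2⟩
    · exact intervalIntegrable_const
    · exact Eventually.of_forall fun t _ p _ => hd p t

lemma contDiff_param {E F : Type} [NormedAddCommGroup E] [NormedSpace ℝ E]
    [FiniteDimensional ℝ E] [NormedAddCommGroup F] [NormedSpace ℝ F] [CompleteSpace F]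
    {f : E × ℝ → F} (hf : ContDiff ℝ ∞ f) :
    ContDiff ℝ ∞ (fun p => ∫ t in (0:ℝ)..1, f (p, t)) :=
  contDiff_infty.2 fun n => contDiff_param_nat n (contDiff_infty.1 hf n)

/-! ### Linear equations on the unit interval -/

/-- Grönwall's bound for a linear equation. -/
lemma norm_le_of_linear {𝔸 : Type*} [NormedRing 𝔸] [NormedAlgebra ℝ 𝔸] {c f : ℝ → 𝔸} {K : ℝ}
    (hf : ∀ s ∈ Icc (0:ℝ) 1, HasDerivWithinAt f (c s * f s) (Icc 0 1) s)
    (hK : ∀ s ∈ Icc (0:ℝ) 1, ‖c s‖ ≤ K) :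
    ∀ s ∈ Icc (0:ℝ) 1, ‖f s‖ ≤ ‖f 0‖ * Real.exp (K * s) := by
  have := norm_le_gronwallBound_of_norm_deriv_right_le (f := f) (f' := fun s => c s * f s)
    (δ := ‖f 0‖) (K := K) (ε := 0) (a := 0) (b := 1)
    (fun s hs => (hf s hs).continuousWithinAt)
    (fun s hs => (hf s ⟨hs.1, hs.2.le⟩).mono_of_mem_nhdsWithin (Icc_mem_nhdsGE_of_mem hs))
    le_rfl (fun s hs => by
      have := hK s ⟨hs.1, hs.2.le⟩
      calc _ ≤ ‖c s‖ * ‖f s‖ := norm_mul_le _ _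
        _ ≤ K * ‖f s‖ + 0 := by rw [add_zero]; gcongr)
  intro s hs
  simpa [gronwallBound_ε0] using this s hs

/-- Uniqueness for linear equations. -/
lemma eq_of_linear {𝔸 : Type*} [NormedRing 𝔸] [NormedAlgebra ℝ 𝔸] {c f g : ℝ → 𝔸}
    (hc : ContinuousOn c (Icc 0 1))
    (hf : ∀ s ∈ Icc (0:ℝ) 1, HasDerivWithinAt f (c s * f s) (Icc 0 1) s)
    (hg : ∀ s ∈ Icc (0:ℝ) 1, HasDerivWithinAt g (c s * g s) (Icc 0 1) s)
    (h0 : f 0 = g 0) : f 1 = g 1 := by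
  obtain ⟨K, hK⟩ := isCompact_Icc.exists_bound_of_continuousOn hc
  have := norm_le_of_linear (f := fun s => f s - g s) (c := c)
    (fun s hs => by simpa only [mul_sub] using (hf s hs).fun_sub (hg s hs)) hK 1 (by simp)
  simpa [h0, sub_eq_zero] using this

/-! ### Parallel transport along lines -/

/-- The generator at time `t` of parallel transport along the line `t ↦ y + t • w`. -/
noncomputable def gen {d : ℕ} {𝔸 : Type} [NormedRing 𝔸] [NormedAlgebra ℝ 𝔸]
    (B : Fin d → EuclideanSpace ℝ (Fin d) → 𝔸) (y w : EuclideanSpace ℝ (Fin d)) (t : ℝ) : 𝔸 :=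
  -(∑ μ, w μ • B μ (y + t • w))

/-- `Φ x y` is the time-one value of the solution of the transport equation along the segment from
`y` to `x`, i.e. the path-ordered exponential of `B`. -/
def IsTransport {d : ℕ} {𝔸 : Type} [NormedRing 𝔸] [NormedAlgebra ℝ 𝔸]
    (B : Fin d → EuclideanSpace ℝ (Fin d) → 𝔸)
    (Φ : EuclideanSpace ℝ (Fin d) → EuclideanSpace ℝ (Fin d) → 𝔸) : Prop :=
  ∀ x y, ∃ p : ℝ → 𝔸, p 0 = 1 ∧ p 1 = Φ x y ∧ ∀ s ∈ Icc (0:ℝ) 1,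
    HasDerivWithinAt p (gen B y (x - y) s * p s) (Icc 0 1) s

section Transport

variable {d : ℕ} {𝔸 : Type} [NormedRing 𝔸] [NormedAlgebra ℝ 𝔸]
  {B : Fin d → EuclideanSpace ℝ (Fin d) → 𝔸}
  {Φ : EuclideanSpace ℝ (Fin d) → EuclideanSpace ℝ (Fin d) → 𝔸}

lemma contDiff_gen (hB : ∀ μ, ContDiff ℝ ∞ (B μ)) :
    ContDiff ℝ ∞ (fun q : (EuclideanSpace ℝ (Fin d) × EuclideanSpace ℝ (Fin d)) × ℝ =>
      gen B q.1.2 (q.1.1 - q.1.2) q.2) := by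
  unfold gen
  have h1 (μ : Fin d) :
      ContDiff ℝ ∞ (fun q : (EuclideanSpace ℝ (Fin d) × EuclideanSpace ℝ (Fin d)) × ℝ =>
        (q.1.1 - q.1.2) μ) :=
    contDiff_euclidean.1 (show ContDiff ℝ ∞
      (fun q : (EuclideanSpace ℝ (Fin d) × EuclideanSpace ℝ (Fin d)) × ℝ => q.1.1 - q.1.2) by
      fun_prop) μ
  have h2 (μ : Fin d) :
      ContDiff ℝ ∞ (fun q : (EuclideanSpace ℝ (Fin d) × EuclideanSpace ℝ (Fin d)) × ℝ =>
        B μ (q.1.2 + q.2 • (q.1.1 - q.1.2))) :=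
    (hB μ).comp (f := fun q : (EuclideanSpace ℝ (Fin d) × EuclideanSpace ℝ (Fin d)) × ℝ =>
      q.1.2 + q.2 • (q.1.1 - q.1.2)) (by fun_prop)
  exact (ContDiff.sum fun μ _ => (h1 μ).smul (h2 μ)).neg

lemma continuous_gen (hB : ∀ μ, ContDiff ℝ ∞ (B μ)) (y w : EuclideanSpace ℝ (Fin d)) :
    Continuous (gen B y w) := by
  unfold gen
  refine (continuous_finsetSum _ fun μ _ => ((hB μ).continuous.comp ?_).const_smul _).neg
  fun_prop

/-- Reparametrizing a line affinely rescales the generator. -/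
lemma gen_affine (y w : EuclideanSpace ℝ (Fin d)) (s c σ : ℝ) :
    gen B (y + s • w) (c • w) σ = c • gen B y w (s + σ * c) := by
  simp only [gen, smul_neg, Finset.smul_sum, smul_smul, PiLp.smul_apply, smul_eq_mul, add_smul,
    add_assoc]

/-- `Φ` transports every solution along a line from one time to another. -/
lemma IsTransport.apply_solution (hΦ : IsTransport B Φ) (hB : ∀ μ, ContDiff ℝ ∞ (B μ))
    {y w : EuclideanSpace ℝ (Fin d)} {T : ℝ} {R : ℝ → 𝔸}
    (hR : ∀ t ∈ Icc (0:ℝ) T, HasDerivWithinAt R (gen B y w t * R t) (Icc 0 T) t)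
    {s t : ℝ} (hs : s ∈ Icc (0:ℝ) T) (ht : t ∈ Icc (0:ℝ) T) :
    R t = Φ (y + t • w) (y + s • w) * R s := by
  obtain ⟨p, hp0, hp1, hp⟩ := hΦ (y + t • w) (y + s • w)
  have hw : y + t • w - (y + s • w) = (t - s) • w := by module
  rw [hw] at hp
  have hmaps : MapsTo (fun σ : ℝ => s + σ * (t - s)) (Icc 0 1) (Icc 0 T) := fun σ hσ => by
    constructor
    · nlinarith [hσ.1, hσ.2, hs.1, ht.1, mul_nonneg hσ.1 ht.1,
        mul_nonneg (sub_nonneg.2 hσ.2) hs.1]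
    · nlinarith [mul_nonneg hσ.1 (sub_nonneg.2 ht.2),
        mul_nonneg (sub_nonneg.2 hσ.2) (sub_nonneg.2 hs.2)]
  have key := eq_of_linear (c := gen B (y + s • w) ((t - s) • w))
    (f := fun σ => R (s + σ * (t - s))) (g := fun σ => p σ * R s)
    (continuous_gen hB _ _).continuousOn
    (fun σ hσ => by
      have h1 : HasDerivWithinAt (fun σ : ℝ => s + σ * (t - s)) (t - s) (Icc 0 1) σ := by
        simpa using ((hasDerivWithinAt_id σ _).mul_const (t - s)).const_add s
      have := (hR _ (hmaps hσ)).scomp σ h1 hmaps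
      rw [gen_affine, smul_mul_assoc]
      exact this)
    (fun σ hσ => by
      have := (hp σ hσ).mul_const (R s)
      rwa [mul_assoc] at this)
    (by simp [hp0])
  simpa [hp1] using key

variable [FiniteDimensional ℝ 𝔸]

/-- Transport along the line `t ↦ y + t • w` is governed by an invertible solution `R` of the
transport equation. The time interval `[0, 2]` has the endpoint `1` of the segment in its
interior. -/
lemma IsTransport.exists_frame (hΦ : IsTransport B Φ) (hB : ∀ μ, ContDiff ℝ ∞ (B μ))
    (y w : EuclideanSpace ℝ (Fin d)) :
    ∃ R S : ℝ → 𝔸, R 0 = 1 ∧ S 0 = 1 ∧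
      (∀ t ∈ Icc (0:ℝ) 2, HasDerivWithinAt R (gen B y w t * R t) (Icc 0 2) t) ∧
      (∀ t ∈ Icc (0:ℝ) 2, HasDerivWithinAt S (-(S t * gen B y w t)) (Icc 0 2) t) ∧
      (∀ t ∈ Icc (0:ℝ) 2, R t * S t = 1) ∧
      (∀ t ∈ Icc (0:ℝ) 2, S t * R t = 1) ∧
      (∀ s ∈ Icc (0:ℝ) 2, ∀ t ∈ Icc (0:ℝ) 2, Φ (y + t • w) (y + s • w) = R t * S s) := by
  obtain ⟨p, hp0, hp1, hp⟩ := hΦ (y + (2:ℝ) • w) y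
  set R : ℝ → 𝔸 := fun t => p (t / 2) with hRdef
  have hR0 : R 0 = 1 := by simp [R, hp0]
  have hR : ∀ t ∈ Icc (0:ℝ) 2, HasDerivWithinAt R (gen B y w t * R t) (Icc 0 2) t := by
    intro t ht
    have hmaps : MapsTo (fun t : ℝ => t / 2) (Icc 0 2) (Icc 0 1) := fun σ hσ =>
      ⟨by linarith [hσ.1], by linarith [hσ.2]⟩
    have h1 : HasDerivWithinAt (fun t : ℝ => t / 2) (1 / 2) (Icc 0 2) t :=
      (hasDerivWithinAt_id t _).div_const 2
    have h2 := (hp _ (hmaps ht)).scomp t h1 hmaps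
    have h3 := gen_affine (B := B) y w 0 2 (t / 2)
    rw [zero_smul, add_zero, zero_add, div_mul_cancel₀ _ two_ne_zero] at h3
    rw [add_sub_cancel_left, h3, smul_mul_assoc, smul_smul] at h2
    norm_num at h2
    exact h2
  set S : ℝ → 𝔸 := fun t => Φ y (y + t • w) with hSdef
  have h02 : (0:ℝ) ∈ Icc (0:ℝ) 2 := by simp
  have hU : ∀ s ∈ Icc (0:ℝ) 2, ∀ t ∈ Icc (0:ℝ) 2,
      R t = Φ (y + t • w) (y + s • w) * R s := fun s hs t ht => hΦ.apply_solution hB hR hs ht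
  have hSR : ∀ t ∈ Icc (0:ℝ) 2, S t * R t = 1 := fun t ht => by
    have := hU t ht 0 h02
    rw [hR0] at this
    simpa [S] using this.symm
  -- a one-sided inverse in a finite-dimensional algebra is two-sided
  have : IsNoetherianRing 𝔸 := isNoetherian_of_tower ℝ inferInstance
  have hRS : ∀ t ∈ Icc (0:ℝ) 2, R t * S t = 1 := fun t ht => mul_eq_one_symm (hSR t ht)
  have hinv : ∀ t ∈ Icc (0:ℝ) 2, S t = Ring.inverse (R t) := fun t ht =>
    (Ring.inverse_unit ⟨R t, S t, hRS t ht, hSR t ht⟩).symm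
  have : CompleteSpace 𝔸 := FiniteDimensional.complete ℝ 𝔸
  refine ⟨R, S, hR0, ?_, hR, ?_, hRS, hSR, ?_⟩
  · simpa [hR0] using hSR 0 h02
  · intro t ht
    have h1 := (hasFDerivAt_ringInverse (𝕜 := ℝ)
      (⟨R t, S t, hRS t ht, hSR t ht⟩ : 𝔸ˣ)).comp_hasDerivWithinAt t (hR t ht)
    refine (h1.congr (fun u hu => hinv u hu) (hinv t ht)).congr_deriv ?_
    simp [mul_assoc, hRS t ht]
  · intro s hs t ht
    rw [hU s hs t ht, mul_assoc, hRS s hs, mul_one]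

end Transport

/-! ### Smoothness of parallel transport -/

section Smooth

variable {d : ℕ} {𝔸 : Type} [NormedRing 𝔸] [NormedAlgebra ℝ 𝔸]
  {B : Fin d → EuclideanSpace ℝ (Fin d) → 𝔸}
  {Φ : EuclideanSpace ℝ (Fin d) → EuclideanSpace ℝ (Fin d) → 𝔸}

/-- The generator is Lipschitz in the segment, locally uniformly. -/
lemma exists_lipschitz_gen (hB : ∀ μ, ContDiff ℝ ∞ (B μ))
    (q : EuclideanSpace ℝ (Fin d) × EuclideanSpace ℝ (Fin d)) :
    ∃ L : ℝ, 0 ≤ L ∧ ∀ p ∈ Metric.closedBall q 1, ∀ r ∈ Icc (0:ℝ) 1,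
      ‖gen B p.2 (p.1 - p.2) r - gen B q.2 (q.1 - q.2) r‖ ≤ L * ‖p - q‖ := by
  obtain ⟨L, hL⟩ := (contDiff_gen hB).contDiffOn.exists_lipschitzOnWith
    (s := Metric.closedBall q 1 ×ˢ Icc (0:ℝ) 1) (by simp)
    ((convex_closedBall q 1).prod (convex_Icc 0 1))
    ((isCompact_closedBall q 1).prod isCompact_Icc)
  refine ⟨L, L.2, fun p hp r hr => ?_⟩
  have := hL.dist_le_mul (p, r) ⟨hp, hr⟩ (q, r) ⟨by simp, hr⟩
  simpa [dist_eq_norm, Prod.norm_def] using this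

/-- The derivative of the Duhamel integrand at the base segment. It involves `Φ` but no derivative
of `Φ`, which is what makes the bootstrap in `IsTransport.contDiff` possible. -/
noncomputable def duhamelD (B : Fin d → EuclideanSpace ℝ (Fin d) → 𝔸)
    (Φ : EuclideanSpace ℝ (Fin d) → EuclideanSpace ℝ (Fin d) → 𝔸)
    (x : (EuclideanSpace ℝ (Fin d) × EuclideanSpace ℝ (Fin d)) × ℝ) :
    (EuclideanSpace ℝ (Fin d) × EuclideanSpace ℝ (Fin d)) →L[ℝ] 𝔸 :=
  (ContinuousLinearMap.mul ℝ 𝔸 (Φ x.1.1 (x.1.2 + x.2 • (x.1.1 - x.1.2)))).comp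
    (((ContinuousLinearMap.mul ℝ 𝔸).flip (Φ (x.1.2 + x.2 • (x.1.1 - x.1.2)) x.1.2)).comp
      ((fderiv ℝ (fun q : (EuclideanSpace ℝ (Fin d) × EuclideanSpace ℝ (Fin d)) × ℝ =>
        gen B q.1.2 (q.1.1 - q.1.2) q.2) x).comp (ContinuousLinearMap.inl ℝ _ ℝ)))

lemma contDiff_duhamelD (hB : ∀ μ, ContDiff ℝ ∞ (B μ)) {n : ℕ}
    (h : ContDiff ℝ n
      (fun p : EuclideanSpace ℝ (Fin d) × EuclideanSpace ℝ (Fin d) => Φ p.1 p.2)) :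
    ContDiff ℝ n (duhamelD B Φ) := by
  have h1 : ContDiff ℝ n (fun x : (EuclideanSpace ℝ (Fin d) × EuclideanSpace ℝ (Fin d)) × ℝ =>
      Φ x.1.1 (x.1.2 + x.2 • (x.1.1 - x.1.2))) :=
    h.comp (f := fun x : (EuclideanSpace ℝ (Fin d) × EuclideanSpace ℝ (Fin d)) × ℝ =>
      (x.1.1, x.1.2 + x.2 • (x.1.1 - x.1.2))) (by fun_prop)
  have h2 : ContDiff ℝ n (fun x : (EuclideanSpace ℝ (Fin d) × EuclideanSpace ℝ (Fin d)) × ℝ =>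
      Φ (x.1.2 + x.2 • (x.1.1 - x.1.2)) x.1.2) :=
    h.comp (f := fun x : (EuclideanSpace ℝ (Fin d) × EuclideanSpace ℝ (Fin d)) × ℝ =>
      (x.1.2 + x.2 • (x.1.1 - x.1.2), x.1.2)) (by fun_prop)
  have h3 := ((contDiff_gen hB).of_le (m := n + 1) (by exact_mod_cast le_top)).fderiv_right
    (m := n) le_rfl
  exact ((ContinuousLinearMap.mul ℝ 𝔸).contDiff.comp h1).clm_comp
    ((((ContinuousLinearMap.mul ℝ 𝔸).flip).contDiff.comp h2).clm_comp
      (h3.clm_comp contDiff_const))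

variable [FiniteDimensional ℝ 𝔸]

/-- Duhamel's formula for the difference of two parallel transports: integrate the derivative of
`r ↦ Φ(q.1, q(r)) Φ(p(r), p.2)`, where `p(r)`, `q(r)` run along the two segments. No regularity of
`Φ` in its two arguments is presupposed. -/
lemma IsTransport.duhamel (hΦ : IsTransport B Φ) (hB : ∀ μ, ContDiff ℝ ∞ (B μ))
    (p q : EuclideanSpace ℝ (Fin d) × EuclideanSpace ℝ (Fin d)) :
    Φ p.1 p.2 - Φ q.1 q.2 = ∫ r in (0:ℝ)..1,
      Φ q.1 (q.2 + r • (q.1 - q.2)) *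
        ((gen B p.2 (p.1 - p.2) r - gen B q.2 (q.1 - q.2) r) *
          Φ (p.2 + r • (p.1 - p.2)) p.2) := by
  obtain ⟨R, S, hR0, hS0, hR, hS, hRS, hSR, hU⟩ := hΦ.exists_frame hB p.2 (p.1 - p.2)
  obtain ⟨R', S', hR'0, hS'0, hR', hS', hRS', hSR', hU'⟩ := hΦ.exists_frame hB q.2 (q.1 - q.2)
  have hsub : Icc (0:ℝ) 1 ⊆ Icc 0 2 := Icc_subset_Icc_right one_le_two
  have hcR : ContinuousOn R (Icc 0 1) := fun t ht =>
    ((hR t (hsub ht)).mono hsub).continuousWithinAt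
  have hcS : ContinuousOn S' (Icc 0 1) := fun t ht =>
    ((hS' t (hsub ht)).mono hsub).continuousWithinAt
  have hg := (continuous_gen hB p.2 (p.1 - p.2)).sub (continuous_gen hB q.2 (q.1 - q.2))
  have : CompleteSpace 𝔸 := FiniteDimensional.complete ℝ 𝔸
  have hftc := intervalIntegral.integral_eq_sub_of_hasDeriv_right_of_le (a := 0) (b := 1)
    (f := fun r => R' 1 * S' r * R r)
    (f' := fun r => R' 1 * S' r *
        ((gen B p.2 (p.1 - p.2) r - gen B q.2 (q.1 - q.2) r) * R r)) zero_le_one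
    ((continuousOn_const.mul hcS).mul hcR)
    (fun r hr => by
      have hr2 : r ∈ Ioo (0:ℝ) 2 := ⟨hr.1, hr.2.trans one_lt_two⟩
      have h1 := (hS' r (Ioo_subset_Icc_self hr2)).hasDerivAt (Icc_mem_nhds hr2.1 hr2.2)
      have h2 := (hR r (Ioo_subset_Icc_self hr2)).hasDerivAt (Icc_mem_nhds hr2.1 hr2.2)
      refine (((h1.const_mul (R' 1)).mul h2).congr_deriv ?_).hasDerivWithinAt
      noncomm_ring)
    (ContinuousOn.intervalIntegrable (by
      rw [uIcc_of_le zero_le_one]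
      exact (continuousOn_const.mul hcS).mul (hg.continuousOn.mul hcR)))
  have h1 : (1:ℝ) ∈ Icc (0:ℝ) 2 := by norm_num
  have h0 : (0:ℝ) ∈ Icc (0:ℝ) 2 := by norm_num
  have hp := hU 0 h0 1 h1
  have hq := hU' 0 h0 1 h1
  simp only [one_smul, add_sub_cancel, zero_smul, add_zero, hS0, hS'0, mul_one] at hp hq
  rw [hRS' 1 h1, one_mul, hS'0, mul_one, hR0, mul_one, ← hp, ← hq] at hftc
  rw [← hftc]
  refine intervalIntegral.integral_congr fun r hr => ?_
  rw [uIcc_of_le zero_le_one] at hr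
  have e1 := hU' r (hsub hr) 1 h1
  have e2 := hU 0 h0 r (hsub hr)
  simp only [one_smul, add_sub_cancel, zero_smul, add_zero, hS0, mul_one] at e1 e2
  simp only [e1, e2, hq]

/-- Transport along initial pieces of segments is bounded, locally uniformly in the segment. -/
lemma IsTransport.exists_bound (hΦ : IsTransport B Φ) (hB : ∀ μ, ContDiff ℝ ∞ (B μ))
    (q : EuclideanSpace ℝ (Fin d) × EuclideanSpace ℝ (Fin d)) :
    ∃ M, ∀ p ∈ Metric.closedBall q 1, ∀ r ∈ Icc (0:ℝ) 1,
      ‖Φ (p.2 + r • (p.1 - p.2)) p.2‖ ≤ M := by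
  obtain ⟨K, hK⟩ := ((isCompact_closedBall q 1).prod
      (isCompact_Icc (a := (0:ℝ)) (b := 1))).exists_bound_of_continuousOn
      (contDiff_gen hB).continuous.continuousOn
  have hK0 : 0 ≤ K := (norm_nonneg _).trans (hK (q, 0) ⟨by simp, by simp⟩)
  refine ⟨‖(1 : 𝔸)‖ * Real.exp K, fun p hp r hr => ?_⟩
  obtain ⟨R, S, hR0, hS0, hR, hS, hRS, hSR, hU⟩ := hΦ.exists_frame hB p.2 (p.1 - p.2)
  have hsub : Icc (0:ℝ) 1 ⊆ Icc 0 2 := Icc_subset_Icc_right one_le_two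
  have := norm_le_of_linear (fun s hs => (hR s (hsub hs)).mono hsub)
    (fun s hs => hK (p, s) ⟨hp, hs⟩) r hr
  have e2 := hU 0 (by simp) r (hsub hr)
  simp only [zero_smul, add_zero, hS0, mul_one] at e2
  rw [e2]
  refine this.trans ?_
  rw [hR0]
  gcongr
  exact mul_le_of_le_one_right hK0 hr.2

/-- Transport along final pieces of a fixed segment is bounded. -/
lemma IsTransport.exists_bound' (hΦ : IsTransport B Φ) (hB : ∀ μ, ContDiff ℝ ∞ (B μ))
    (q : EuclideanSpace ℝ (Fin d) × EuclideanSpace ℝ (Fin d)) :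
    ∃ M, ∀ r ∈ Icc (0:ℝ) 1, ‖Φ q.1 (q.2 + r • (q.1 - q.2))‖ ≤ M := by
  obtain ⟨R, S, hR0, hS0, hR, hS, hRS, hSR, hU⟩ := hΦ.exists_frame hB q.2 (q.1 - q.2)
  have hsub : Icc (0:ℝ) 1 ⊆ Icc 0 2 := Icc_subset_Icc_right one_le_two
  have hcS : ContinuousOn (fun r => R 1 * S r) (Icc 0 1) := fun t ht =>
    (((hS t (hsub ht)).mono hsub).const_mul (R 1)).continuousWithinAt
  obtain ⟨M, hM⟩ := isCompact_Icc.exists_bound_of_continuousOn hcS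
  refine ⟨M, fun r hr => ?_⟩
  have e1 := hU r (hsub hr) 1 (by norm_num)
  simp only [one_smul, add_sub_cancel] at e1
  rw [e1]
  exact hM r hr

lemma IsTransport.exists_integrand_bound (hΦ : IsTransport B Φ) (hB : ∀ μ, ContDiff ℝ ∞ (B μ))
    (q : EuclideanSpace ℝ (Fin d) × EuclideanSpace ℝ (Fin d)) :
    ∃ M, ∀ p ∈ Metric.closedBall q 1, ∀ r ∈ Icc (0:ℝ) 1,
      ‖Φ q.1 (q.2 + r • (q.1 - q.2)) *
        ((gen B p.2 (p.1 - p.2) r - gen B q.2 (q.1 - q.2) r) *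
          Φ (p.2 + r • (p.1 - p.2)) p.2)‖ ≤ M * ‖p - q‖ := by
  obtain ⟨M, hM⟩ := hΦ.exists_bound hB q
  obtain ⟨N, hN⟩ := hΦ.exists_bound' hB q
  obtain ⟨L, hL0, hL⟩ := exists_lipschitz_gen hB q
  refine ⟨N * (L * M), fun p hp r hr => ?_⟩
  have h1 := hM p hp r hr
  have h2 := hN r hr
  have h3 := hL p hp r hr
  have hN0 : 0 ≤ N := (norm_nonneg _).trans h2
  calc _ ≤ ‖Φ q.1 (q.2 + r • (q.1 - q.2))‖ *
        (‖gen B p.2 (p.1 - p.2) r - gen B q.2 (q.1 - q.2) r‖ *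
          ‖Φ (p.2 + r • (p.1 - p.2)) p.2‖) :=
        (norm_mul_le _ _).trans (by gcongr; exact norm_mul_le _ _)
    _ ≤ N * ((L * ‖p - q‖) * M) := by gcongr
    _ = _ := by ring

lemma IsTransport.continuous (hΦ : IsTransport B Φ) (hB : ∀ μ, ContDiff ℝ ∞ (B μ)) :
    Continuous (fun p : EuclideanSpace ℝ (Fin d) × EuclideanSpace ℝ (Fin d) => Φ p.1 p.2) := by
  rw [continuous_iff_continuousAt]
  intro q
  obtain ⟨M, hM⟩ := hΦ.exists_integrand_bound hB q
  rw [ContinuousAt, tendsto_iff_norm_sub_tendsto_zero]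
  have hlim : Tendsto (fun p => M * ‖p - q‖) (𝓝 q) (𝓝 0) := by
    have : Continuous fun p => M * ‖p - q‖ := by fun_prop
    simpa using this.tendsto q
  refine tendsto_of_tendsto_of_tendsto_of_le_of_le' tendsto_const_nhds hlim
    (Eventually.of_forall fun _ => norm_nonneg _) ?_
  filter_upwards [Metric.closedBall_mem_nhds q one_pos] with p hp
  rw [hΦ.duhamel hB p q]
  have := intervalIntegral.norm_integral_le_of_norm_le_const (a := 0) (b := 1)
    (C := M * ‖p - q‖) (f := fun r => Φ q.1 (q.2 + r • (q.1 - q.2)) *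
        ((gen B p.2 (p.1 - p.2) r - gen B q.2 (q.1 - q.2) r) *
          Φ (p.2 + r • (p.1 - p.2)) p.2)) (fun r hr => by
      rw [uIoc_of_le zero_le_one] at hr
      exact hM p hp r ⟨hr.1.le, hr.2⟩)
  simpa using this

/-- The derivative of `Φ`, from Duhamel's formula. The factor `gen` at `p` minus `gen` at `q`
vanishes at `p = q`, so continuity of the remaining factor suffices to differentiate there. -/
lemma IsTransport.hasFDerivAt (hΦ : IsTransport B Φ) (hB : ∀ μ, ContDiff ℝ ∞ (B μ))
    (q : EuclideanSpace ℝ (Fin d) × EuclideanSpace ℝ (Fin d)) :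
    HasFDerivAt (fun p : EuclideanSpace ℝ (Fin d) × EuclideanSpace ℝ (Fin d) => Φ p.1 p.2)
      (∫ r in (0:ℝ)..1, duhamelD B Φ (q, r)) q := by
  have hc := hΦ.continuous hB
  have hD : Continuous (duhamelD B Φ) :=
    (contDiff_duhamelD hB (n := 0) (by simpa using hc)).continuous
  have hg := (contDiff_gen hB).continuous
  obtain ⟨M, hM⟩ := hΦ.exists_integrand_bound hB q
  set F : EuclideanSpace ℝ (Fin d) × EuclideanSpace ℝ (Fin d) → ℝ → 𝔸 := fun p r =>
    Φ q.1 (q.2 + r • (q.1 - q.2)) *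
        ((gen B p.2 (p.1 - p.2) r - gen B q.2 (q.1 - q.2) r) *
          Φ (p.2 + r • (p.1 - p.2)) p.2) with hF
  have hFc : ∀ p, Continuous (F p) := fun p => by
    have e1 : Continuous fun r : ℝ => Φ q.1 (q.2 + r • (q.1 - q.2)) :=
      hc.comp (f := fun r : ℝ => (q.1, q.2 + r • (q.1 - q.2))) (by fun_prop)
    have e2 : Continuous fun r : ℝ => Φ (p.2 + r • (p.1 - p.2)) p.2 :=
      hc.comp (f := fun r : ℝ => (p.2 + r • (p.1 - p.2), p.2)) (by fun_prop)
    exact e1.mul (((continuous_gen hB _ _).sub (continuous_gen hB _ _)).mul e2)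
  have hmain : HasFDerivAt (fun p => ∫ r in Ioc (0:ℝ) 1, F p r)
      (∫ r in Ioc (0:ℝ) 1, duhamelD B Φ (q, r)) q := by
    refine (hasFDerivAt_integral_of_dominated_loc_of_lip' (bound := fun _ => M)
      (Metric.closedBall_mem_nhds q one_pos) ?_ ?_ ?_ ?_ ?_ ?_).2
    · exact fun p _ => (hFc p).aestronglyMeasurable
    · exact ((hFc q).integrableOn_Icc).mono_set Ioc_subset_Icc_self
    · exact (hD.comp (Continuous.prodMk_right q)).aestronglyMeasurable
    · refine (ae_restrict_iff' measurableSet_Ioc).2 (Eventually.of_forall fun r hr p hp => ?_)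
      have := hM p hp r ⟨hr.1.le, hr.2⟩
      simpa [F] using this
    · simp
    · refine Eventually.of_forall fun r => ?_
      have e1 : HasFDerivAt (fun p : EuclideanSpace ℝ (Fin d) × EuclideanSpace ℝ (Fin d) =>
          gen B p.2 (p.1 - p.2) r - gen B q.2 (q.1 - q.2) r)
          ((fderiv ℝ (fun q : (EuclideanSpace ℝ (Fin d) × EuclideanSpace ℝ (Fin d)) × ℝ =>
            gen B q.1.2 (q.1.1 - q.1.2) q.2) (q, r)).comp (ContinuousLinearMap.inl ℝ _ ℝ)) q :=
        HasFDerivAt.sub_const _ (HasFDerivAt.comp q (f := fun p => (p, r))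
          (((contDiff_gen hB).differentiable (by simp) (q, r)).hasFDerivAt)
          (hasFDerivAt_prodMk_left q r))
      have e2 : Continuous fun p : EuclideanSpace ℝ (Fin d) × EuclideanSpace ℝ (Fin d) =>
          Φ (p.2 + r • (p.1 - p.2)) p.2 :=
        hc.comp (f := fun p : EuclideanSpace ℝ (Fin d) × EuclideanSpace ℝ (Fin d) =>
          (p.2 + r • (p.1 - p.2), p.2)) (by fun_prop)
      exact (ContinuousLinearMap.mul ℝ 𝔸 (Φ q.1 (q.2 + r • (q.1 - q.2)))).hasFDerivAt.comp q
        (hasFDerivAt_mul_of_zero e1 (by simp) e2.continuousAt)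
  rw [intervalIntegral.integral_of_le zero_le_one]
  refine (hmain.add_const (Φ q.1 q.2)).congr_of_eventuallyEq (Eventually.of_forall fun p => ?_)
  have := hΦ.duhamel hB p q
  rw [intervalIntegral.integral_of_le zero_le_one] at this
  exact sub_eq_iff_eq_add.1 this

/-- Smoothness of the path-ordered exponential in both endpoints: the derivative formula expresses
`DΦ` through `Φ` itself, so `C^n` regularity improves to `C^(n+1)`. -/
lemma IsTransport.contDiff (hΦ : IsTransport B Φ) (hB : ∀ μ, ContDiff ℝ ∞ (B μ)) :
    ContDiff ℝ ∞ (fun p : EuclideanSpace ℝ (Fin d) × EuclideanSpace ℝ (Fin d) => Φ p.1 p.2) := by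
  have : CompleteSpace 𝔸 := FiniteDimensional.complete ℝ 𝔸
  refine contDiff_infty.2 fun n => ?_
  induction n with
  | zero => simpa using hΦ.continuous hB
  | succ n ih =>
    rw [Nat.cast_add, Nat.cast_one, contDiff_succ_iff_hasFDerivAt]
    exact ⟨_, contDiff_param_nat n (contDiff_duhamelD hB ih), hΦ.hasFDerivAt hB⟩

end Smooth

/-! ### The recurrence in a finite-dimensional normed algebra -/

section Abstract

variable {d : ℕ} {𝔸 : Type} [NormedRing 𝔸] [NormedAlgebra ℝ 𝔸]

/-- The covariant derivative `∂_μ h + B_μ h` with values in a normed algebra. -/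
noncomputable def gcovD (B : Fin d → EuclideanSpace ℝ (Fin d) → 𝔸) (μ : Fin d)
    (h : EuclideanSpace ℝ (Fin d) → 𝔸) : EuclideanSpace ℝ (Fin d) → 𝔸 :=
  fun x => fderiv ℝ h x (EuclideanSpace.single μ 1) + B μ x * h x

/-- The operator `lapA` with values in a normed algebra. -/
noncomputable def glapA (B : Fin d → EuclideanSpace ℝ (Fin d) → 𝔸)
    (v h : EuclideanSpace ℝ (Fin d) → 𝔸) : EuclideanSpace ℝ (Fin d) → 𝔸 :=
  fun x => -∑ μ, gcovD B μ (gcovD B μ h) x - v x * h x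

/-- The coefficients `acoef` with values in a normed algebra. -/
noncomputable def gcoef (B : Fin d → EuclideanSpace ℝ (Fin d) → 𝔸)
    (v : EuclideanSpace ℝ (Fin d) → 𝔸)
    (Φ : EuclideanSpace ℝ (Fin d) → EuclideanSpace ℝ (Fin d) → 𝔸) :
    ℕ → EuclideanSpace ℝ (Fin d) → EuclideanSpace ℝ (Fin d) → 𝔸
  | 0 => fun x y => Φ x y
  | n + 1 => fun x y =>
      -∫ s in (0:ℝ)..1, s ^ n •
        (Φ x (y + s • (x - y)) *
          glapA B v (fun x' => gcoef B v Φ n x' y) (y + s • (x - y)))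

variable {B : Fin d → EuclideanSpace ℝ (Fin d) → 𝔸} {v : EuclideanSpace ℝ (Fin d) → 𝔸}
  {Φ : EuclideanSpace ℝ (Fin d) → EuclideanSpace ℝ (Fin d) → 𝔸}

lemma contDiff_gcovD (hB : ∀ μ, ContDiff ℝ ∞ (B μ)) (μ : Fin d)
    {g : EuclideanSpace ℝ (Fin d) → EuclideanSpace ℝ (Fin d) → 𝔸}
    (hg : ContDiff ℝ ∞
      (fun p : EuclideanSpace ℝ (Fin d) × EuclideanSpace ℝ (Fin d) => g p.1 p.2)) :
    ContDiff ℝ ∞ (fun p : EuclideanSpace ℝ (Fin d) × EuclideanSpace ℝ (Fin d) =>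
      gcovD B μ (fun x' => g x' p.2) p.1) := by
  have h1 : ∀ p : EuclideanSpace ℝ (Fin d) × EuclideanSpace ℝ (Fin d),
      fderiv ℝ (fun x' => g x' p.2) p.1 (EuclideanSpace.single μ 1) =
      fderiv ℝ (fun p : EuclideanSpace ℝ (Fin d) × EuclideanSpace ℝ (Fin d) => g p.1 p.2) p
        (EuclideanSpace.single μ 1, 0) := fun p => by
    have := HasFDerivAt.comp p.1 (f := fun x => (x, p.2))
      (hg.differentiable (by simp) (p.1, p.2)).hasFDerivAt (hasFDerivAt_prodMk_left p.1 p.2)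
    have h := this.fderiv
    simp only [Function.comp_def] at h
    rw [h]
    simp
  simp only [gcovD, h1]
  exact ((hg.fderiv_right (m := ∞) (by simp)).clm_apply contDiff_const).add
    (((hB μ).comp contDiff_fst).mul hg)

lemma contDiff_glapA (hB : ∀ μ, ContDiff ℝ ∞ (B μ)) (hv : ContDiff ℝ ∞ v)
    {g : EuclideanSpace ℝ (Fin d) → EuclideanSpace ℝ (Fin d) → 𝔸}
    (hg : ContDiff ℝ ∞
      (fun p : EuclideanSpace ℝ (Fin d) × EuclideanSpace ℝ (Fin d) => g p.1 p.2)) :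
    ContDiff ℝ ∞ (fun p : EuclideanSpace ℝ (Fin d) × EuclideanSpace ℝ (Fin d) =>
      glapA B v (fun x' => g x' p.2) p.1) := by
  unfold glapA
  refine (ContDiff.sum fun μ _ => ?_).neg.sub ((hv.comp contDiff_fst).mul hg)
  exact contDiff_gcovD hB μ (g := fun x y => gcovD B μ (fun x' => g x' y) x)
    (contDiff_gcovD hB μ hg)

/-- The radial covariant derivative is a directional derivative corrected by the generator of
parallel transport at the endpoint of the segment. -/
lemma sum_gcovD (h : EuclideanSpace ℝ (Fin d) → 𝔸) (x y : EuclideanSpace ℝ (Fin d)) :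
    ∑ μ, (x μ - y μ) • gcovD B μ h x =
      fderiv ℝ h x (x - y) - gen B y (x - y) 1 * h x := by
  have hw : x - y = ∑ μ, (x μ - y μ) • EuclideanSpace.single μ (1:ℝ) := by
    simpa using ((EuclideanSpace.basisFun (Fin d) ℝ).sum_repr (x - y)).symm
  have h1 : fderiv ℝ h x (x - y) =
      ∑ μ, (x μ - y μ) • fderiv ℝ h x (EuclideanSpace.single μ 1) := by
    conv_lhs => rw [hw]
    simp only [map_sum, map_smul]
  rw [h1]
  simp [gcovD, gen, smul_add, Finset.sum_add_distrib, Finset.sum_mul]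

variable [FiniteDimensional ℝ 𝔸]

lemma contDiff_gcoef (hΦ : IsTransport B Φ) (hB : ∀ μ, ContDiff ℝ ∞ (B μ))
    (hv : ContDiff ℝ ∞ v) (n : ℕ) :
    ContDiff ℝ ∞ (fun p : EuclideanSpace ℝ (Fin d) × EuclideanSpace ℝ (Fin d) =>
      gcoef B v Φ n p.1 p.2) := by
  have : CompleteSpace 𝔸 := FiniteDimensional.complete ℝ 𝔸
  induction n with
  | zero => exact hΦ.contDiff hB
  | succ n ih =>
    simp only [gcoef]
    have h1 : ContDiff ℝ ∞ (fun x : (EuclideanSpace ℝ (Fin d) × EuclideanSpace ℝ (Fin d)) × ℝ =>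
        Φ x.1.1 (x.1.2 + x.2 • (x.1.1 - x.1.2))) :=
      (hΦ.contDiff hB).comp
        (f := fun x : (EuclideanSpace ℝ (Fin d) × EuclideanSpace ℝ (Fin d)) × ℝ =>
        (x.1.1, x.1.2 + x.2 • (x.1.1 - x.1.2))) (by fun_prop)
    have h2 : ContDiff ℝ ∞ (fun x : (EuclideanSpace ℝ (Fin d) × EuclideanSpace ℝ (Fin d)) × ℝ =>
        glapA B v (fun x' => gcoef B v Φ n x' x.1.2) (x.1.2 + x.2 • (x.1.1 - x.1.2))) :=
      (contDiff_glapA hB hv ih).comp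
        (f := fun x : (EuclideanSpace ℝ (Fin d) × EuclideanSpace ℝ (Fin d)) × ℝ =>
        (x.1.2 + x.2 • (x.1.1 - x.1.2), x.1.2)) (by fun_prop)
    exact (contDiff_param ((contDiff_snd.pow n).smul (h1.mul h2))).neg

/-- The derivative along the ray through `y` and `x` of a smooth function, as an ordinary
derivative at time one. -/
lemma hasDerivAt_ray {E F : Type} [NormedAddCommGroup E] [NormedSpace ℝ E]
    [NormedAddCommGroup F] [NormedSpace ℝ F] {h : E → F} {x y : E}
    (hh : DifferentiableAt ℝ h x) :
    HasDerivAt (fun t : ℝ => h (y + t • (x - y))) (fderiv ℝ h x (x - y)) 1 := by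
  have hx : y + (1:ℝ) • (x - y) = x := by simp
  have h1 : HasDerivAt (fun t : ℝ => y + t • (x - y)) (x - y) 1 := by
    simpa using ((hasDerivAt_id (1:ℝ)).smul_const (x - y)).const_add y
  rw [← hx] at hh
  have := hh.hasFDerivAt.comp_hasDerivAt (1:ℝ) h1
  rwa [hx] at this

/-- Along a ray from `y`, `Φ(·, y)` is the solution `R` of the transport equation. -/
lemma gcoef_zero (hΦ : IsTransport B Φ) (hB : ∀ μ, ContDiff ℝ ∞ (B μ))
    (x y : EuclideanSpace ℝ (Fin d)) :
    ∑ μ, (x μ - y μ) • gcovD B μ (fun x' => Φ x' y) x = 0 := by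
  obtain ⟨R, S, hR0, hS0, hR, hS, hRS, hSR, hU⟩ := hΦ.exists_frame hB y (x - y)
  have hd : Differentiable ℝ (fun x' => Φ x' y) := fun z =>
    ((hΦ.contDiff hB).differentiable (by simp) (z, y)).comp z (f := fun z => (z, y)) (by fun_prop)
  have h1 := hasDerivAt_ray (y := y) (hd x)
  have h2 := (hR 1 (by norm_num)).hasDerivAt (Icc_mem_nhds one_pos one_lt_two)
  have hUR : ∀ t ∈ Icc (0:ℝ) 2, Φ (y + t • (x - y)) y = R t := fun t ht => by
    simpa [hS0] using hU 0 (by simp) t ht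
  have heq : (fun t : ℝ => Φ (y + t • (x - y)) y) =ᶠ[𝓝 1] R := by
    filter_upwards [Icc_mem_nhds one_pos one_lt_two] with t ht using hUR t ht
  have hR1 : R 1 = Φ x y := by simpa using (hUR 1 (by norm_num)).symm
  rw [sum_gcovD, h1.unique (h2.congr_of_eventuallyEq heq), hR1, sub_self]

set_option maxHeartbeats 1000000 in
/-- The recurrence: along the ray `t ↦ y + t • (x - y)` the substitution `u = t s` gives
`t ^ (n + 1) • a_{n + 1} = -(R t * ∫ u in 0..t, u ^ n • R(u)⁻¹ G(u))` with `G` the operator applied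
to `a_n`; differentiate at `t = 1`. -/
lemma gcoef_succ (hΦ : IsTransport B Φ) (hB : ∀ μ, ContDiff ℝ ∞ (B μ))
    (hv : ContDiff ℝ ∞ v) (n : ℕ) (x y : EuclideanSpace ℝ (Fin d)) :
    ((n : ℝ) + 1) • gcoef B v Φ (n + 1) x y
        + ∑ μ, (x μ - y μ) • gcovD B μ (fun x' => gcoef B v Φ (n + 1) x' y) x
      = -glapA B v (fun x' => gcoef B v Φ n x' y) x := by
  have : CompleteSpace 𝔸 := FiniteDimensional.complete ℝ 𝔸
  obtain ⟨R, S, hR0, hS0, hR, hS, hRS, hSR, hU⟩ := hΦ.exists_frame hB y (x - y)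
  have hd : Differentiable ℝ (fun x' => gcoef B v Φ (n + 1) x' y) := fun z =>
    ((contDiff_gcoef hΦ hB hv (n + 1)).differentiable (by simp) (z, y)).comp z
      (f := fun z => (z, y)) (by fun_prop)
  set G : EuclideanSpace ℝ (Fin d) → 𝔸 := glapA B v (fun x' => gcoef B v Φ n x' y) with hG
  have hGc : Continuous G :=
    (contDiff_glapA hB hv (contDiff_gcoef hΦ hB hv n)).continuous.comp (Continuous.prodMk_left y)
  -- the integrand pulled back to the initial point `y`, with no dependence on the endpoint
  set k : ℝ → 𝔸 := fun u => u ^ n • (Φ y (y + u • (x - y)) * G (y + u • (x - y))) with hk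
  have hkc : Continuous k := by
    have e1 : Continuous fun u : ℝ => Φ y (y + u • (x - y)) :=
      (hΦ.continuous hB).comp (f := fun u : ℝ => (y, y + u • (x - y))) (by fun_prop)
    have e2 : Continuous fun u : ℝ => G (y + u • (x - y)) := hGc.comp (by fun_prop)
    exact (continuous_pow n).smul (e1.mul e2)
  have hS' : ∀ u ∈ Icc (0:ℝ) 2, Φ y (y + u • (x - y)) = S u := fun u hu => by
    simpa [hR0] using hU u hu 0 (by simp)
  have hray : ∀ t ∈ Icc (0:ℝ) 2, t ^ (n + 1) • gcoef B v Φ (n + 1) (y + t • (x - y)) y =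
      -(R t * ∫ u in (0:ℝ)..t, k u) := fun t ht => by
    have hsub := intervalIntegral.smul_integral_comp_mul_left (a := 0) (b := 1) k t
    rw [mul_zero, mul_one] at hsub
    simp only [gcoef, smul_neg]
    have hcomm := (ContinuousLinearMap.mul ℝ 𝔸 (R t)).intervalIntegral_comp_comm
      ((hkc.comp (continuous_const_mul t)).intervalIntegrable (μ := volume) 0 1)
    simp only [ContinuousLinearMap.mul_apply', Function.comp_apply] at hcomm
    rw [← hsub, mul_smul_comm, pow_succ', mul_smul, ← intervalIntegral.integral_smul, ← hcomm]
    congr 2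
    refine intervalIntegral.integral_congr fun s hs => ?_
    rw [uIcc_of_le zero_le_one] at hs
    have hst : t * s ∈ Icc (0:ℝ) 2 :=
      ⟨mul_nonneg ht.1 hs.1, (mul_le_of_le_one_right ht.1 hs.2).trans ht.2⟩
    have e : y + s • (y + t • (x - y) - y) = y + (t * s) • (x - y) := by
      rw [add_sub_cancel_left, smul_smul, mul_comm]
    simp only [k, e, hS' _ hst, hU _ hst t ht, ← hG]
    rw [smul_smul, mul_smul_comm, mul_pow, mul_assoc]
  have h1 := ((hasDerivAt_pow (n + 1) (1:ℝ)).smul (hasDerivAt_ray (y := y) (hd x)))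
  have hR1 := (hR 1 (by norm_num)).hasDerivAt (Icc_mem_nhds one_pos one_lt_two)
  have hJ := intervalIntegral.integral_hasDerivAt_right (hkc.intervalIntegrable 0 1)
    (hkc.stronglyMeasurableAtFilter _ _) hkc.continuousAt
  have h2 := (hR1.mul hJ).neg
  have heq : (fun t : ℝ => t ^ (n + 1) • gcoef B v Φ (n + 1) (y + t • (x - y)) y) =ᶠ[𝓝 1]
      fun t => -(R t * ∫ u in (0:ℝ)..t, k u) := by
    filter_upwards [Icc_mem_nhds one_pos one_lt_two] with t ht using hray t ht
  have hmain := h1.unique (h2.congr_of_eventuallyEq heq)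
  have hval := hray 1 (by norm_num)
  have hk1 : R 1 * k 1 = G x := by
    simp only [k]
    rw [hS' 1 (by norm_num), one_pow, one_smul, ← mul_assoc, hRS 1 (by norm_num)]
    simp
  simp only [one_pow, one_smul, add_sub_cancel, Nat.cast_add, Nat.cast_one, mul_one] at hmain hval
  rw [sum_gcovD, hval, mul_neg, ← mul_assoc, sub_neg_eq_add, ← hval]
  rw [hk1] at hmain
  have h3 := congrArg (· + gen B y (x - y) 1 * R 1 * ∫ u in (0:ℝ)..1, k u) hmain
  simp only at h3
  rw [← sub_eq_zero] at h3 ⊢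
  rw [← h3]
  abel

end Abstract

/-! ### Transfer to matrices -/

/-- Matrices with the `ℓ^∞` operator norm. The elementwise sup norm is not submultiplicative, so
normed-algebra calculus is carried out in this copy. -/
def OpMat (m : ℕ) : Type := Matrix (Fin m) (Fin m) ℂ

noncomputable instance (m : ℕ) : NormedRing (OpMat m) :=
  Matrix.linftyOpNormedRing (n := Fin m) (α := ℂ)

noncomputable instance (m : ℕ) : NormedAlgebra ℝ (OpMat m) :=
  Matrix.linftyOpNormedAlgebra (R := ℝ) (n := Fin m) (α := ℂ)

instance (m : ℕ) : FiniteDimensional ℝ (OpMat m) :=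
  inferInstanceAs (FiniteDimensional ℝ (Matrix (Fin m) (Fin m) ℂ))

/-- The identity from matrices to `OpMat m`, as a plain function. -/
def toOp {m : ℕ} (A : Matrix (Fin m) (Fin m) ℂ) : OpMat m := A

lemma toOp_injective {m : ℕ} : Function.Injective (toOp (m := m)) := fun _ _ h => h

lemma toOp_zero {m : ℕ} : toOp (0 : Matrix (Fin m) (Fin m) ℂ) = 0 := rfl

lemma toOp_one {m : ℕ} : toOp (1 : Matrix (Fin m) (Fin m) ℂ) = 1 := rfl

lemma toOp_mul {m : ℕ} (A C : Matrix (Fin m) (Fin m) ℂ) : toOp (A * C) = toOp A * toOp C := rfl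

lemma toOp_add {m : ℕ} (A C : Matrix (Fin m) (Fin m) ℂ) : toOp (A + C) = toOp A + toOp C := rfl

lemma toOp_sub {m : ℕ} (A C : Matrix (Fin m) (Fin m) ℂ) : toOp (A - C) = toOp A - toOp C := rfl

lemma toOp_neg {m : ℕ} (A : Matrix (Fin m) (Fin m) ℂ) : toOp (-A) = -toOp A := rfl

lemma toOp_smul {m : ℕ} (c : ℝ) (A : Matrix (Fin m) (Fin m) ℂ) :
    toOp (c • A) = c • toOp A := rfl

section Transfer

variable {M 𝔸 : Type} [NormedAddCommGroup M] [NormedSpace ℝ M] [NormedAddCommGroup 𝔸]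
  [NormedSpace ℝ 𝔸] {E : Type} [NormedAddCommGroup E] [NormedSpace ℝ E]

lemma equiv_fderiv (e : M ≃L[ℝ] 𝔸) (h : E → M) (x w : E) :
    e (fderiv ℝ h x w) = fderiv ℝ (fun x => e (h x)) x w := by
  have := e.comp_fderiv (f := h) (x := x)
  simp only [Function.comp_def] at this
  rw [this]
  rfl

lemma equiv_intervalIntegral (e : M ≃L[ℝ] 𝔸) (h : ℝ → M) (a b : ℝ) :
    e (∫ s in a..b, h s) = ∫ s in a..b, e (h s) := by
  simp only [intervalIntegral, map_sub, ContinuousLinearEquiv.integral_comp_comm]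

lemma equiv_contDiff (e : M ≃L[ℝ] 𝔸) {n : WithTop ℕ∞} {h : E → M} :
    ContDiff ℝ n (fun x => e (h x)) ↔ ContDiff ℝ n h :=
  e.comp_contDiff_iff

lemma equiv_hasDerivWithinAt (e : M ≃L[ℝ] 𝔸) {h : ℝ → M} {h' : M} {s : Set ℝ} {t : ℝ}
    (hh : HasDerivWithinAt h h' s t) : HasDerivWithinAt (fun x => e (h x)) (e h') s t :=
  e.toContinuousLinearMap.hasFDerivAt.comp_hasDerivWithinAt t hh

end Transfer

section Matrix

variable {d m : ℕ}

/-- All norms on a finite-dimensional space are equivalent, so the identity from matrices with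
the sup norm to matrices with the operator norm is bicontinuous. -/
noncomputable def toOpL (m : ℕ) : Matrix (Fin m) (Fin m) ℂ ≃L[ℝ] OpMat m :=
  LinearEquiv.toContinuousLinearEquiv
    { toFun := fun A => A
      invFun := fun A => A
      map_add' := fun _ _ => rfl
      map_smul' := fun _ _ => rfl
      left_inv := fun _ => rfl
      right_inv := fun _ => rfl }

lemma toOp_sum {ι : Type} (s : Finset ι) (f : ι → Matrix (Fin m) (Fin m) ℂ) :
    toOp (∑ i ∈ s, f i) = ∑ i ∈ s, toOp (f i) := map_sum (toOpL m) f s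

lemma toOp_fderiv {E : Type} [NormedAddCommGroup E] [NormedSpace ℝ E]
    (h : E → Matrix (Fin m) (Fin m) ℂ) (x w : E) :
    toOp (fderiv ℝ h x w) = fderiv ℝ (fun x => toOp (h x)) x w :=
  equiv_fderiv (toOpL m) h x w

lemma toOp_intervalIntegral (h : ℝ → Matrix (Fin m) (Fin m) ℂ) (a b : ℝ) :
    toOp (∫ s in a..b, h s) = ∫ s in a..b, toOp (h s) :=
  equiv_intervalIntegral (toOpL m) h a b

lemma toOp_contDiff {E : Type} [NormedAddCommGroup E] [NormedSpace ℝ E] {n : WithTop ℕ∞}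
    {h : E → Matrix (Fin m) (Fin m) ℂ} :
    ContDiff ℝ n (fun x => toOp (h x)) ↔ ContDiff ℝ n h :=
  equiv_contDiff (toOpL m)

lemma toOp_hasDerivWithinAt {h : ℝ → Matrix (Fin m) (Fin m) ℂ} {h' : Matrix (Fin m) (Fin m) ℂ}
    {s : Set ℝ} {t : ℝ} (hh : HasDerivWithinAt h h' s t) :
    HasDerivWithinAt (fun x => toOp (h x)) (toOp h') s t :=
  equiv_hasDerivWithinAt (toOpL m) hh

variable (B : Fin d → EuclideanSpace ℝ (Fin d) → Matrix (Fin m) (Fin m) ℂ)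
  (v : EuclideanSpace ℝ (Fin d) → Matrix (Fin m) (Fin m) ℂ)

lemma toOp_covD (μ : Fin d) (h : EuclideanSpace ℝ (Fin d) → Matrix (Fin m) (Fin m) ℂ)
    (x : EuclideanSpace ℝ (Fin d)) :
    toOp (covD B μ h x) = gcovD (fun μ x => toOp (B μ x)) μ (fun x => toOp (h x)) x := by
  rw [covD, gcovD, toOp_add, toOp_mul, toOp_fderiv]

lemma toOp_lapA (h : EuclideanSpace ℝ (Fin d) → Matrix (Fin m) (Fin m) ℂ)
    (x : EuclideanSpace ℝ (Fin d)) :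
    toOp (lapA B v h x) = glapA (fun μ x => toOp (B μ x)) (fun x => toOp (v x))
      (fun x => toOp (h x)) x := by
  simp only [lapA, glapA, toOp_sub, toOp_neg, toOp_sum, toOp_covD, toOp_mul]

variable (Φ : EuclideanSpace ℝ (Fin d) → EuclideanSpace ℝ (Fin d) → Matrix (Fin m) (Fin m) ℂ)

lemma toOp_acoef (n : ℕ) : ∀ x y : EuclideanSpace ℝ (Fin d),
    toOp (acoef B v Φ n x y) = gcoef (fun μ x => toOp (B μ x)) (fun x => toOp (v x))
      (fun x y => toOp (Φ x y)) n x y := by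
  induction n with
  | zero => exact fun _ _ => rfl
  | succ n ih =>
    intro x y
    simp only [acoef, gcoef, toOp_neg, toOp_intervalIntegral, toOp_smul, toOp_mul, toOp_lapA, ih]

lemma toOp_sum_covD (h : EuclideanSpace ℝ (Fin d) → Matrix (Fin m) (Fin m) ℂ)
    (x y : EuclideanSpace ℝ (Fin d)) :
    toOp (∑ μ, (x μ - y μ) • covD B μ h x) =
      ∑ μ, (x μ - y μ) • gcovD (fun μ x => toOp (B μ x)) μ (fun x => toOp (h x)) x := by
  simp only [toOp_sum, toOp_smul, toOp_covD]

end Matrix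

theorem acoef_solves_recurrence
    (d m : ℕ) (hd : 0 < d) (hm : 0 < m)
    (B : Fin d → EuclideanSpace ℝ (Fin d) → Matrix (Fin m) (Fin m) ℂ)
    (hB : ∀ μ, ContDiff ℝ (⊤ : ℕ∞) (B μ))
    (v : EuclideanSpace ℝ (Fin d) → Matrix (Fin m) (Fin m) ℂ)
    (hv : ContDiff ℝ (⊤ : ℕ∞) v)
    (P : EuclideanSpace ℝ (Fin d) → EuclideanSpace ℝ (Fin d) → ℝ →
      Matrix (Fin m) (Fin m) ℂ)
    (hP0 : ∀ x y, P x y 0 = 1)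
    (hP : ∀ x y, ∀ s ∈ Set.Icc (0:ℝ) 1, HasDerivWithinAt (P x y)
      (-(∑ μ, (x μ - y μ) • B μ (y + s • (x - y))) * P x y s) (Set.Icc (0:ℝ) 1) s)
    (Φ : EuclideanSpace ℝ (Fin d) → EuclideanSpace ℝ (Fin d) →
      Matrix (Fin m) (Fin m) ℂ)
    (hΦ : ∀ x y, Φ x y = P x y 1) :
    (∀ n, ContDiff ℝ (⊤ : ℕ∞)
      (fun p : EuclideanSpace ℝ (Fin d) × EuclideanSpace ℝ (Fin d) =>
        acoef B v Φ n p.1 p.2)) ∧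
    (∀ x y, ∑ μ, (x μ - y μ) • covD B μ (fun x' => acoef B v Φ 0 x' y) x = 0) ∧
    (∀ x, acoef B v Φ 0 x x = 1) ∧
    (∀ n : ℕ, ∀ x y,
      ((n : ℝ) + 1) • acoef B v Φ (n + 1) x y
          + ∑ μ, (x μ - y μ) • covD B μ (fun x' => acoef B v Φ (n + 1) x' y) x
        = -lapA B v (fun x' => acoef B v Φ n x' y) x) := by
  have hB' : ∀ μ, ContDiff ℝ ∞ (fun x => toOp (B μ x)) := fun μ => toOp_contDiff.2 (hB μ)
  have hv' : ContDiff ℝ ∞ (fun x => toOp (v x)) := toOp_contDiff.2 hv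
  have hT : IsTransport (fun μ x => toOp (B μ x)) (fun x y => toOp (Φ x y)) := by
    intro x y
    refine ⟨fun s => toOp (P x y s), ?_, ?_, fun s hs => ?_⟩
    · simp only [hP0, toOp_one]
    · simp only [hΦ]
    · refine (toOp_hasDerivWithinAt (hP x y s hs)).congr_deriv ?_
      simp only [toOp_mul, toOp_neg, toOp_sum, toOp_smul]
      rfl
  refine ⟨fun n => ?_, fun x y => ?_, fun x => ?_, fun n x y => ?_⟩
  · rw [← toOp_contDiff]
    simp only [toOp_acoef]
    exact contDiff_gcoef hT hB' hv' n
  · apply toOp_injective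
    rw [toOp_sum_covD]
    exact (gcoef_zero hT hB' x y).trans toOp_zero.symm
  · -- `Φ(x,x)` is the transport from time `0` to time `0` of a line through `x`
    obtain ⟨R, S, hR0, hS0, -, -, -, -, hU⟩ := hT.exists_frame hB' x 0
    have := hU 0 (by simp) 0 (by simp)
    rw [hR0, hS0, smul_zero, add_zero, mul_one] at this
    exact toOp_injective this
  · apply toOp_injective
    have h := gcoef_succ hT hB' hv' n x y
    simp only [← toOp_acoef, ← toOp_lapA] at h
    rw [← toOp_sum_covD] at h
    exact h
end

section
/- (Gauge-fixing by the Wilson line.) Fix y ∈ ℝ^d and let Ã_y denote the conjugated operator (Ã_y h)(x) = Φ(y,x) · (A (Φ(·,y) h(·)))(x) acting on smooth M_m(ℂ)-valued functions of x. Smooth functions â_0, …, â_N satisfy the covariant recurrence system (x−y)^μ(∂_{x^μ} + B_μ(x)) â_0(x,y) = 0, â_0(x,x) = 1, and (n + (x−y)^μ(∂_{x^μ} + B_μ(x))) â_n(x,y) = −(A â_{n−1}(·,y))(x) for 1 ≤ n ≤ N, if and only if the functions a_n(x,y) := Φ(y,x) â_n(x,y) satisfy (x−y)^μ ∂_{x^μ}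 a_0(x,y) = 0, a_0(x,x) = 1, and (n + (x−y)^μ ∂_{x^μ}) a_n(x,y) = −(Ã_y a_{n−1}(·,y))(x) for 1 ≤ n ≤ N. -/
/-!
Write `z = x - y` and `b(x) z = Σ_μ z^μ B_μ(x)`. The theorem follows by multiplying every equation
of the covariant system by `Φ(y,x)`, once three facts about the Wilson line are known:

* `Φ(x,y) Φ(y,x) = 1` and `Φ(x,x) = 1`, so that left multiplication by `Φ(y,x)` is injective and
  `Ã_y (Φ(y,·) h) = Φ(y,·) A h`;
* `x ↦ Φ(y,x)` is differentiable, so that the product rule applies to `Φ(y,·) â_n(·,y)`;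
* `(x-y)^μ ∂_μ Φ(y,x) = Φ(y,x) b(x)(x-y)`, which turns `(x-y)^μ ∂_μ` acting on `Φ(y,·) â_n` into
  `Φ(y,·) (x-y)^μ D_μ` acting on `â_n` (`radial_gauge_transform`).

The first fact is uniqueness for linear ODEs: reversing the direction of the segment gives a
solution of the same equation (`transport_mul_reverse`). Uniqueness also shows that stopping the
transport at time `s` is the transport from the point `y + s (x-y)` (`transport_restrict`); hence
`s ↦ Φ(y, y + s (x-y))` is the inverse of the solution of the defining ODE, so it satisfies
`W' = W b(y + s (x-y)) (x-y)`, and evaluation at `s = 1` is the third fact.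

The analytic point is differentiability in `x` (`differentiableAt_linear_ode_parameter`): if
`W_x' = W_x N_x` and `U = W_{x₀}⁻¹`, then variation of constants gives
`W_x(1) = (1 + ∫₀¹ W_x (N_x - N_{x₀}) U) W_{x₀}(1)`. Grönwall bounds `W_x` uniformly for `x` near
`x₀`, so the integrand is Lipschitz at `x₀`, and `W_x - W_{x₀} = O(‖x - x₀‖)` makes it
differentiable there; dominated differentiation under the integral finishes the proof.

The ODE arguments are carried out in a complete normed algebra, since the entrywise sup norm on
matrices is not submultiplicative; the results are transported along an algebra isomorphism, which
is automatically a homeomorphism in finite dimension.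
-/


/- STATEMENT 11 (gauge-fixing by the Wilson line): with the conjugated
operator `(Ã_y h)(x) = Φ(y,x)·(A(Φ(·,y)h(·)))(x)`, smooth `â_0,…,â_N` satisfy
the covariant recurrence system iff `a_n(x,y) := Φ(y,x) â_n(x,y)` satisfy the
plain recurrence system with `Ã_y` in place of `A`. -/

attribute [local instance] Matrix.normedAddCommGroup Matrix.normedSpace

/-- The operator `A` conjugated by the Wilson line:
`(Ã_y h)(x) = Φ(y,x) · (A (Φ(·,y) h(·)))(x)`. -/
noncomputable def tildeA {d m : ℕ}
    (B : Fin d → EuclideanSpace ℝ (Fin d) → Matrix (Fin m) (Fin m) ℂ)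
    (v : EuclideanSpace ℝ (Fin d) → Matrix (Fin m) (Fin m) ℂ)
    (Φ : EuclideanSpace ℝ (Fin d) → EuclideanSpace ℝ (Fin d) →
      Matrix (Fin m) (Fin m) ℂ)
    (y : EuclideanSpace ℝ (Fin d))
    (h : EuclideanSpace ℝ (Fin d) → Matrix (Fin m) (Fin m) ℂ) :
    EuclideanSpace ℝ (Fin d) → Matrix (Fin m) (Fin m) ℂ :=
  fun x => Φ y x * lapA B v (fun x' => Φ x' y * h x') x

open Set Filter Topology MeasureTheory

/-! ### Linear ODEs in a normed algebra -/

theorem linear_ode_unique {𝔸 : Type*} [NormedRing 𝔸] [NormedAlgebra ℝ 𝔸]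
    {M : ℝ → 𝔸} (hM : Continuous M) {f g : ℝ → 𝔸}
    (hf : ∀ s ∈ Icc (0:ℝ) 1, HasDerivWithinAt f (M s * f s) (Icc (0:ℝ) 1) s)
    (hg : ∀ s ∈ Icc (0:ℝ) 1, HasDerivWithinAt g (M s * g s) (Icc (0:ℝ) 1) s)
    (h0 : f 0 = g 0) : EqOn f g (Icc (0:ℝ) 1) := by
  obtain ⟨K, hK⟩ := isCompact_Icc.exists_bound_of_continuousOn (s := Icc (0:ℝ) 1) hM.continuousOn
  have right : ∀ {f : ℝ → 𝔸},
      (∀ s ∈ Icc (0:ℝ) 1, HasDerivWithinAt f (M s * f s) (Icc (0:ℝ) 1) s) →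
      ∀ t ∈ Ico (0:ℝ) 1, HasDerivWithinAt f (M t * f t) (Ici t) t := fun h t ht =>
    (h t (Ico_subset_Icc_self ht)).mono_of_mem_nhdsWithin (Icc_mem_nhdsGE_of_mem ht)
  refine ODE_solution_unique_of_mem_Icc_right (v := fun t z => M t * z) (s := fun _ => univ)
    (K := K.toNNReal) (fun t ht => ?_) (fun s hs => (hf s hs).continuousWithinAt) (right hf)
    (fun _ _ => mem_univ _) (fun s hs => (hg s hs).continuousWithinAt) (right hg)
    (fun _ _ => mem_univ _) h0
  refine LipschitzOnWith.of_dist_le_mul fun a _ b _ => ?_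
  rw [dist_eq_norm, dist_eq_norm, ← mul_sub]
  refine (norm_mul_le _ _).trans (mul_le_mul_of_nonneg_right ?_ (norm_nonneg _))
  exact (hK t (Ico_subset_Icc_self ht)).trans (Real.le_coe_toNNReal K)

/-- Differentiability of the time-one value of `W' = W N_x`, `W(0) = 1`, in the parameter `x`, for
coefficients that are jointly `C¹`. The function `U` is the inverse of the solution at `x₀`; it
enters through its own ODE so that `(W_x U)' = W_x (N_x - N_{x₀}) U`. -/
theorem differentiableAt_linear_ode_parameter {E 𝔸 : Type*} [NormedAddCommGroup E]
    [NormedSpace ℝ E] [ProperSpace E] [NormedRing 𝔸] [NormedAlgebra ℝ 𝔸] [CompleteSpace 𝔸]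
    {N : E → ℝ → 𝔸} (hN : ContDiff ℝ 1 (fun p : E × ℝ => N p.1 p.2))
    {W : E → ℝ → 𝔸} (hW0 : ∀ x, W x 0 = 1)
    (hW : ∀ x, ∀ s ∈ Icc (0:ℝ) 1,
      HasDerivWithinAt (W x) (W x s * N x s) (Icc (0:ℝ) 1) s)
    {x₀ : E} {U : ℝ → 𝔸} (hU0 : U 0 = 1)
    (hU : ∀ s ∈ Icc (0:ℝ) 1, HasDerivWithinAt U (-(N x₀ s) * U s) (Icc (0:ℝ) 1) s)
    (hUW : ∀ s ∈ Icc (0:ℝ) 1, U s * W x₀ s = 1) :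
    DifferentiableAt ℝ (fun x => W x 1) x₀ := by
  have hWc : ∀ x, ContinuousOn (W x) (Icc (0:ℝ) 1) :=
    fun x s hs => (hW x s hs).continuousWithinAt
  have hUc : ContinuousOn U (Icc (0:ℝ) 1) := fun s hs => (hU s hs).continuousWithinAt
  have hNc : Continuous (fun p : E × ℝ => N p.1 p.2) := hN.continuous
  have hNs : ∀ x, Continuous (N x) := fun x => hNc.comp (Continuous.prodMk_right x)
  let D : E → ℝ → E →L[ℝ] 𝔸 := fun x s =>
    (fderiv ℝ (fun p : E × ℝ => N p.1 p.2) (x, s)).comp (ContinuousLinearMap.inl ℝ E ℝ)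
  have hD : ∀ x s, HasFDerivAt (fun x => N x s) (D x s) x := fun x s => by
    have h1 := (hN.differentiable one_ne_zero (x, s)).hasFDerivAt
    exact HasFDerivAt.comp (f := fun e : E => (e, s)) x h1 (hasFDerivAt_prodMk_left x s)
  have hDc : Continuous (fun p : E × ℝ => D p.1 p.2) :=
    (hN.continuous_fderiv one_ne_zero).clm_comp continuous_const
  have hcpt : IsCompact (Metric.closedBall x₀ 1 ×ˢ Icc (0:ℝ) 1) :=
    (isCompact_closedBall x₀ 1).prod isCompact_Icc
  obtain ⟨K, hK⟩ := hcpt.exists_bound_of_continuousOn hNc.continuousOn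
  obtain ⟨L, hL⟩ := hcpt.exists_bound_of_continuousOn hDc.continuousOn
  obtain ⟨CU, hCU⟩ := isCompact_Icc.exists_bound_of_continuousOn hUc
  obtain ⟨CW, hCW⟩ := isCompact_Icc.exists_bound_of_continuousOn (hWc x₀)
  have hx₀ : x₀ ∈ Metric.closedBall x₀ 1 := Metric.mem_closedBall_self zero_le_one
  have h0 : (0:ℝ) ∈ Icc (0:ℝ) 1 := left_mem_Icc.2 zero_le_one
  have h1 : (1:ℝ) ∈ Icc (0:ℝ) 1 := right_mem_Icc.2 zero_le_one
  have hK0 : 0 ≤ K := (norm_nonneg _).trans (hK (x₀, 0) ⟨hx₀, h0⟩)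
  have hL0 : 0 ≤ L := (norm_nonneg _).trans (hL (x₀, 0) ⟨hx₀, h0⟩)
  have hCU0 : 0 ≤ CU := (norm_nonneg _).trans (hCU 0 h0)
  have hCW0 : 0 ≤ CW := (norm_nonneg _).trans (hCW 0 h0)
  have hlip : ∀ x ∈ Metric.closedBall x₀ 1, ∀ s ∈ Icc (0:ℝ) 1,
      ‖N x s - N x₀ s‖ ≤ L * ‖x - x₀‖ := fun x hx s hs =>
    (convex_closedBall x₀ 1).norm_image_sub_le_of_norm_hasFDerivWithin_le
      (fun z _ => (hD z s).hasFDerivWithinAt) (fun z hz => hL (z, s) ⟨hz, hs⟩) hx₀ hx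
  -- Grönwall bounds the solutions uniformly for parameters near `x₀`.
  obtain ⟨C, hC0, hC⟩ : ∃ C, 0 ≤ C ∧ ∀ x ∈ Metric.closedBall x₀ 1, ∀ s ∈ Icc (0:ℝ) 1,
      ‖W x s‖ ≤ C := by
    refine ⟨‖(1:𝔸)‖ * Real.exp K, by positivity, fun x hx s hs => ?_⟩
    have h := norm_le_gronwallBound_of_norm_deriv_right_le (δ := ‖(1:𝔸)‖) (K := K) (ε := 0)
      (hWc x) (fun t ht => (hW x t (Ico_subset_Icc_self ht)).mono_of_mem_nhdsWithin
        (Icc_mem_nhdsGE_of_mem ht)) (by rw [hW0]) (fun t ht => ?_) s hs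
    · rw [gronwallBound_ε0, sub_zero] at h
      refine h.trans ?_
      gcongr
      nlinarith [hs.2]
    · have := hK (x, t) ⟨hx, Ico_subset_Icc_self ht⟩
      rw [add_zero, mul_comm K]
      exact (norm_mul_le _ _).trans (mul_le_mul_of_nonneg_left this (norm_nonneg _))
  let F : E → ℝ → 𝔸 := fun x s => W x s * (N x s - N x₀ s) * U s
  have hFc : ∀ x, ContinuousOn (F x) (Icc (0:ℝ) 1) := fun x =>
    ((hWc x).mul ((hNs x).sub (hNs x₀)).continuousOn).mul hUc
  have hF : ∀ x, ∀ s ∈ Icc (0:ℝ) 1,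
      HasDerivWithinAt (fun s => W x s * U s) (F x s) (Icc (0:ℝ) 1) s := fun x s hs => by
    refine ((hW x s hs).mul (hU s hs)).congr_deriv ?_
    change _ = W x s * (N x s - N x₀ s) * U s
    noncomm_ring
  have hFb : ∀ x ∈ Metric.closedBall x₀ 1, ∀ s ∈ Icc (0:ℝ) 1,
      ‖F x s‖ ≤ C * L * CU * ‖x - x₀‖ := fun x hx s hs =>
    calc ‖F x s‖ ≤ ‖W x s‖ * ‖N x s - N x₀ s‖ * ‖U s‖ :=
          (norm_mul_le _ _).trans (mul_le_mul_of_nonneg_right (norm_mul_le _ _) (norm_nonneg _))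
      _ ≤ C * (L * ‖x - x₀‖) * CU := by
          gcongr
          · exact hC x hx s hs
          · exact hlip x hx s hs
          · exact hCU s hs
      _ = _ := by ring
  -- Integrating `(W_x U)' = F x` from `0` gives Lipschitz dependence at `x₀`.
  have hWlip : ∀ x ∈ Metric.closedBall x₀ 1, ∀ s ∈ Icc (0:ℝ) 1,
      ‖W x s - W x₀ s‖ ≤ C * L * CU * ‖x - x₀‖ * CW := fun x hx s hs => by
    have h := norm_image_sub_le_of_norm_deriv_le_segment' (hF x)
      (fun t ht => hFb x hx t (Ico_subset_Icc_self ht)) s hs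
    have e : W x s - W x₀ s = (W x s * U s - W x 0 * U 0) * W x₀ s := by
      rw [hW0, hU0, sub_mul, mul_assoc, hUW s hs]; simp
    rw [e]
    refine (norm_mul_le _ _).trans ?_
    refine mul_le_mul (h.trans ?_) (hCW s hs) (norm_nonneg _) (by positivity)
    exact mul_le_of_le_one_right (by positivity) (by linarith [hs.2])
  -- Variation of constants.
  have hint : ∀ x, W x 1 = (1 + ∫ s in Ioc (0:ℝ) 1, F x s) * W x₀ 1 := fun x => by
    have h := intervalIntegral.integral_eq_sub_of_hasDerivAt_of_le (zero_le_one (α := ℝ))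
      ((hWc x).mul hUc) (fun s hs => (hF x s (Ioo_subset_Icc_self hs)).hasDerivAt
        (Icc_mem_nhds hs.1 hs.2)) ((hFc x).intervalIntegrable_of_Icc zero_le_one)
    rw [intervalIntegral.integral_of_le zero_le_one] at h
    rw [h]
    simp only [Pi.mul_apply, hW0, hU0, mul_one, add_sub_cancel]
    rw [mul_assoc, hUW 1 h1, mul_one]
  have hball : Metric.closedBall x₀ 1 ∈ 𝓝 x₀ := Metric.closedBall_mem_nhds x₀ one_pos
  have hder := hasFDerivAt_integral_of_dominated_loc_of_lip'
    (μ := volume.restrict (Ioc (0:ℝ) 1)) (F := F) (x₀ := x₀)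
    (F' := fun s => (ContinuousLinearMap.mulLeftRight ℝ 𝔸 (W x₀ s) (U s)).comp (D x₀ s))
    (bound := fun _ => C * L * CU) hball (fun x _ =>
      ((hFc x).mono Ioc_subset_Icc_self).aestronglyMeasurable measurableSet_Ioc)
    ((hFc x₀).integrableOn_Icc.mono_set Ioc_subset_Icc_self) ?_ ?_
    (integrable_const _) ?_
  · have h2 : DifferentiableAt ℝ
        (fun x => (1 + ∫ s in Ioc (0:ℝ) 1, F x s) * W x₀ 1) x₀ :=
      (hder.2.differentiableAt.const_add 1).mul_const _
    exact h2.congr_of_eventuallyEq (Eventually.of_forall hint)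
  · refine ContinuousOn.aestronglyMeasurable (ContinuousOn.mono ?_ Ioc_subset_Icc_self)
      measurableSet_Ioc
    refine ContinuousOn.clm_comp ?_ (hDc.comp (Continuous.prodMk_right x₀)).continuousOn
    exact ((ContinuousLinearMap.mulLeftRight ℝ 𝔸).continuous.comp_continuousOn
      (hWc x₀)).clm_apply hUc
  · refine (ae_restrict_iff' measurableSet_Ioc).2 (Eventually.of_forall fun s hs x hx => ?_)
    have e : F x₀ s = 0 := by simp [F]
    rw [e, sub_zero]
    exact hFb x hx s (Ioc_subset_Icc_self hs)
  · refine (ae_restrict_iff' measurableSet_Ioc).2 (Eventually.of_forall fun s hs => ?_)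
    have hs' := Ioc_subset_Icc_self hs
    -- Split `W_x = W_{x₀} + (W_x - W_{x₀})`: the second part contributes `O(‖x - x₀‖²)`.
    have hmain : HasFDerivAt (fun x => W x₀ s * (N x s - N x₀ s) * U s)
        ((ContinuousLinearMap.mulLeftRight ℝ 𝔸 (W x₀ s) (U s)).comp (D x₀ s)) x₀ := by
      have := (ContinuousLinearMap.mulLeftRight ℝ 𝔸 (W x₀ s) (U s)).hasFDerivAt.comp x₀
        ((hD x₀ s).sub_const (N x₀ s))
      exact this
    have hrem : HasFDerivAt (fun x => (W x s - W x₀ s) * (N x s - N x₀ s) * U s)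
        (0 : E →L[ℝ] 𝔸) x₀ := by
      refine Asymptotics.IsBigO.hasFDerivAt (n := 2) ?_ one_lt_two
      refine Asymptotics.IsBigO.of_bound (C * L * CU * CW * L * CU) ?_
      filter_upwards [hball] with x hx
      rw [Real.norm_of_nonneg (by positivity)]
      calc _ ≤ ‖W x s - W x₀ s‖ * ‖N x s - N x₀ s‖ * ‖U s‖ :=
          (norm_mul_le _ _).trans (mul_le_mul_of_nonneg_right (norm_mul_le _ _) (norm_nonneg _))
        _ ≤ (C * L * CU * ‖x - x₀‖ * CW) * (L * ‖x - x₀‖) * CU := by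
          gcongr
          · exact hWlip x hx s hs'
          · exact hlip x hx s hs'
          · exact hCU s hs'
        _ = _ := by ring
    have := hmain.add hrem
    rw [add_zero] at this
    refine this.congr_of_eventuallyEq (Eventually.of_forall fun x => ?_)
    simp only [F, Pi.add_apply]
    noncomm_ring

/-! ### Parallel transport along segments -/

section
variable {E 𝔸 : Type*} [NormedAddCommGroup E]
    [NormedSpace ℝ E] [NormedRing 𝔸] [NormedAlgebra ℝ 𝔸]
    {b : E → E →L[ℝ] 𝔸} (hb : ContDiff ℝ 1 b) {P : E → E → ℝ → 𝔸}
    (hP0 : ∀ x y, P x y 0 = 1)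
    (hP : ∀ x y, ∀ s ∈ Icc (0:ℝ) 1, HasDerivWithinAt (P x y)
      (-(b (y + s • (x - y)) (x - y)) * P x y s) (Icc (0:ℝ) 1) s)
include hb hP0 hP

/-- Transport from `y` to the intermediate point `y + s (x - y)` is the solution for the whole
segment evaluated at time `s`: both solve the same equation after rescaling time by `s`. -/
theorem transport_restrict (x y : E) {s : ℝ} (hs : s ∈ Icc (0:ℝ) 1) :
    P (y + s • (x - y)) y 1 = P x y s := by
  have hbc := hb.continuous
  have hmaps : MapsTo (fun t : ℝ => s * t) (Icc (0:ℝ) 1) (Icc (0:ℝ) 1) := fun t ht =>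
    ⟨mul_nonneg hs.1 ht.1, mul_le_one₀ hs.2 ht.1 ht.2⟩
  have h := linear_ode_unique (f := P (y + s • (x - y)) y) (g := fun t => P x y (s * t))
    (M := fun t => -(b (y + t • (s • (x - y))) (s • (x - y)))) (by fun_prop)
    (fun t ht => by simpa using hP (y + s • (x - y)) y t ht) (fun t ht => ?_)
    (by simp [hP0]) (right_mem_Icc.2 zero_le_one)
  · simpa using h
  · have h1 : HasDerivWithinAt (fun t : ℝ => s * t) s (Icc (0:ℝ) 1) t := by
      simpa using (hasDerivWithinAt_id t (Icc (0:ℝ) 1)).const_mul s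
    refine ((hP x y (s * t) (hmaps ht)).scomp t h1 hmaps).congr_deriv ?_
    rw [map_smul, smul_smul, mul_comm t s]
    simp [-map_sub]

theorem transport_self (x : E) : P x x 1 = 1 := by
  simpa [hP0] using transport_restrict hb hP0 hP x x (left_mem_Icc.2 zero_le_one)

/-- The path back from `x` to `y`, run backwards in time, solves the equation of the path from `y` to
`x`, so by uniqueness it equals `P x y t * P y x 1`. -/
theorem transport_mul_reverse (x y : E) : P x y 1 * P y x 1 = 1 := by
  have hbc := hb.continuous
  have hmaps : MapsTo (fun t : ℝ => 1 - t) (Icc (0:ℝ) 1) (Icc (0:ℝ) 1) := fun t ht =>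
    ⟨by linarith [ht.2], by linarith [ht.1]⟩
  have h := linear_ode_unique (f := fun t => P y x (1 - t)) (g := fun t => P x y t * P y x 1)
    (M := fun t => -(b (y + t • (x - y)) (x - y))) (by fun_prop)
    (fun t ht => ?_) (fun t ht => ?_)
    (by simp [hP0]) (right_mem_Icc.2 zero_le_one)
  · simpa [hP0] using h.symm
  · have h1 : HasDerivWithinAt (fun t : ℝ => 1 - t) (-1) (Icc (0:ℝ) 1) t := by
      simpa using (hasDerivWithinAt_id t (Icc (0:ℝ) 1)).const_sub 1
    refine ((hP y x (1 - t) (hmaps ht)).scomp t h1 hmaps).congr_deriv ?_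
    have e1 : x + (1 - t) • (y - x) = y + t • (x - y) := by module
    rw [e1, ← neg_sub x y, map_neg]
    simp [-map_sub, -neg_sub]
  · simpa [mul_assoc] using (hP x y t ht).mul_const (P y x 1)

/-- The reverse transport along the initial part of the segment from `y` to `x` solves the
transposed equation. -/
theorem hasDerivWithinAt_reverse_transport [CompleteSpace 𝔸] (x y : E) {s : ℝ}
    (hs : s ∈ Icc (0:ℝ) 1) :
    HasDerivWithinAt (fun s : ℝ => P y (y + s • (x - y)) 1)
      (P y (y + s • (x - y)) 1 * b (y + s • (x - y)) (x - y)) (Icc (0:ℝ) 1) s := by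
  have hinv : ∀ t ∈ Icc (0:ℝ) 1, P y (y + t • (x - y)) 1 = Ring.inverse (P x y t) :=
    fun t ht => by
    rw [← transport_restrict hb hP0 hP x y ht]
    exact (Ring.inverse_unit ⟨_, _, transport_mul_reverse hb hP0 hP _ _,
      transport_mul_reverse hb hP0 hP _ _⟩).symm
  have h1 : P x y s * P y (y + s • (x - y)) 1 = 1 := by
    rw [← transport_restrict hb hP0 hP x y hs]
    exact transport_mul_reverse hb hP0 hP _ _
  have h2 : P y (y + s • (x - y)) 1 * P x y s = 1 := by
    rw [← transport_restrict hb hP0 hP x y hs]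
    exact transport_mul_reverse hb hP0 hP _ _
  have h3 := (hasFDerivAt_ringInverse (𝕜 := ℝ) (⟨_, _, h1, h2⟩ : 𝔸ˣ)).comp_hasDerivWithinAt s
    (hP x y s hs)
  refine (h3.congr hinv (hinv s hs)).congr_deriv ?_
  simp [-map_sub, mul_assoc, h1]

theorem differentiableAt_transport [CompleteSpace 𝔸] [ProperSpace E] (x y : E) :
    DifferentiableAt ℝ (fun x' => P y x' 1) x := by
  have h := differentiableAt_linear_ode_parameter
    (N := fun x s => b (y + s • (x - y)) (x - y))
    (W := fun x s => P y (y + s • (x - y)) 1) (by fun_prop)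
    (fun x => ?_) (fun x s hs => hasDerivWithinAt_reverse_transport hb hP0 hP x y hs)
    (x₀ := x) (U := P x y) (hP0 x y) (hP x y) (fun s hs => ?_)
  · simpa using h
  · simpa using transport_self hb hP0 hP y
  · rw [← transport_restrict hb hP0 hP x y hs]
    exact transport_mul_reverse hb hP0 hP _ _

/-- Both sides are the derivative at `s = 1` of `s ↦ P y (y + s (x - y)) 1`. -/
theorem fderiv_transport_radial [CompleteSpace 𝔸] [ProperSpace E] (x y : E) :
    fderiv ℝ (fun x' => P y x' 1) x (x - y) = P y x 1 * b x (x - y) := by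
  have h1 : (1:ℝ) ∈ Icc (0:ℝ) 1 := right_mem_Icc.2 zero_le_one
  have hl : HasDerivWithinAt (fun s : ℝ => y + s • (x - y)) (x - y) (Icc (0:ℝ) 1) 1 := by
    simpa using ((hasDerivWithinAt_id (1:ℝ) (Icc (0:ℝ) 1)).smul_const (x - y)).const_add y
  have e : y + (1:ℝ) • (x - y) = x := by simp
  have hd : HasFDerivAt (fun x' => P y x' 1) (fderiv ℝ (fun x' => P y x' 1) x)
      (y + (1:ℝ) • (x - y)) := by
    rw [e]; exact (differentiableAt_transport hb hP0 hP x y).hasFDerivAt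
  have ha := hd.comp_hasDerivWithinAt (1:ℝ) hl
  have hr := hasDerivWithinAt_reverse_transport hb hP0 hP x y h1
  rw [e] at hr
  exact (uniqueDiffOn_Icc_zero_one 1 h1).eq_deriv _ ha hr
end

/-! ### The Wilson line for matrices -/

/-- Matrices carry a complete submultiplicative norm (the `ℓ∞` operator norm). It is hidden behind an
existential so that its instances do not clash with the entrywise sup norm. -/
theorem exists_normed_algEquiv (m : ℕ) : ∃ (𝔸 : Type) (_ : NormedRing 𝔸)
    (_ : NormedAlgebra ℝ 𝔸), CompleteSpace 𝔸 ∧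
      Nonempty (Matrix (Fin m) (Fin m) ℂ ≃ₐ[ℝ] 𝔸) := by
  refine ⟨Matrix (Fin m) (Fin m) ℂ, Matrix.linftyOpNormedRing, Matrix.linftyOpNormedAlgebra,
    ?_, ⟨AlgEquiv.refl⟩⟩
  let _ : NormedRing (Matrix (Fin m) (Fin m) ℂ) := Matrix.linftyOpNormedRing
  let _ : NormedAlgebra ℝ (Matrix (Fin m) (Fin m) ℂ) := Matrix.linftyOpNormedAlgebra
  exact FiniteDimensional.complete ℝ _

theorem wilson_line_properties {d m : ℕ}
    {B : Fin d → EuclideanSpace ℝ (Fin d) → Matrix (Fin m) (Fin m) ℂ}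
    (hB : ∀ μ, ContDiff ℝ (⊤ : ℕ∞) (B μ))
    {P : EuclideanSpace ℝ (Fin d) → EuclideanSpace ℝ (Fin d) → ℝ →
      Matrix (Fin m) (Fin m) ℂ}
    (hP0 : ∀ x y, P x y 0 = 1)
    (hP : ∀ x y, ∀ s ∈ Icc (0:ℝ) 1, HasDerivWithinAt (P x y)
      (-(∑ μ, (x μ - y μ) • B μ (y + s • (x - y))) * P x y s) (Icc (0:ℝ) 1) s) :
    (∀ x, P x x 1 = 1) ∧ (∀ x y, P x y 1 * P y x 1 = 1) ∧
    (∀ x y, DifferentiableAt ℝ (fun x' => P y x' 1) x) ∧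
    ∀ x y, fderiv ℝ (fun x' => P y x' 1) x (x - y)
      = P y x 1 * ∑ μ, (x μ - y μ) • B μ x := by
  obtain ⟨𝔸, _, _, _, ⟨T⟩⟩ := exists_normed_algEquiv m
  let L : Matrix (Fin m) (Fin m) ℂ ≃L[ℝ] 𝔸 :=
    T.toLinearEquiv.toContinuousLinearEquiv
  have hL : ∀ X, L X = T X := fun _ => rfl
  let b : EuclideanSpace ℝ (Fin d) → EuclideanSpace ℝ (Fin d) →L[ℝ] 𝔸 := fun x =>
    ∑ μ, (EuclideanSpace.proj μ : EuclideanSpace ℝ (Fin d) →L[ℝ] ℝ).smulRight (L (B μ x))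
  have hbapp : ∀ z x y, b z (x - y) = T (∑ μ, (x μ - y μ) • B μ z) := fun z x y => by
    simp [b, hL]
  have hb : ContDiff ℝ 1 b := by
    refine ContDiff.sum fun μ _ => ?_
    exact contDiff_const.smulRight (L.contDiff.comp ((hB μ).of_le (by exact_mod_cast le_top)))
  have hQ0 : ∀ x y, T (P x y 0) = 1 := fun x y => by rw [hP0, map_one]
  have hQ : ∀ x y, ∀ s ∈ Icc (0:ℝ) 1, HasDerivWithinAt (fun s => T (P x y s))
      (-(b (y + s • (x - y)) (x - y)) * T (P x y s)) (Icc (0:ℝ) 1) s := fun x y s hs => by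
    rw [hbapp, ← map_neg, ← map_mul]
    exact L.hasFDerivAt.comp_hasDerivWithinAt s (hP x y s hs)
  have hdiff : ∀ x y, DifferentiableAt ℝ (fun x' => P y x' 1) x := fun x y =>
    L.comp_differentiableAt_iff.1
      (differentiableAt_transport (P := fun x y s => T (P x y s)) hb hQ0 hQ x y)
  refine ⟨fun x => T.injective ?_, fun x y => T.injective ?_, hdiff, fun x y => T.injective ?_⟩
  · rw [map_one]
    exact transport_self (P := fun x y s => T (P x y s)) hb hQ0 hQ x
  · rw [map_mul, map_one]
    exact transport_mul_reverse (P := fun x y s => T (P x y s)) hb hQ0 hQ x y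
  · have h := fderiv_transport_radial (P := fun x y s => T (P x y s)) hb hQ0 hQ x y
    have h2 : HasFDerivAt (fun x' => T (P y x' 1)) _ x :=
      L.hasFDerivAt.comp x (hdiff x y).hasFDerivAt
    rw [h2.fderiv, hbapp, ← map_mul] at h
    exact h

/-! ### The recurrence systems -/

theorem sum_coord_smul_fderiv {d : ℕ} {F : Type*} [NormedAddCommGroup F] [NormedSpace ℝ F]
    (f : EuclideanSpace ℝ (Fin d) → F) (x z : EuclideanSpace ℝ (Fin d)) :
    ∑ μ, z μ • fderiv ℝ f x (EuclideanSpace.single μ 1) = fderiv ℝ f x z := by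
  simp_rw [← map_smul, ← map_sum]
  congr 1
  ext i
  simp [Finset.sum_apply, Pi.single_apply]

/-- The gauge factor `g` intertwines the radial derivative with the radial covariant derivative
whenever it solves the radial transport equation at `x`. -/
theorem radial_gauge_transform {d m : ℕ}
    {B : Fin d → EuclideanSpace ℝ (Fin d) → Matrix (Fin m) (Fin m) ℂ}
    {g h : EuclideanSpace ℝ (Fin d) → Matrix (Fin m) (Fin m) ℂ}
    {x y : EuclideanSpace ℝ (Fin d)}
    (hg : DifferentiableAt ℝ g x) (hh : DifferentiableAt ℝ h x)
    (hgB : fderiv ℝ g x (x - y) = g x * ∑ μ, (x μ - y μ) • B μ x) :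
    ∑ μ, (x μ - y μ) • fderiv ℝ (fun x' => g x' * h x') x (EuclideanSpace.single μ 1)
      = g x * ∑ μ, (x μ - y μ) • covD B μ h x := by
  have h1 := sum_coord_smul_fderiv (fun x' => g x' * h x') x (x - y)
  -- Stating `h2` fixes the scalar action to the one in `covD`.
  have h2 : ∑ μ, (x μ - y μ) • fderiv ℝ h x (EuclideanSpace.single μ 1)
      = fderiv ℝ h x (x - y) := sum_coord_smul_fderiv h x (x - y)
  have hbil : HasFDerivAt (fun x' => g x' * h x')
      ((LinearMap.mul ℝ (Matrix (Fin m) (Fin m) ℂ)).toContinuousBilinearMap.precompR _ (g x)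
        (fderiv ℝ h x) +
       (LinearMap.mul ℝ (Matrix (Fin m) (Fin m) ℂ)).toContinuousBilinearMap.precompL _
        (fderiv ℝ g x) (h x)) x :=
    ContinuousLinearMap.hasFDerivAt_of_bilinear
      (LinearMap.mul ℝ (Matrix (Fin m) (Fin m) ℂ)).toContinuousBilinearMap
      hg.hasFDerivAt hh.hasFDerivAt
  refine h1.trans ?_
  rw [hbil.fderiv]
  simp only [covD, smul_add, Finset.sum_add_distrib, mul_add, h2]
  change g x * fderiv ℝ h x (x - y) + fderiv ℝ g x (x - y) * h x = _
  rw [hgB, mul_assoc, Finset.sum_mul]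
  simp only [smul_mul_assoc]

theorem covariant_recurrence_iff_gauge_fixed_recurrence
    (d m N : ℕ) (hd : 0 < d) (hm : 0 < m)
    (B : Fin d → EuclideanSpace ℝ (Fin d) → Matrix (Fin m) (Fin m) ℂ)
    (hB : ∀ μ, ContDiff ℝ (⊤ : ℕ∞) (B μ))
    (v : EuclideanSpace ℝ (Fin d) → Matrix (Fin m) (Fin m) ℂ)
    (hv : ContDiff ℝ (⊤ : ℕ∞) v)
    (P : EuclideanSpace ℝ (Fin d) → EuclideanSpace ℝ (Fin d) → ℝ →
      Matrix (Fin m) (Fin m) ℂ)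
    (hP0 : ∀ x y, P x y 0 = 1)
    (hP : ∀ x y, ∀ s ∈ Set.Icc (0:ℝ) 1, HasDerivWithinAt (P x y)
      (-(∑ μ, (x μ - y μ) • B μ (y + s • (x - y))) * P x y s) (Set.Icc (0:ℝ) 1) s)
    (Φ : EuclideanSpace ℝ (Fin d) → EuclideanSpace ℝ (Fin d) →
      Matrix (Fin m) (Fin m) ℂ)
    (hΦ : ∀ x y, Φ x y = P x y 1)
    (ha : ℕ → EuclideanSpace ℝ (Fin d) → EuclideanSpace ℝ (Fin d) →
      Matrix (Fin m) (Fin m) ℂ)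
    (hsmooth : ∀ n ≤ N, ContDiff ℝ (⊤ : ℕ∞)
      (fun p : EuclideanSpace ℝ (Fin d) × EuclideanSpace ℝ (Fin d) =>
        ha n p.1 p.2)) :
    (((∀ x y, ∑ μ, (x μ - y μ) • covD B μ (fun x' => ha 0 x' y) x = 0) ∧
      (∀ x, ha 0 x x = 1) ∧
      (∀ n, 1 ≤ n → n ≤ N → ∀ x y,
        (n : ℝ) • ha n x y
            + ∑ μ, (x μ - y μ) • covD B μ (fun x' => ha n x' y) x
          = -lapA B v (fun x' => ha (n - 1) x' y) x))
    ↔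
     ((∀ x y, ∑ μ, (x μ - y μ) •
          fderiv ℝ (fun x' => Φ y x' * ha 0 x' y) x (EuclideanSpace.single μ 1)
        = 0) ∧
      (∀ x, Φ x x * ha 0 x x = 1) ∧
      (∀ n, 1 ≤ n → n ≤ N → ∀ x y,
        (n : ℝ) • (Φ y x * ha n x y)
            + ∑ μ, (x μ - y μ) •
                fderiv ℝ (fun x' => Φ y x' * ha n x' y) x
                  (EuclideanSpace.single μ 1)
          = -tildeA B v Φ y (fun x' => Φ y x' * ha (n - 1) x' y) x))) := by
  obtain ⟨hdiag, hinv, hdiff, hrad⟩ := wilson_line_properties hB hP0 hP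
  simp only [← hΦ] at hdiag hinv hdiff hrad
  have hslice : ∀ n ≤ N, ∀ x y, DifferentiableAt ℝ (fun x' => ha n x' y) x := fun n hn x y =>
    (((hsmooth n hn).comp (contDiff_prodMk_left y)).differentiable (by simp)) x
  have hcancel : ∀ x y X Y, Φ y x * X = Φ y x * Y ↔ X = Y := fun x y X Y =>
    ⟨fun h => by simpa [← mul_assoc, hinv] using congrArg (Φ x y * ·) h, fun h => by rw [h]⟩
  have hR : ∀ n ≤ N, ∀ x y, ∑ μ, (x μ - y μ) •
      fderiv ℝ (fun x' => Φ y x' * ha n x' y) x (EuclideanSpace.single μ 1)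
        = Φ y x * ∑ μ, (x μ - y μ) • covD B μ (fun x' => ha n x' y) x := fun n hn x y =>
    radial_gauge_transform (hdiff x y) (hslice n hn x y) (hrad x y)
  have hA : ∀ n x y, tildeA B v Φ y (fun x' => Φ y x' * ha n x' y) x
      = Φ y x * lapA B v (fun x' => ha n x' y) x := fun n x y => by
    simp only [tildeA, ← mul_assoc, hinv, one_mul]
  refine and_congr (forall₂_congr fun x y => ?_) (and_congr (forall_congr' fun x => ?_)
    (forall_congr' fun n => imp_congr_right fun _ => forall_congr' fun hn =>
      forall₂_congr fun x y => ?_))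
  · rw [hR 0 (Nat.zero_le N), ← hcancel x y, mul_zero]
  · rw [hdiag, one_mul]
  · rw [hR n hn, hA, ← hcancel x y, mul_add, mul_smul_comm, mul_neg]
end

section
/- Let c^1,…,c^d, b : ℝ^d → ℝ be smooth and define a_0(x,y) = 1 and a_n(x,y) = ∫_0^1 s^{n−1} [ Σ_μ ∂_μ∂_μ a_{n−1}(·,y) + c^μ(·) ∂_μ a_{n−1}(·,y) + b(·) a_{n−1}(·,y) ](y + s(x−y)) ds for n ≥ 1, the derivatives acting in the first variable. Then for all x ∈ ℝ^d: a_1(x,x) = b(x) and a_2(x,x) = (1/2) b(x)² + (1/4) Σ_μ c^μ(x) ∂_μ b(x) + (1/6) Σ_μ ∂_μ∂_μ b(x). -/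
/-!
Write `R_k g y x = ∫_0^1 s^k g (y + s (x - y)) ds`, the average of `g` along the segment from `y`
to `x`. Differentiating under the integral sign in `x` gives `∂_μ (R_k g y) = R_{k+1} (∂_μ g) y`,
each derivative producing one more factor `s`, and on the diagonal `R_k g x x = g x / (k + 1)`.

Applying the operator to `a_0 = 1` gives `b`, so `a_1 (·, y) = R_0 b y`. On the diagonal, `a_1`
therefore equals `b`, its first derivatives equal `∂_μ b / 2` and its second derivatives
`∂_μ ∂_μ b / 3`. The value `a_2 (x, x)` is half of the operator applied to `a_1 (·, x)` at `x`,
since the segment from `x` to `x` is constant.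
-/

/- STATEMENT 16: for the scalar recurrence `a_0 = 1`,
`a_n(x,y) = ∫_0^1 s^{n−1}[(Σ_μ ∂_μ∂_μ + c^μ∂_μ + b) a_{n−1}(·,y)](y+s(x−y)) ds`,
the first two diagonal values are `a_1(x,x) = b(x)` and
`a_2(x,x) = (1/2)b(x)² + (1/4)Σ_μ c^μ(x)∂_μ b(x) + (1/6)Σ_μ ∂_μ∂_μ b(x)`. -/

/-- Partial derivative of a scalar function in the `μ`-th coordinate direction. -/
noncomputable def pdR {d : ℕ} (μ : Fin d)
    (g : EuclideanSpace ℝ (Fin d) → ℝ) : EuclideanSpace ℝ (Fin d) → ℝ :=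
  fun x => fderiv ℝ g x (EuclideanSpace.single μ 1)

/-- The operator `∂_μ∂_μ + c^μ ∂_μ + b` (repeated indices summed). -/
noncomputable def opS {d : ℕ} (c : Fin d → EuclideanSpace ℝ (Fin d) → ℝ)
    (b : EuclideanSpace ℝ (Fin d) → ℝ) (g : EuclideanSpace ℝ (Fin d) → ℝ) :
    EuclideanSpace ℝ (Fin d) → ℝ :=
  fun x => (∑ μ, pdR μ (pdR μ g) x) + (∑ μ, c μ x * pdR μ g x) + b x * g x

/-- The coefficients of the scalar recurrence system, via the integral
recursion equivalent to `(k + (x−y)^μ∂_{x^μ}) a_k = (∂_μ∂_μ + c^μ∂_μ + b) a_{k−1}`. -/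
noncomputable def scoef {d : ℕ} (c : Fin d → EuclideanSpace ℝ (Fin d) → ℝ)
    (b : EuclideanSpace ℝ (Fin d) → ℝ) :
    ℕ → EuclideanSpace ℝ (Fin d) → EuclideanSpace ℝ (Fin d) → ℝ
  | 0 => fun _ _ => 1
  | k + 1 => fun x y =>
      ∫ s in (0:ℝ)..1, s ^ k *
        opS c b (fun x' => scoef c b k x' y) (y + s • (x - y))

/-- The weighted average `x ↦ ∫_0^1 s^k g (y + s (x - y)) ds` of `g` over the segment from `y`
to `x`. -/
noncomputable def segAvg {d : ℕ} (k : ℕ) (g : EuclideanSpace ℝ (Fin d) → ℝ)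
    (y x : EuclideanSpace ℝ (Fin d)) : ℝ :=
  ∫ s in (0:ℝ)..1, s ^ k * g (y + s • (x - y))

lemma segAvg_self {d : ℕ} (k : ℕ) (g : EuclideanSpace ℝ (Fin d) → ℝ)
    (x : EuclideanSpace ℝ (Fin d)) : segAvg k g x x = g x / (k + 1) := by
  simp only [segAvg, sub_self, smul_zero, add_zero, intervalIntegral.integral_mul_const,
    integral_pow]
  simp
  ring

/-- Differentiation under the integral sign; the dominating constant comes from compactness of
`closedBall x 1 × [0, 1]`. -/
lemma hasFDerivAt_segAvg {d : ℕ} (k : ℕ) {g : EuclideanSpace ℝ (Fin d) → ℝ}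
    (hg : ContDiff ℝ 1 g) (y x : EuclideanSpace ℝ (Fin d)) :
    HasFDerivAt (segAvg k g y)
      (∫ s in (0:ℝ)..1, s ^ (k + 1) • fderiv ℝ g (y + s • (x - y))) x := by
  have hg0 : Continuous g := hg.continuous
  have hg1 : Continuous (fderiv ℝ g) := hg.continuous_fderiv one_ne_zero
  have hcont : Continuous (fun p : EuclideanSpace ℝ (Fin d) × ℝ =>
      p.2 ^ (k + 1) • fderiv ℝ g (y + p.2 • (p.1 - y))) := by fun_prop
  obtain ⟨C, hC⟩ := ((isCompact_closedBall x 1).prod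
    (isCompact_uIcc (a := (0:ℝ)) (b := 1))).exists_bound_of_continuousOn hcont.continuousOn
  refine intervalIntegral.hasFDerivAt_integral_of_dominated_of_fderiv_le
    (F := fun x s => s ^ k * g (y + s • (x - y)))
    (F' := fun x s => s ^ (k + 1) • fderiv ℝ g (y + s • (x - y)))
    (bound := fun _ => C) (Metric.closedBall_mem_nhds x one_pos) ?_ ?_ ?_ ?_ ?_ ?_
  · refine Filter.Eventually.of_forall fun z => Continuous.aestronglyMeasurable ?_
    fun_prop
  · refine Continuous.intervalIntegrable ?_ _ _
    fun_prop
  · refine Continuous.aestronglyMeasurable ?_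
    fun_prop
  · exact Filter.Eventually.of_forall fun s hs z hz =>
      hC (z, s) ⟨hz, Set.uIoc_subset_uIcc hs⟩
  · exact intervalIntegrable_const
  · refine Filter.Eventually.of_forall fun s _ z _ => ?_
    have hin : HasFDerivAt (fun z : EuclideanSpace ℝ (Fin d) => y + s • (z - y))
        (s • ContinuousLinearMap.id ℝ (EuclideanSpace ℝ (Fin d))) z :=
      (((hasFDerivAt_id z).sub_const y).const_smul s).const_add y
    have hout := (hg.differentiable one_ne_zero (y + s • (z - y))).hasFDerivAt
    have hF := (HasFDerivAt.comp z hout hin).const_mul (s ^ k)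
    have hlin : s ^ (k + 1) • fderiv ℝ g (y + s • (z - y)) =
        s ^ k • (fderiv ℝ g (y + s • (z - y))).comp
          (s • ContinuousLinearMap.id ℝ (EuclideanSpace ℝ (Fin d))) := by
      ext v
      simp [pow_succ, mul_assoc]
    rw [hlin]
    exact hF

lemma pdR_segAvg {d : ℕ} (k : ℕ) {g : EuclideanSpace ℝ (Fin d) → ℝ}
    (hg : ContDiff ℝ 1 g) (y : EuclideanSpace ℝ (Fin d)) (μ : Fin d) :
    pdR μ (segAvg k g y) = segAvg (k + 1) (pdR μ g) y := by
  have hg1 : Continuous (fderiv ℝ g) := hg.continuous_fderiv one_ne_zero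
  funext x
  rw [pdR, (hasFDerivAt_segAvg k hg y x).fderiv, segAvg,
    ContinuousLinearMap.intervalIntegral_apply]
  · simp [pdR]
  · refine Continuous.intervalIntegrable ?_ _ _
    fun_prop

lemma opS_one {d : ℕ} (c : Fin d → EuclideanSpace ℝ (Fin d) → ℝ)
    (b : EuclideanSpace ℝ (Fin d) → ℝ) : opS c b (fun _ => 1) = b := by
  funext x
  have h : ∀ (μ : Fin d) (r : ℝ),
      pdR μ (fun _ : EuclideanSpace ℝ (Fin d) => r) = fun _ => 0 := by
    intro μ r
    funext z
    simp [pdR]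
  simp [opS, h]

lemma scoef_one {d : ℕ} (c : Fin d → EuclideanSpace ℝ (Fin d) → ℝ)
    (b : EuclideanSpace ℝ (Fin d) → ℝ) (y : EuclideanSpace ℝ (Fin d)) :
    (fun x => scoef c b 1 x y) = segAvg 0 b y := by
  funext x
  simp only [scoef, segAvg, opS_one]

theorem first_two_diagonal_coefficients_scalar
    (d : ℕ) (hd : 0 < d)
    (c : Fin d → EuclideanSpace ℝ (Fin d) → ℝ)
    (hc : ∀ μ, ContDiff ℝ (⊤ : ℕ∞) (c μ))
    (b : EuclideanSpace ℝ (Fin d) → ℝ)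
    (hb : ContDiff ℝ (⊤ : ℕ∞) b) :
    ∀ x,
      scoef c b 1 x x = b x ∧
      scoef c b 2 x x =
        (1/2 : ℝ) * (b x)^2 + (1/4 : ℝ) * ∑ μ, c μ x * pdR μ b x
          + (1/6 : ℝ) * ∑ μ, pdR μ (pdR μ b) x := by
  intro x
  have hb1 : ContDiff ℝ 1 b := hb.of_le (by exact_mod_cast le_top)
  have hdb : ∀ μ, ContDiff ℝ 1 (pdR μ b) := fun μ =>
    (hb.fderiv_right (m := 1) (by norm_cast)).clm_apply contDiff_const
  have h2 : scoef c b 2 x x = segAvg 1 (opS c b (segAvg 0 b x)) x x := by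
    rw [← scoef_one c b x]
    rfl
  refine ⟨(congrFun (scoef_one c b x) x).trans (by simp [segAvg_self]), ?_⟩
  rw [h2, segAvg_self, opS]
  simp only [pdR_segAvg _ hb1, pdR_segAvg _ (hdb _), segAvg_self, mul_div_assoc',
    ← Finset.sum_div]
  push_cast
  ring
end
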